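/- (Hadamard quotient theorem.) Let (a_n) and (b_n) be sequences of complex numbers such that the formal power series Σ_{n≥0} a_n x^n and Σ_{n≥0} b_n x^n each represent rational functions. Suppose that b_n ≠ 0 for all n ≥ 0 and that for every n the quotient a_n / b_n is a (rational) integer. Then the formal power series Σ_{n≥0} (a_n / b_n) x^n also represents a rational function; equivalently, the integer sequence (a_n / b_n) is a linear recurrence sequence. -/

import Mathlib

/-- A formal power series `∑ sₙ xⁿ` over `ℂ` represents a rational function if there
are polynomials `P, Q` with `Q` of nonzero constant term such that
`Q(x) · ∑ sₙ xⁿ = P(x)` as formal power series. -/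
def RepresentsRational (s : ℕ → ℂ) : Prop :=
  ∃ P Q : Polynomial ℂ, Q.coeff 0 ≠ 0 ∧
    (Q : PowerSeries ℂ) * PowerSeries.mk s = (P : PowerSeries ℂ)

/-!
Reducing a finitely generated ring of definition modulo powers of a maximal ideal replaces `a`, `b`
by recurrences over `ℚ` with the same quotient `c`. Over a number field, and on a suitable
arithmetic progression, these become `n ↦ A(n, γ₁ⁿ, …, γᵣⁿ)` and `n ↦ B(n, γ₁ⁿ, …, γᵣⁿ)` with
`γ₁, …, γᵣ` multiplicatively independent, and `A` and `B` may be taken coprime.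

An embedding of the number field into `ℚ_[p]` makes `c` a quotient of `p`-adic analytic functions on
each residue class modulo `p - 1`. By Weierstrass preparation its denominator is essentially a
polynomial, and multiplying `c` by suitable integer-valued polynomials makes its higher differences
divisible by large powers of `p`. The primes having such an embedding satisfy `∑ 1 / p = ∞`, so that
a pigeonhole argument over sufficiently many of them gives, for a fixed order, recurrences for `c`
with polynomial coefficients that hold on arbitrarily long initial segments, and hence as identities
between `A`, `B` and their translates. Looking at the prime factors of `B`, such an identity forces
`B` to be a monomial times a polynomial in `n` alone. This polynomial is cancelled one root at a
time: modulo infinitely many primes the numerator vanishes wherever the root does.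
-/

namespace HadamardQuotient

open Polynomial Filter

/-! ### Linear recurrences -/

section Recurrence

/-- The operator `s ↦ (n ↦ s (n + 1))` on sequences; a linear recurrence with characteristic
polynomial `g` is the equation `aeval (shift R M) g s = 0`. -/
def shift (R M : Type*) [CommRing R] [AddCommGroup M] [Module R M] : Module.End R (ℕ → M) :=
  LinearMap.funLeft R M Nat.succ

section Module

variable {R M : Type*} [CommRing R] [AddCommGroup M] [Module R M]

lemma shift_apply (s : ℕ → M) (n : ℕ) : shift R M s n = s (n + 1) := rfl

lemma shift_pow_apply (i : ℕ) (s : ℕ → M) (n : ℕ) : (shift R M ^ i) s n = s (n + i) := by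
  induction i generalizing n with
  | zero => rfl
  | succ i ih => rw [pow_succ', Module.End.mul_apply, shift_apply, ih, add_right_comm, add_assoc]

lemma aeval_shift_apply (g : R[X]) (s : ℕ → M) (n : ℕ) :
    aeval (shift R M) g s n = ∑ i ∈ Finset.range (g.natDegree + 1), g.coeff i • s (n + i) := by
  simp [aeval_eq_sum_range, LinearMap.sum_apply, Finset.sum_apply, shift_pow_apply]

lemma aeval_shift_apply_of_natDegree_le {g : R[X]} {N : ℕ} (hN : g.natDegree ≤ N) (s : ℕ → M)
    (n : ℕ) : aeval (shift R M) g s n = ∑ i ∈ Finset.range (N + 1), g.coeff i • s (n + i) := by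
  simp [aeval_eq_sum_range' (Nat.lt_succ_of_le hN), LinearMap.sum_apply, Finset.sum_apply,
    shift_pow_apply]

lemma aeval_shift_comp_add (g : R[X]) (s : ℕ → M) (m n : ℕ) :
    aeval (shift R M) g (fun k ↦ s (k + m)) n = aeval (shift R M) g s (n + m) := by
  simp only [aeval_shift_apply, add_right_comm]

lemma aeval_shift_map {S : Type*} [CommRing S] [Algebra R S] (g : R[X]) (s : ℕ → S) (n : ℕ) :
    aeval (shift S S) (g.map (algebraMap R S)) s n = aeval (shift R S) g s n := by
  rw [aeval_shift_apply_of_natDegree_le natDegree_map_le, aeval_shift_apply]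
  simp [Algebra.smul_def]

lemma aeval_shift_comp {N : Type*} [AddCommGroup N] [Module R N] (ℓ : M →ₗ[R] N) (g : R[X])
    (s : ℕ → M) (n : ℕ) :
    aeval (shift R N) g (fun k ↦ ℓ (s k)) n = ℓ (aeval (shift R M) g s n) := by
  simp [aeval_shift_apply]

lemma aeval_shift_expand (D : ℕ) (g : R[X]) (s : ℕ → M) (u v : ℕ) :
    aeval (shift R M) (expand R D g) s (u + D * v)
      = aeval (shift R M) g (fun k ↦ s (u + D * k)) v := by
  rw [expand_aeval]
  simp only [aeval_eq_sum_range, LinearMap.sum_apply, Finset.sum_apply, LinearMap.smul_apply,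
    Pi.smul_apply, ← pow_mul, shift_pow_apply, add_assoc, mul_add]

lemma eventually_comp_add_iff {p : ℕ → Prop} (m : ℕ) :
    (∀ᶠ n in atTop, p (n + m)) ↔ ∀ᶠ n in atTop, p n := by
  conv_rhs => rw [← map_add_atTop_eq_nat m, eventually_map]

lemma eventually_aeval_shift_eq_zero_of_dvd {g h : R[X]} (hgh : g ∣ h) {s : ℕ → M}
    (hs : ∀ᶠ n in atTop, aeval (shift R M) g s n = 0) :
    ∀ᶠ n in atTop, aeval (shift R M) h s n = 0 := by
  obtain ⟨k, rfl⟩ := hgh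
  filter_upwards [eventually_forall_ge_atTop.2 hs] with n hn
  rw [mul_comm, map_mul, Module.End.mul_apply, aeval_shift_apply]
  exact Finset.sum_eq_zero fun i _ ↦ by rw [hn _ (n.le_add_right i), smul_zero]

lemma apply_add_natDegree_of_aeval_shift_eq_zero {g : R[X]} (hg : g.Monic) {s : ℕ → M}
    (hs : aeval (shift R M) g s = 0) (n : ℕ) :
    s (n + g.natDegree) = -∑ i ∈ Finset.range g.natDegree, g.coeff i • s (n + i) := by
  have hn := congrFun hs n
  rw [aeval_shift_apply, Finset.sum_range_succ, hg.coeff_natDegree, one_smul] at hn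
  exact eq_neg_of_add_eq_zero_right hn

lemma forall_mem_of_aeval_shift_eq_zero {g : R[X]} (hg : g.Monic) {s : ℕ → M}
    (hs : aeval (shift R M) g s = 0) (N : Submodule R M) (h : ∀ n < g.natDegree, s n ∈ N) (n : ℕ) :
    s n ∈ N := by
  induction n using Nat.strong_induction_on with
  | _ n ih =>
    rcases lt_or_ge n g.natDegree with hn | hn
    · exact h n hn
    obtain ⟨k, rfl⟩ := Nat.exists_eq_add_of_le' hn
    rw [apply_add_natDegree_of_aeval_shift_eq_zero hg hs]
    exact neg_mem <| sum_mem fun i hi ↦ N.smul_mem _ <| ih _ <| by grind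

end Module

section Field

variable {F : Type*} [Field F]

/-- Linear recurrence sequences: some nonzero polynomial in the shift eventually kills `s`.
Finitely many initial terms are unconstrained, as in the definition by a rational generating
function. -/
def IsRecurrent (s : ℕ → F) : Prop :=
  ∃ g : F[X], g ≠ 0 ∧ ∀ᶠ n in atTop, aeval (shift F F) g s n = 0

lemma isRecurrent_of_eventually_eq_zero {s : ℕ → F} (hs : ∀ᶠ n in atTop, s n = 0) :
    IsRecurrent s :=
  ⟨1, one_ne_zero, by simpa using hs⟩

lemma IsRecurrent.add {s t : ℕ → F} (hs : IsRecurrent s) (ht : IsRecurrent t) :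
    IsRecurrent (s + t) := by
  obtain ⟨g, hg, hs⟩ := hs
  obtain ⟨h, hh, ht⟩ := ht
  refine ⟨g * h, mul_ne_zero hg hh, ?_⟩
  filter_upwards [eventually_aeval_shift_eq_zero_of_dvd (dvd_mul_right g h) hs,
    eventually_aeval_shift_eq_zero_of_dvd (dvd_mul_left h g) ht] with n hsn htn
  rw [map_add, Pi.add_apply, hsn, htn, add_zero]

lemma IsRecurrent.congr {s t : ℕ → F} (hs : IsRecurrent s) (h : s =ᶠ[atTop] t) :
    IsRecurrent t := by
  have hts : IsRecurrent (t - s) := isRecurrent_of_eventually_eq_zero <|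
    h.mono fun n hn ↦ by rw [Pi.sub_apply, hn, sub_self]
  simpa using hs.add hts

lemma IsRecurrent.sum {ι : Type*} {t : Finset ι} {f : ι → ℕ → F}
    (h : ∀ i ∈ t, IsRecurrent (f i)) : IsRecurrent (∑ i ∈ t, f i) :=
  Finset.sum_induction _ _ (fun _ _ ↦ IsRecurrent.add)
    (isRecurrent_of_eventually_eq_zero (.of_forall fun _ ↦ rfl)) h

lemma IsRecurrent.of_comp_add {s : ℕ → F} {m : ℕ} (h : IsRecurrent fun n ↦ s (n + m)) :
    IsRecurrent s := by
  obtain ⟨g, hg, h⟩ := h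
  simp only [aeval_shift_comp_add] at h
  exact ⟨g, hg, (eventually_comp_add_iff m).1 h⟩

lemma IsRecurrent.of_residue_classes {D : ℕ} (hD : 0 < D) {s : ℕ → F}
    (h : ∀ u < D, IsRecurrent (fun v ↦ s (u + D * v))) : IsRecurrent s := by
  choose! g hg hs using h
  set G := ∏ u ∈ Finset.range D, g u
  have hG : G ≠ 0 := Finset.prod_ne_zero_iff.2 fun u hu ↦ hg u (Finset.mem_range.1 hu)
  have hGs : ∀ u : Fin D, ∀ᶠ v in atTop, aeval (shift F F) (expand F D G) s (u + D * v) = 0 := by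
    intro u
    simp_rw [aeval_shift_expand]
    exact eventually_aeval_shift_eq_zero_of_dvd
      (Finset.dvd_prod_of_mem g (Finset.mem_range.2 u.2)) (hs u u.2)
  refine ⟨expand F D G, (expand_ne_zero hD).2 hG, ?_⟩
  filter_upwards [(Nat.tendsto_div_const_atTop hD.ne').eventually (eventually_all.2 hGs)] with n hn
  simpa only [Nat.mod_add_div] using hn ⟨n % D, Nat.mod_lt _ hD⟩

lemma exists_monic_dvd_X_pow_mul {g : F[X]} (hg : g ≠ 0) :
    ∃ (k : ℕ) (χ : F[X]), χ.Monic ∧ χ.coeff 0 ≠ 0 ∧ g ∣ X ^ k * χ := by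
  obtain ⟨q, hgq, hq⟩ := exists_eq_pow_rootMultiplicity_mul_and_not_dvd g hg 0
  rw [C_0, sub_zero] at hgq hq
  have hq0 : q ≠ 0 := by rintro rfl; exact hq (dvd_zero X)
  refine ⟨rootMultiplicity 0 g, q * C q.leadingCoeff⁻¹, monic_mul_leadingCoeff_inv hq0, ?_, ?_⟩
  · rw [coeff_mul_C]
    exact mul_ne_zero (mt X_dvd_iff.2 hq) (inv_ne_zero (leadingCoeff_ne_zero.2 hq0))
  · rw [← mul_assoc, ← hgq]
    exact dvd_mul_right g _

lemma IsRecurrent.exists_monic {s : ℕ → F} (hs : IsRecurrent s) :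
    ∃ χ : F[X], χ.Monic ∧ χ.coeff 0 ≠ 0 ∧ ∀ᶠ n in atTop, aeval (shift F F) χ s n = 0 := by
  obtain ⟨g, hg, hs⟩ := hs
  obtain ⟨k, χ, hχ, hχ0, hdvd⟩ := exists_monic_dvd_X_pow_mul hg
  refine ⟨χ, hχ, hχ0, (eventually_comp_add_iff k).1 ?_⟩
  simpa only [map_mul, map_pow, aeval_X, Module.End.mul_apply, shift_pow_apply] using
    eventually_aeval_shift_eq_zero_of_dvd hdvd hs

lemma IsRecurrent.map_algebraMap {E : Type*} [Field E] [Algebra F E] {s : ℕ → F}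
    (hs : IsRecurrent s) : IsRecurrent fun n ↦ algebraMap F E (s n) := by
  obtain ⟨g, hg, hs⟩ := hs
  refine ⟨g.map (algebraMap F E), by simpa using hg, hs.mono fun n hn ↦ ?_⟩
  rw [aeval_shift_map, ← Algebra.coe_linearMap, aeval_shift_comp, hn, map_zero]

/-- An `F`-linear functional on `E` that does not kill all coefficients of a recurrence over `E`
turns it into a recurrence over `F`. -/
lemma IsRecurrent.of_algebraMap {E : Type*} [Field E] [Algebra F E] {s : ℕ → F}
    (hs : IsRecurrent fun n ↦ algebraMap F E (s n)) : IsRecurrent s := by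
  obtain ⟨g, hg, hs⟩ := hs
  obtain ⟨ℓ, hℓ⟩ : ∃ ℓ : Module.Dual F E, ℓ g.leadingCoeff ≠ 0 := by
    by_contra! h
    exact hg (leadingCoeff_eq_zero.1 ((Module.forall_dual_apply_eq_zero_iff F _).1 h))
  let g' : F[X] := ∑ i ∈ Finset.range (g.natDegree + 1), monomial i (ℓ (g.coeff i))
  have hcoeff (i) (hi : i ≤ g.natDegree) : g'.coeff i = ℓ (g.coeff i) := by
    simp [g', coeff_monomial, Nat.lt_succ_of_le hi]
  have hdeg : g'.natDegree ≤ g.natDegree :=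
    natDegree_sum_le_of_forall_le _ _ fun i hi ↦
      (natDegree_monomial_le _).trans (Nat.lt_succ_iff.1 (Finset.mem_range.1 hi))
  refine ⟨g', fun h ↦ hℓ ?_, hs.mono fun n hn ↦ ?_⟩
  · rw [leadingCoeff, ← hcoeff _ le_rfl, h, coeff_zero]
  · rw [← map_zero ℓ, ← hn, aeval_shift_apply_of_natDegree_le hdeg, aeval_shift_apply, map_sum]
    refine Finset.sum_congr rfl fun i hi ↦ ?_
    rw [hcoeff i (Nat.lt_succ_iff.1 (Finset.mem_range.1 hi)), smul_eq_mul, smul_eq_mul, mul_comm,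
      mul_comm (g.coeff i), ← Algebra.smul_def, map_smul, smul_eq_mul]

lemma IsRecurrent.intCast {E : Type*} [Field E] [CharZero E] [CharZero F] {c : ℕ → ℤ}
    (hc : IsRecurrent fun n ↦ (c n : E)) : IsRecurrent fun n ↦ (c n : F) := by
  have hℚ : IsRecurrent fun n ↦ (c n : ℚ) := .of_algebraMap (E := E) (by simpa using hc)
  simpa using hℚ.map_algebraMap (E := F)

end Field

section GeneratingFunction

lemma coeff_reflect_mul_mk {R : Type*} [CommRing R] {g : R[X]} {N : ℕ} (hN : g.natDegree ≤ N)
    (s : ℕ → R) (n : ℕ) :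
    PowerSeries.coeff (n + N) ((g.reflect N : R[X]) * PowerSeries.mk s : PowerSeries R)
      = aeval (shift R R) g s n := by
  rw [aeval_shift_apply_of_natDegree_le hN, PowerSeries.coeff_mul,
    Finset.Nat.sum_antidiagonal_eq_sum_range_succ_mk,
    ← Finset.sum_range_reflect (fun i ↦ g.coeff i • s (n + i)),
    ← Finset.sum_subset (Finset.range_subset_range.2 (by omega : N + 1 ≤ (n + N).succ))]
  · refine Finset.sum_congr rfl fun i hi ↦ ?_
    rw [Finset.mem_range] at hi
    rw [coeff_coe, coeff_reflect, revAt_le (by omega), PowerSeries.coeff_mk, smul_eq_mul]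
    congr 2
    omega
  · intro i _ hi
    rw [Finset.mem_range, not_lt] at hi
    rw [coeff_coe, coeff_reflect, revAt_eq_self_of_lt (by omega),
      coeff_eq_zero_of_natDegree_lt (by omega), zero_mul]

lemma IsRecurrent.representsRational {s : ℕ → ℂ} (hs : IsRecurrent s) :
    RepresentsRational s := by
  obtain ⟨g, hg, hs⟩ := hs
  obtain ⟨n₀, hs⟩ := eventually_atTop.1 hs
  refine ⟨PowerSeries.trunc (n₀ + g.natDegree) (g.reverse * PowerSeries.mk s), g.reverse, ?_, ?_⟩
  · rw [coeff_zero_reverse]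
    exact leadingCoeff_ne_zero.2 hg
  · ext n
    rw [coeff_coe, PowerSeries.coeff_trunc]
    split_ifs with h
    · rfl
    · obtain ⟨m, rfl⟩ := Nat.exists_eq_add_of_le (not_lt.1 h)
      rw [add_right_comm, reverse, coeff_reflect_mul_mk le_rfl, hs _ (Nat.le_add_right _ _)]

lemma _root_.RepresentsRational.isRecurrent {s : ℕ → ℂ} (hs : RepresentsRational s) :
    IsRecurrent s := by
  obtain ⟨P, Q, hQ, h⟩ := hs
  have hQ0 : Q ≠ 0 := by rintro rfl; simp at hQ
  refine ⟨Q.reverse, by rwa [Ne, reverse_eq_zero],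
    eventually_atTop.2 ⟨P.natDegree + 1, fun n hn ↦ ?_⟩⟩
  rw [← coeff_reflect_mul_mk Q.reverse_natDegree_le, reverse, reflect_reflect, h, coeff_coe]
  exact coeff_eq_zero_of_natDegree_lt (by omega)

end GeneratingFunction

end Recurrence

/-! ### Exponential polynomials -/

section BinomialBasis

/-- The value at `n` of the polynomial with coordinates `q` in the basis of binomial coefficients,
for `q` in an arbitrary ring. -/
def binomEval {R : Type*} [CommRing R] {s : ℕ} (q : Fin s → R) (n : ℕ) : R :=
  ∑ l, q l * (n.choose l : R)

variable {F : Type*} [Field F] {s : ℕ}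

/-- The polynomial with coordinates `q` in the basis of binomial coefficients. -/
noncomputable def binomPoly (q : Fin s → F) : F[X] :=
  ∑ l : Fin s, C (q l / ((l : ℕ).factorial : F)) * descPochhammer F l

lemma eval_binomPoly [CharZero F] (q : Fin s → F) (n : ℕ) :
    (binomPoly q).eval (n : F) = binomEval q n := by
  simp only [binomPoly, binomEval, eval_finsetSum, eval_mul, eval_C,
    Nat.cast_choose_eq_descPochhammer_div, div_mul_eq_mul_div, mul_div_assoc]

lemma degree_binomPoly_lt (q : Fin s → F) : (binomPoly q).degree < s := by
  refine (degree_sum_le _ _).trans_lt ((Finset.sup_lt_iff (WithBot.bot_lt_coe s)).2 fun l _ ↦ ?_)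
  refine degree_le_natDegree.trans_lt (Nat.cast_lt.2 ((natDegree_C_mul_le _ _).trans_lt ?_))
  rw [descPochhammer_natDegree]
  exact l.2

lemma binomPoly_ne_zero [CharZero F] {q : Fin s → F} (hq : q ≠ 0) : binomPoly q ≠ 0 := by
  intro h0
  have hv (n : ℕ) : binomEval q n = 0 := by rw [← eval_binomPoly, h0, eval_zero]
  have hz (n : ℕ) (hn : n < s) : q ⟨n, hn⟩ = 0 := by
    induction n using Nat.strong_induction_on with
    | _ n ih =>
      have hn' := hv n
      rw [binomEval, Finset.sum_eq_single ⟨n, hn⟩ _ (by simp)] at hn'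
      · simpa using hn'
      intro l _ hl
      rcases lt_or_gt_of_ne (fun h ↦ hl (Fin.ext h) : (l : ℕ) ≠ n) with h | h
      · rw [ih l h l.2, zero_mul]
      · rw [Nat.choose_eq_zero_of_lt h, Nat.cast_zero, mul_zero]
  exact hq (funext fun l ↦ hz l l.2)

lemma eq_binomEval_of_fwdDiff_iter_eq_zero {h : ℕ → F} {m : ℕ} (hm : (fwdDiff 1)^[m] h = 0)
    (n : ℕ) : h n = binomEval (fun k : Fin m ↦ (fwdDiff 1)^[k] h 0) n := by
  have hvanish (k : ℕ) (hk : m ≤ k) : (fwdDiff 1)^[k] h = 0 := by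
    obtain ⟨j, rfl⟩ := Nat.exists_eq_add_of_le' hk
    rw [Function.iterate_add_apply, hm, Function.iterate_fixed]
    ext
    simp [fwdDiff]
  have newton := shift_eq_sum_fwdDiff_iter (1 : ℕ) h n 0
  rw [smul_eq_mul, mul_one, zero_add] at newton
  rw [newton, binomEval,
    Fin.sum_univ_eq_sum_range fun k ↦ (fwdDiff 1)^[k] h 0 * (n.choose k : F)]
  refine Finset.sum_congr_of_eq_on_inter (fun k _ hk ↦ ?_) (fun k _ hk ↦ ?_)
    fun k _ _ ↦ by rw [nsmul_eq_mul, mul_comm]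
  · rw [hvanish k (by simpa using hk), Pi.zero_apply, smul_zero]
  · rw [Nat.choose_eq_zero_of_lt (by simpa using hk), Nat.cast_zero, mul_zero]

end BinomialBasis

section ExponentialPolynomial

variable {F : Type*} [Field F]

lemma aeval_shift_X_sub_C_pow (β : F) (h : ℕ → F) (k n : ℕ) :
    aeval (shift F F) ((X - C β) ^ k) (fun n ↦ h n * β ^ n) n
      = β ^ (n + k) * (fwdDiff 1)^[k] h n := by
  induction k generalizing n with
  | zero => simp [mul_comm]
  | succ k ih =>
    rw [pow_succ', map_mul, Module.End.mul_apply, Function.iterate_succ_apply']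
    simp only [map_sub, aeval_X, aeval_C, LinearMap.sub_apply, Pi.sub_apply, shift_apply,
      Module.algebraMap_end_apply, Pi.smul_apply, smul_eq_mul, fwdDiff, ih]
    ring

lemma aeval_shift_eval_mul_pow_eq_zero {P : F[X]} {m : ℕ} (hP : P.degree < m) (β : F) :
    aeval (shift F F) ((X - C β) ^ m) (fun n ↦ P.eval (n : F) * β ^ n) = 0 := by
  rcases eq_or_ne P 0 with rfl | hP0
  · simp only [eval_zero, zero_mul]
    exact map_zero _
  have hΔ := fwdDiff_iter_eq_zero_of_degree_lt ((natDegree_lt_iff_degree_lt hP0).2 hP)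
  ext n
  have hn := congrFun hΔ (n : F)
  rw [fwdDiff_iter_eq_sum_shift] at hn
  rw [aeval_shift_X_sub_C_pow, fwdDiff_iter_eq_sum_shift]
  exact mul_eq_zero_of_right _ (by simpa using hn)

lemma isRecurrent_eval_mul_pow (P : F[X]) (β : F) :
    IsRecurrent fun n ↦ P.eval (n : F) * β ^ n := by
  have hP : P.degree < (P.natDegree + 1 : ℕ) :=
    degree_le_natDegree.trans_lt (Nat.cast_lt.2 P.natDegree.lt_succ_self)
  exact ⟨_, ((monic_X_sub_C β).pow _).ne_zero,
    .of_forall fun n ↦ congrFun (aeval_shift_eval_mul_pow_eq_zero hP β) n⟩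

lemma exists_eval_mul_pow_of_aeval_shift [CharZero F] {β : F} (hβ : β ≠ 0) {m : ℕ} {f : ℕ → F}
    (hf : aeval (shift F F) ((X - C β) ^ m) f = 0) :
    ∃ P : F[X], ∀ n : ℕ, f n = P.eval (n : F) * β ^ n := by
  have hf' : f = fun n ↦ f n / β ^ n * β ^ n :=
    funext fun n ↦ (div_mul_cancel₀ _ (pow_ne_zero n hβ)).symm
  have hΔ : (fwdDiff 1)^[m] (fun n ↦ f n / β ^ n) = 0 := by
    ext n
    have hn := congrFun hf n
    rw [hf', aeval_shift_X_sub_C_pow, Pi.zero_apply] at hn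
    exact (mul_eq_zero.1 hn).resolve_left (pow_ne_zero _ hβ)
  refine ⟨binomPoly fun k : Fin m ↦ (fwdDiff 1)^[k] (fun n ↦ f n / β ^ n) 0, fun n ↦ ?_⟩
  rw [eval_binomPoly, ← eq_binomEval_of_fwdDiff_iter_eq_zero hΔ,
    div_mul_cancel₀ _ (pow_ne_zero n hβ)]

lemma exists_sum_eval_mul_pow_of_aeval_shift [CharZero F] {s : Finset F} (hs : (0 : F) ∉ s)
    {m : ℕ} {f : ℕ → F} (hf : aeval (shift F F) (∏ β ∈ s, (X - C β) ^ m) f = 0) :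
    ∃ P : F → F[X], ∀ n : ℕ, f n = ∑ β ∈ s, (P β).eval (n : F) * β ^ n := by
  classical
  induction s using Finset.induction_on generalizing f with
  | empty => exact ⟨0, fun n ↦ by simpa using congrFun hf n⟩
  | insert β s hβ ih =>
    have hcop : IsCoprime ((X - C β) ^ m) (∏ γ ∈ s, (X - C γ) ^ m) :=
      .prod_right fun γ hγ ↦ .pow <| isCoprime_X_sub_C_of_isUnit_sub
        (sub_ne_zero.2 (by rintro rfl; exact hβ hγ)).isUnit
    rw [Finset.prod_insert hβ, ← LinearMap.mem_ker,
      ← sup_ker_aeval_eq_ker_aeval_mul_of_coprime _ hcop] at hf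
    obtain ⟨f₁, h₁, f₂, h₂, rfl⟩ := Submodule.mem_sup.1 hf
    obtain ⟨P₁, hP₁⟩ := exists_eval_mul_pow_of_aeval_shift
      (fun h ↦ hs (by simp [h])) (LinearMap.mem_ker.1 h₁)
    obtain ⟨P₂, hP₂⟩ := ih (fun h ↦ hs (by simp [h])) (LinearMap.mem_ker.1 h₂)
    refine ⟨Function.update P₂ β P₁, fun n ↦ ?_⟩
    rw [Finset.sum_insert hβ, Function.update_self, Pi.add_apply, hP₁, hP₂]
    congr 1
    exact Finset.sum_congr rfl fun γ hγ ↦ by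
      rw [Function.update_of_ne (by rintro rfl; exact hβ hγ)]

/-- The sum satisfies a recurrence of order `s.card * m`, so it vanishes identically; its terms
vanish because generalized eigenspaces of the shift are independent. -/
lemma eq_zero_of_sum_eval_mul_pow_eq_zero [CharZero F] {ι : Type*} {s : Finset ι} {β : ι → F}
    (hβ : ∀ i ∈ s, β i ≠ 0) (hinj : Set.InjOn β s) {m : ℕ} {P : ι → F[X]}
    (hP : ∀ i ∈ s, (P i).degree < m)
    (h : ∀ j < s.card * m, ∑ i ∈ s, (P i).eval (j : F) * β i ^ j = 0) :
    ∀ i ∈ s, P i = 0 := by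
  classical
  let u (i : ι) (n : ℕ) : F := (P i).eval (n : F) * β i ^ n
  have hker (i) (hi : i ∈ s) : aeval (shift F F) ((X - C (β i)) ^ m) (u i) = 0 :=
    aeval_shift_eval_mul_pow_eq_zero (hP i hi) (β i)
  have hrec : aeval (shift F F) (∏ i ∈ s, (X - C (β i)) ^ m) (∑ i ∈ s, u i) = 0 := by
    rw [map_sum]
    refine Finset.sum_eq_zero fun i hi ↦ ?_
    rw [← Finset.mul_prod_erase s _ hi, mul_comm, map_mul, Module.End.mul_apply, hker i hi,
      map_zero]
  have hmonic : (∏ i ∈ s, (X - C (β i)) ^ m).Monic :=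
    monic_prod_of_monic _ _ fun i _ ↦ (monic_X_sub_C _).pow m
  have hdeg : (∏ i ∈ s, (X - C (β i)) ^ m).natDegree = s.card * m := by
    rw [natDegree_prod_of_monic _ _ fun i _ ↦ (monic_X_sub_C _).pow m]
    simp
  have hsum : ∑ i ∈ s, u i = 0 := by
    ext n
    refine forall_mem_of_aeval_shift_eq_zero hmonic hrec ⊥ (fun j hj ↦ ?_) n
    rw [Submodule.mem_bot, Finset.sum_apply]
    exact h j (hdeg ▸ hj)
  have hindep : iSupIndep fun i : s ↦ (shift F F).genEigenspace (β i) m :=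
    (Module.End.independent_genEigenspace (shift F F) m).comp
      (f := fun i : s ↦ β i) fun i j hij ↦ Subtype.ext (hinj i.2 j.2 hij)
  intro i hi
  have hui : u i = 0 := (iSupIndep_iff_finsetSum_eq_zero_imp_eq_zero _).1 hindep Finset.univ
    (fun i ↦ u i)
    (fun i _ ↦ by
      rw [Module.End.mem_genEigenspace_nat, LinearMap.mem_ker, ← hker i i.2]
      simp [Algebra.algebraMap_eq_smul_one])
    (by rw [Finset.univ_eq_attach, Finset.sum_attach s u, hsum]) ⟨i, hi⟩ (Finset.mem_univ _)
  refine eq_of_infinite_eval_eq _ _ ((Set.infinite_range_of_injective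
    (Nat.cast_injective (R := F))).mono ?_)
  rintro _ ⟨n, rfl⟩
  rw [Set.mem_ofPred_eq, eval_zero]
  exact (mul_eq_zero.1 (congrFun hui n)).resolve_right (pow_ne_zero n (hβ i hi))

end ExponentialPolynomial

/-! ### Specialization of recurrences to the rational numbers -/

section Specialization

lemma exists_monic_coeff_zero_ne_zero_dvd_map {K L : Type*} [Field K] [Field L] [Algebra K L]
    [Algebra.IsAlgebraic K L] {f : L[X]} (hf0 : f.coeff 0 ≠ 0) :
    ∃ g : K[X], g.Monic ∧ g.coeff 0 ≠ 0 ∧ f ∣ g.map (algebraMap K L) := by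
  have hf : f ≠ 0 := by rintro rfl; simp at hf0
  obtain ⟨g, hg, hfg⟩ := exists_dvd_map_of_isAlgebraic (R := K) hf
  obtain ⟨k, χ, hχ, hχ0, hgχ⟩ := exists_monic_dvd_X_pow_mul hg
  refine ⟨χ, hχ, hχ0, ?_⟩
  have hdvd := hfg.trans (map_dvd (algebraMap K L) hgχ)
  rw [Polynomial.map_mul, Polynomial.map_pow, map_X] at hdvd
  refine (IsCoprime.pow_right ?_).dvd_of_dvd_mul_left hdvd
  exact ((irreducible_X.coprime_iff_not_dvd).2 fun h ↦ hf0 (X_dvd_iff.1 h)).symm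

lemma aeval_shift_mem {R : Type*} [CommRing R] {I : Ideal R} {w : R[X]} (hw : w ∈ I.map C)
    (s : ℕ → R) (n : ℕ) : aeval (shift R R) w s n ∈ I := by
  rw [aeval_shift_apply]
  exact sum_mem fun i _ ↦ I.mul_mem_right _ (Ideal.mem_map_C_iff.1 hw i)

/-- Modulo `χ`, the polynomial `χ₀ ^ t` is the `t`-th power of `χ₀ - h χ`. -/
lemma aeval_shift_pow_mem {k R : Type*} [CommRing k] [CommRing R] [Algebra k R] {I : Ideal R}
    {χ h : R[X]} {χ₀ : k[X]} (hw : χ₀.map (algebraMap k R) - h * χ ∈ I.map C) {s : ℕ → R}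
    (hs : aeval (shift R R) χ s = 0) (t n : ℕ) : aeval (shift k R) (χ₀ ^ t) s n ∈ I ^ t := by
  set χ₁ := χ₀.map (algebraMap k R)
  obtain ⟨q, hq⟩ : χ ∣ χ₁ ^ t - (χ₁ - h * χ) ^ t :=
    (Dvd.intro_left h (sub_sub_cancel χ₁ _).symm).trans (sub_dvd_pow_sub_pow χ₁ _ t)
  have hzero : aeval (shift R R) (χ₁ ^ t - (χ₁ - h * χ) ^ t) s = 0 := by
    rw [hq, mul_comm, map_mul, Module.End.mul_apply, hs, map_zero]
  rw [map_sub, LinearMap.sub_apply, sub_eq_zero] at hzero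
  rw [← aeval_shift_map, Polynomial.map_pow, hzero]
  refine aeval_shift_mem ?_ s n
  rw [Ideal.map_pow]
  exact Ideal.pow_mem_pow hw t

lemma exists_rational_congr_mul {R : Type*} [CommRing R] [Algebra ℚ R] [Algebra.FiniteType ℚ R]
    (m : Ideal R) [m.IsMaximal] {χ : R[X]} (hχ0 : IsUnit (χ.coeff 0)) :
    ∃ χ₀ : ℚ[X], χ₀.Monic ∧ χ₀.coeff 0 ≠ 0 ∧
      ∃ h : R[X], χ₀.map (algebraMap ℚ R) - h * χ ∈ m.map C := by
  let _ : Field (R ⧸ m) := Ideal.Quotient.field m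
  have : Module.Finite ℚ (R ⧸ m) := finite_of_finite_type_of_isJacobsonRing ℚ (R ⧸ m)
  obtain ⟨χ₀, hχ₀, hχ₀0, h', hh'⟩ := exists_monic_coeff_zero_ne_zero_dvd_map (K := ℚ)
    (f := χ.map (Ideal.Quotient.mk m)) (by rw [coeff_map]; exact (hχ0.map _).ne_zero)
  obtain ⟨h, rfl⟩ := map_surjective _ Ideal.Quotient.mk_surjective h'
  refine ⟨χ₀, hχ₀, hχ₀0, h, Ideal.mem_map_C_iff.2 fun i ↦ ?_⟩
  rw [← Ideal.Quotient.eq_zero_iff_mem, ← coeff_map, Polynomial.map_sub, Polynomial.map_mul,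
    mul_comm (h.map _), ← hh', Polynomial.map_map,
    Subsingleton.elim ((Ideal.Quotient.mk m).comp (algebraMap ℚ R)) (algebraMap ℚ (R ⧸ m)),
    sub_self, coeff_zero]

/-- Modulo a maximal ideal `m` the roots of `χ` become algebraic over `ℚ`; by Krull's intersection
theorem a given `b n` survives modulo some power of `m`, hence under some `ℚ`-linear functional
killing that power. -/
lemma exists_rational_specialization_of_finiteType {R : Type*} [CommRing R] [IsDomain R]
    [Algebra ℚ R] [Algebra.FiniteType ℚ R] {χ : R[X]} (hχ0 : IsUnit (χ.coeff 0)) {a b : ℕ → R}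
    {c : ℕ → ℤ} (ha : aeval (shift R R) χ a = 0) (hb : aeval (shift R R) χ b = 0)
    (hab : ∀ n, a n = c n * b n) (hb0 : ∀ n, b n ≠ 0) :
    ∃ χ₀ : ℚ[X], χ₀.Monic ∧ χ₀.coeff 0 ≠ 0 ∧ ∀ n, ∃ (t : ℕ) (a' b' : ℕ → ℚ),
      (∀ k, a' k = c k * b' k) ∧ b' n ≠ 0 ∧
      aeval (shift ℚ ℚ) (χ₀ ^ t) a' = 0 ∧ aeval (shift ℚ ℚ) (χ₀ ^ t) b' = 0 := by
  obtain ⟨m, hm⟩ := Ideal.exists_maximal R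
  have : IsNoetherianRing R := Algebra.FiniteType.isNoetherianRing ℚ R
  obtain ⟨χ₀, hχ₀, hχ₀0, h, hh⟩ := exists_rational_congr_mul m hχ0
  refine ⟨χ₀, hχ₀, hχ₀0, fun n ↦ ?_⟩
  obtain ⟨t, ht⟩ : ∃ t, b n ∉ m ^ t := by
    by_contra! hcon
    refine hb0 n ?_
    rwa [← Ideal.mem_bot, ← Ideal.iInf_pow_eq_bot_of_isDomain m hm.ne_top, Ideal.mem_iInf]
  obtain ⟨ℓ, hℓb, hℓ⟩ : ∃ ℓ : R →ₗ[ℚ] ℚ, ℓ (b n) ≠ 0 ∧ (m ^ t).restrictScalars ℚ ≤ ℓ.ker :=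
    Submodule.exists_le_ker_of_notMem ht
  have hzero {s : ℕ → R} (hs : aeval (shift R R) χ s = 0) :
      aeval (shift ℚ ℚ) (χ₀ ^ t) (fun n ↦ ℓ (s n)) = 0 := by
    ext n
    rw [aeval_shift_comp]
    exact hℓ (aeval_shift_pow_mem hh hs t n)
  refine ⟨t, fun n ↦ ℓ (a n), fun n ↦ ℓ (b n), fun k ↦ ?_, hℓb, hzero ha, hzero hb⟩
  simp only [hab, ← zsmul_eq_mul, map_zsmul]

variable {F : Type*} [Field F]

lemma exists_fg_subalgebra_recurrence {k : Type*} [CommRing k] [Algebra k F] {χ : F[X]}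
    (hχ : χ.Monic) {S : Set (ℕ → F)} (hS : S.Finite)
    (hrec : ∀ s ∈ S, aeval (shift F F) χ s = 0) :
    ∃ R : Subalgebra k F, R.FG ∧ (χ.coeff 0)⁻¹ ∈ R ∧
      (∃ χ' : R[X], χ'.map (algebraMap R F) = χ) ∧ ∀ s ∈ S, ∀ n, s n ∈ R := by
  let T : Set F := insert (χ.coeff 0)⁻¹ (χ.coeffs ∪ ⋃ s ∈ S, s '' Set.Iio χ.natDegree)
  have hT : T.Finite :=
    .insert _ <| .union χ.coeffs.finite_toSet <| hS.biUnion fun _ _ ↦ (Set.finite_Iio _).image _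
  let R := Algebra.adjoin k T
  have hTR : ∀ x ∈ T, x ∈ R := fun x hx ↦ Algebra.subset_adjoin hx
  obtain ⟨χ', hχ', hdeg, hmonic⟩ := lifts_and_natDegree_eq_and_monic (f := algebraMap R F)
    ((lifts_iff_coeffs_subset_range χ).2 fun x hx ↦ ⟨⟨x, hTR x (.inr (.inl hx))⟩, rfl⟩) hχ
  refine ⟨R, Subalgebra.fg_def.2 ⟨T, hT, rfl⟩, hTR _ (.inl rfl), ⟨χ', hχ'⟩, fun s hs n ↦ ?_⟩
  have hs0 : aeval (shift R F) χ' s = 0 := by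
    ext n
    rw [← aeval_shift_map, hχ', hrec s hs]
  obtain ⟨x, hx⟩ := forall_mem_of_aeval_shift_eq_zero hmonic hs0 (LinearMap.range
    (Algebra.linearMap R F)) (fun n hn ↦ ⟨⟨s n, hTR _ <| .inr <| .inr <|
      Set.mem_biUnion hs ⟨n, hdeg ▸ hn, rfl⟩⟩, rfl⟩) n
  exact hx ▸ x.2

lemma exists_rational_specialization [CharZero F] {χ : F[X]} (hχ : χ.Monic) (hχ0 : χ.coeff 0 ≠ 0)
    {a b : ℕ → F} {c : ℕ → ℤ} (ha : aeval (shift F F) χ a = 0)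
    (hb : aeval (shift F F) χ b = 0) (hab : ∀ n, a n = c n * b n) (hb0 : ∀ n, b n ≠ 0) :
    ∃ χ₀ : ℚ[X], χ₀.Monic ∧ χ₀.coeff 0 ≠ 0 ∧ ∀ n, ∃ (t : ℕ) (a' b' : ℕ → ℚ),
      (∀ k, a' k = c k * b' k) ∧ b' n ≠ 0 ∧
      aeval (shift ℚ ℚ) (χ₀ ^ t) a' = 0 ∧ aeval (shift ℚ ℚ) (χ₀ ^ t) b' = 0 := by
  obtain ⟨R, hR, hinv, ⟨χ', rfl⟩, hmem⟩ := exists_fg_subalgebra_recurrence (k := ℚ) hχ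
    (Set.toFinite {a, b}) (by simp [ha, hb])
  have : Algebra.FiniteType ℚ R := R.fg_iff_finiteType.1 hR
  have hinj : Function.Injective (algebraMap R F) := Subtype.val_injective
  rw [coeff_map] at hχ0 hinv
  have hunit : IsUnit (χ'.coeff 0) := .of_mul_eq_one ⟨_, hinv⟩ <| hinj <| by
    rw [map_mul, map_one]
    exact mul_inv_cancel₀ hχ0
  have hlift {s : ℕ → R} (hs : aeval (shift F F) (χ'.map (algebraMap R F))
      (fun n ↦ algebraMap R F (s n)) = 0) : aeval (shift R R) χ' s = 0 := by
    ext1 n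
    refine hinj ?_
    rw [← Algebra.coe_linearMap, ← aeval_shift_comp, ← aeval_shift_map, Algebra.coe_linearMap, hs,
      Pi.zero_apply, Pi.zero_apply, map_zero]
  exact exists_rational_specialization_of_finiteType hunit
    (a := fun n ↦ ⟨a n, hmem a (.inl rfl) n⟩) (b := fun n ↦ ⟨b n, hmem b (.inr rfl) n⟩)
    (hlift ha) (hlift hb) (fun n ↦ hinj (by simpa using hab n))
    fun n h ↦ hb0 n (congrArg (algebraMap R F) h)

end Specialization

/-! ### The ring of exponential polynomials -/

section ExponentialPolynomials

variable {F ι : Type*} [Field F]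

/-- The value at `n` of the exponential polynomial `∑ P_μ(n) γ^{nμ}`. The ring of exponential
polynomials with bases `γ i` is encoded as the polynomial ring in the variables `x_i`, standing for
`γ i ^ n`, over `F[X]`, where `X` stands for `n`. -/
noncomputable def evalAt (γ : ι → F) (n : ℕ) : MvPolynomial ι F[X] →+* F :=
  MvPolynomial.eval₂Hom (evalRingHom (n : F)) fun i ↦ γ i ^ n

lemma evalAt_C (γ : ι → F) (n : ℕ) (P : F[X]) : evalAt γ n (MvPolynomial.C P) = P.eval (n : F) := by
  simp [evalAt]

lemma evalAt_X (γ : ι → F) (n : ℕ) (i : ι) : evalAt γ n (MvPolynomial.X i) = γ i ^ n := by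
  simp [evalAt]

/-- The endomorphism of the ring of exponential polynomials induced by `n ↦ n + j`. -/
noncomputable def translate (γ : ι → F) (j : ℤ) : MvPolynomial ι F[X] →+* MvPolynomial ι F[X] :=
  MvPolynomial.eval₂Hom (MvPolynomial.C.comp (taylorAlgHom (j : F)).toRingHom)
    fun i ↦ MvPolynomial.C (C (γ i ^ j)) * MvPolynomial.X i

lemma translate_C (γ : ι → F) (j : ℤ) (P : F[X]) :
    translate γ j (MvPolynomial.C P) = MvPolynomial.C (taylor (j : F) P) := by
  simp [translate]

lemma translate_X (γ : ι → F) (j : ℤ) (i : ι) :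
    translate γ j (MvPolynomial.X i) = MvPolynomial.C (C (γ i ^ j)) * MvPolynomial.X i := by
  simp [translate]

lemma translate_zero (γ : ι → F) (f : MvPolynomial ι F[X]) : translate γ 0 f = f := by
  induction f using MvPolynomial.induction_on with
  | C P => simp [translate_C]
  | add p q hp hq => simp [hp, hq]
  | mul_X p i hp => rw [map_mul, hp, translate_X]; simp

section NonzeroBases

variable {γ : ι → F} (hγ : ∀ i, γ i ≠ 0)
include hγ

lemma evalAt_translate {j : ℤ} {n m : ℕ} (h : (m : ℤ) = n + j) (f : MvPolynomial ι F[X]) :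
    evalAt γ n (translate γ j f) = evalAt γ m f := by
  induction f using MvPolynomial.induction_on with
  | C P =>
    have hm : (m : F) = n + j := by exact_mod_cast congrArg (Int.cast (R := F)) h
    rw [translate_C, evalAt_C, evalAt_C, taylor_eval, hm]
  | add p q hp hq => simp only [map_add, hp, hq]
  | mul_X p i hp =>
    rw [map_mul, map_mul, map_mul, hp, translate_X, map_mul, evalAt_C, evalAt_X, evalAt_X, eval_C,
      ← zpow_natCast, ← zpow_natCast, ← zpow_add₀ (hγ i), h, add_comm j]

lemma translate_translate (j k : ℤ) (f : MvPolynomial ι F[X]) :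
    translate γ j (translate γ k f) = translate γ (j + k) f := by
  induction f using MvPolynomial.induction_on with
  | C P => simp only [translate_C, taylor_taylor, Int.cast_add]
  | add p q hp hq => simp only [map_add, hp, hq]
  | mul_X p i hp =>
    simp only [map_mul, hp, translate_X, translate_C, taylor_C, zpow_add₀ (hγ i)]
    ring

/-- Translation `n ↦ n + j` as an automorphism of the ring of exponential polynomials. -/
noncomputable def translateEquiv (j : ℤ) : MvPolynomial ι F[X] ≃+* MvPolynomial ι F[X] :=
  { translate γ j with
    invFun := translate γ (-j)
    left_inv := fun f ↦ by simp [translate_translate hγ, translate_zero]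
    right_inv := fun f ↦ by simp [translate_translate hγ, translate_zero] }

lemma translateEquiv_apply (j : ℤ) (f : MvPolynomial ι F[X]) :
    translateEquiv hγ j f = translate γ j f := rfl

lemma translate_ne_zero (j : ℤ) {f : MvPolynomial ι F[X]} (hf : f ≠ 0) : translate γ j f ≠ 0 :=
  (map_ne_zero_iff _ (translateEquiv hγ j).injective).2 hf

lemma translate_prime (j : ℤ) {f : MvPolynomial ι F[X]} (hf : Prime f) : Prime (translate γ j f) :=
  (MulEquiv.prime_iff (translateEquiv hγ j).toMulEquiv).2 hf

lemma translate_dvd_translate_iff (j k : ℤ) {f g : MvPolynomial ι F[X]} :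
    translate γ k f ∣ translate γ j g ↔ translate γ (k - j) f ∣ g := by
  rw [← map_dvd_iff (translateEquiv hγ j) (a := translate γ (k - j) f), translateEquiv_apply,
    translateEquiv_apply, translate_translate hγ, add_sub_cancel]

end NonzeroBases

/-- The value of the monomial `x^μ` at `x = γ`. -/
def monom (γ : ι → F) (μ : ι →₀ ℕ) : F := μ.prod fun i e ↦ γ i ^ e

lemma monom_ne_zero {γ : ι → F} (hγ : ∀ i, γ i ≠ 0) (μ : ι →₀ ℕ) : monom γ μ ≠ 0 :=
  Finset.prod_ne_zero_iff.2 fun i _ ↦ pow_ne_zero _ (hγ i)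

lemma evalAt_monomial (γ : ι → F) (n : ℕ) (μ : ι →₀ ℕ) (P : F[X]) :
    evalAt γ n (MvPolynomial.monomial μ P) = P.eval (n : F) * monom γ μ ^ n := by
  simp [evalAt, MvPolynomial.eval₂_monomial, monom, Finsupp.prod, ← Finset.prod_pow, ← pow_mul,
    mul_comm]

lemma evalAt_eq_sum (γ : ι → F) (n : ℕ) (f : MvPolynomial ι F[X]) :
    evalAt γ n f = ∑ μ ∈ f.support, (f.coeff μ).eval (n : F) * monom γ μ ^ n := by
  conv_lhs => rw [f.as_sum, map_sum]
  exact Finset.sum_congr rfl fun μ _ ↦ evalAt_monomial γ n μ _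

lemma translate_monomial (γ : ι → F) (j : ℤ) (μ : ι →₀ ℕ) (P : F[X]) :
    translate γ j (MvPolynomial.monomial μ P)
      = MvPolynomial.monomial μ (C (monom γ μ ^ j) * taylor (j : F) P) := by
  have hpow (i : ι) (e : ℕ) : (γ i ^ j) ^ e = (γ i ^ e) ^ j := by
    rw [← zpow_natCast, ← zpow_natCast, zpow_comm]
  rw [translate, MvPolynomial.coe_eval₂Hom, MvPolynomial.eval₂_monomial,
    MvPolynomial.monomial_eq (s := μ), monom, Finsupp.prod, Finsupp.prod, Finsupp.prod,
    ← Finset.prod_zpow]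
  simp only [mul_pow, Finset.prod_mul_distrib, ← map_pow, ← map_prod, hpow, map_mul,
    RingHom.comp_apply, AlgHom.toRingHom_eq_coe, RingHom.coe_coe, taylorAlgHom_apply]
  ring

lemma coeff_translate (γ : ι → F) (j : ℤ) (f : MvPolynomial ι F[X]) (μ : ι →₀ ℕ) :
    (translate γ j f).coeff μ = C (monom γ μ ^ j) * taylor (j : F) (f.coeff μ) := by
  classical
  induction f using MvPolynomial.induction_on' with
  | monomial ν P =>
    rw [translate_monomial, MvPolynomial.coeff_monomial, MvPolynomial.coeff_monomial]
    split_ifs with h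
    · rw [h]
    · simp
  | add p q hp hq => simp only [map_add, MvPolynomial.coeff_add, hp, hq, mul_add]

lemma evalAt_add_mul (γ : ι → F) (f : MvPolynomial ι F[X]) (r q z : ℕ) :
    evalAt γ (r + q * z) f = ∑ μ ∈ f.support,
      (C (monom γ μ ^ r) * (f.coeff μ).comp (C (q : F) * X + C (r : F))).eval (z : F)
        * (monom γ μ ^ q) ^ z := by
  rw [evalAt_eq_sum]
  refine Finset.sum_congr rfl fun μ _ ↦ ?_
  simp only [eval_mul, eval_C, eval_comp, eval_add, eval_X, Nat.cast_add, Nat.cast_mul,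
    add_comm (r : F)]
  ring

lemma degree_linear_comp {a : F} (ha : a ≠ 0) (b : F) (P : F[X]) :
    (P.comp (C a * X + C b)).degree = P.degree := by
  have hpos : 0 < (C a * X + C b).degree := by rw [degree_linear ha]; exact zero_lt_one
  rw [degree_comp hpos, degree_linear ha, mul_one]

end ExponentialPolynomials

section MultiplicativeIndependence

variable {F ι : Type*} [Field F] [Fintype ι] {γ : ι → F}

/-- Multiplicative independence of a finite family of nonzero elements of a field. -/
structure MulIndep (γ : ι → F) : Prop where
  ne_zero : ∀ i, γ i ≠ 0
  eq_zero_of_prod_zpow_eq_one : ∀ e : ι → ℤ, ∏ i, γ i ^ e i = 1 → e = 0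

lemma MulIndep.monom_zpow_injective (hγ : MulIndep γ) {q : ℤ} (hq : q ≠ 0) :
    Function.Injective fun μ ↦ monom γ μ ^ q := by
  intro μ ν h
  have hprod : ∏ i, γ i ^ ((μ i - ν i : ℤ) * q) = 1 := by
    simp_rw [zpow_mul, zpow_sub₀ (hγ.ne_zero _), zpow_natCast, div_zpow, Finset.prod_div_distrib,
      Finset.prod_zpow]
    simp only [monom, Finsupp.prod_fintype, pow_zero, implies_true] at h
    rw [h, div_self]
    exact zpow_ne_zero _ (Finset.prod_ne_zero_iff.2 fun i _ ↦ pow_ne_zero _ (hγ.ne_zero i))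
  ext i
  have hi := congrFun (hγ.eq_zero_of_prod_zpow_eq_one _ hprod) i
  simp only [Pi.zero_apply, mul_eq_zero, hq, or_false] at hi
  omega

variable [CharZero F]

lemma eq_zero_of_evalAt_eq_zero (hγ : MulIndep γ) {f : MvPolynomial ι F[X]}
    {s : Finset (ι →₀ ℕ)} (hs : f.support ⊆ s) {m : ℕ} (hm : ∀ μ, (f.coeff μ).degree < m) (r : ℕ)
    {q : ℕ} (hq : q ≠ 0) (h : ∀ z < s.card * m, evalAt γ (r + q * z) f = 0) : f = 0 := by
  have hmonom (μ : ι →₀ ℕ) (k : ℕ) : monom γ μ ^ k ≠ 0 := pow_ne_zero _ (monom_ne_zero hγ.ne_zero μ)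
  have hdeg (μ : ι →₀ ℕ) :
      (C (monom γ μ ^ r) * (f.coeff μ).comp (C (q : F) * X + C (r : F))).degree
        = (f.coeff μ).degree := by
    rw [degree_C_mul (hmonom μ r), degree_linear_comp (Nat.cast_ne_zero.2 hq)]
  have hinj : Set.InjOn (fun μ ↦ monom γ μ ^ q) f.support := by
    refine Function.Injective.injOn ?_
    simpa only [zpow_natCast] using hγ.monom_zpow_injective (Nat.cast_ne_zero.2 hq)
  have hzero := eq_zero_of_sum_eval_mul_pow_eq_zero (fun μ _ ↦ hmonom μ q) hinj
    (fun μ _ ↦ (hdeg μ).trans_lt (hm μ)) fun z hz ↦ by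
      rw [← evalAt_add_mul]
      exact h z (hz.trans_le (Nat.mul_le_mul_right _ (Finset.card_le_card hs)))
  ext1 μ
  by_contra h0
  have hμ := hdeg μ
  rw [hzero μ (MvPolynomial.mem_support_iff.2 h0), degree_zero] at hμ
  exact h0 (degree_eq_bot.1 hμ.symm)

lemma exists_evalAt_ne_zero (hγ : MulIndep γ) {f : MvPolynomial ι F[X]} (hf : f ≠ 0) (r : ℕ)
    {q : ℕ} (hq : q ≠ 0) : ∃ z, evalAt γ (r + q * z) f ≠ 0 := by
  by_contra! hzero
  refine hf (eq_zero_of_evalAt_eq_zero hγ subset_rfl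
    (m := f.support.sup (fun μ ↦ (f.coeff μ).natDegree) + 1) (fun μ ↦ ?_) r hq fun z _ ↦ hzero z)
  by_cases h0 : f.coeff μ = 0
  · rw [h0, degree_zero]
    exact WithBot.bot_lt_coe _
  · rw [degree_eq_natDegree h0]
    exact_mod_cast Nat.lt_succ_of_le
      (Finset.le_sup (f := fun μ ↦ (f.coeff μ).natDegree) (MvPolynomial.mem_support_iff.2 h0))

end MultiplicativeIndependence

/-! ### Linear relations between the translates of a fraction -/

section Translates

variable {F ι : Type*} [Field F]

/-- A polynomial over `F[X]` that is constant or associated to a variable: the factors to which the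
rigidity of translates does not apply, since they can be associated to their translates. -/
def IsElementary (f : MvPolynomial ι F[X]) : Prop :=
  (∃ h : F[X], f = MvPolynomial.C h) ∨ ∃ i, Associated f (MvPolynomial.X i)

lemma exists_eq_C_of_dvd_C {f : MvPolynomial ι F[X]} {P : F[X]} (hP : P ≠ 0)
    (h : f ∣ MvPolynomial.C P) : ∃ Q, f = MvPolynomial.C Q := by
  obtain ⟨Q, -, hQ⟩ := (MvPolynomial.dvd_C_iff_exists hP).1 h
  exact ⟨Q, hQ⟩

lemma isElementary_of_dvd_monomial {π : MvPolynomial ι F[X]} (hπ : Prime π) {μ : ι →₀ ℕ}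
    {P : F[X]} (hP : P ≠ 0) (h : π ∣ MvPolynomial.monomial μ P) : IsElementary π := by
  rw [MvPolynomial.monomial_eq, Finsupp.prod] at h
  rcases hπ.dvd_or_dvd h with h | h
  · exact Or.inl (exists_eq_C_of_dvd_C hP h)
  · obtain ⟨i, -, hi⟩ := hπ.exists_mem_finset_dvd h
    exact Or.inr ⟨i, hπ.associated_of_dvd MvPolynomial.X_prime (hπ.dvd_of_dvd_pow hi)⟩

lemma exists_eq_monomial_of_isElementary {B : MvPolynomial ι F[X]} (hB : B ≠ 0)
    (h : ∀ π, Prime π → π ∣ B → IsElementary π) :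
    ∃ (μ : ι →₀ ℕ) (H : F[X]), B = MvPolynomial.monomial μ H := by
  induction B using UniqueFactorizationMonoid.induction_on_prime with
  | h₁ => exact absurd rfl hB
  | h₂ x hx =>
    obtain ⟨r, -, hr⟩ := MvPolynomial.isUnit_iff_eq_C_of_isReduced.1 hx
    exact ⟨0, r, hr⟩
  | h₃ a p ha hp ih =>
    obtain ⟨μ, H, rfl⟩ := ih ha fun π hπ hd ↦ h π hπ (hd.mul_left p)
    rcases h p hp (dvd_mul_right p _) with ⟨Q, rfl⟩ | ⟨i, hi⟩
    · exact ⟨μ, Q * H, by rw [MvPolynomial.C_mul_monomial]⟩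
    · obtain ⟨u, hu⟩ := hi.symm
      obtain ⟨r, -, hr⟩ := MvPolynomial.isUnit_iff_eq_C_of_isReduced.1 u.isUnit
      refine ⟨Finsupp.single i 1 + μ, r * H, ?_⟩
      rw [← hu, hr, MvPolynomial.X, mul_comm (MvPolynomial.monomial _ _), mul_assoc,
        MvPolynomial.monomial_mul, MvPolynomial.C_mul_monomial, one_mul]

lemma eq_monomial_of_support_subset_singleton {R : Type*} [CommSemiring R] {f : MvPolynomial ι R}
    {μ : ι →₀ ℕ} (h : f.support ⊆ {μ}) : f = MvPolynomial.monomial μ (f.coeff μ) := by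
  conv_lhs => rw [f.as_sum, Finset.sum_subset h fun ν _ hν ↦ by
    rw [MvPolynomial.notMem_support_iff.1 hν, map_zero], Finset.sum_singleton]

lemma sum_mul_prod_erase_eq_zero_of_subset {R κ : Type*} [CommRing R] [IsDomain R] [DecidableEq κ]
    {s t : Finset κ} (hst : s ⊆ t) {a b : κ → R} (ha : ∀ i ∈ t, i ∉ s → a i = 0)
    (hb : ∀ i ∈ t, b i ≠ 0) (h : ∑ i ∈ t, a i * ∏ k ∈ t.erase i, b k = 0) :
    ∑ i ∈ s, a i * ∏ k ∈ s.erase i, b k = 0 := by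
  have hne : ∏ k ∈ t \ s, b k ≠ 0 :=
    Finset.prod_ne_zero_iff.2 fun k hk ↦ hb k (Finset.mem_sdiff.1 hk).1
  refine (mul_eq_zero.1 ?_).resolve_left hne
  rw [← h, ← Finset.sum_subset hst fun i hi his ↦ by rw [ha i hi his, zero_mul], Finset.mul_sum]
  refine Finset.sum_congr rfl fun i hi ↦ ?_
  have hsdiff : t \ s = t.erase i \ s.erase i := by grind
  rw [mul_left_comm, hsdiff, Finset.prod_sdiff (Finset.erase_subset_erase i hst)]

variable [Fintype ι] {γ : ι → F}

/-- Comparing leading coefficients in `translate γ j π = r * π` gives `monom γ μ ^ j = r` for every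
exponent `μ` of `π`, so that `π` has a single exponent unless `j = 0`. -/
lemma eq_zero_of_associated_translate (hγ : MulIndep γ) {π : MvPolynomial ι F[X]} (hπ : Prime π)
    (hel : ¬ IsElementary π) {j : ℤ} (h : Associated π (translate γ j π)) : j = 0 := by
  by_contra hj
  obtain ⟨u, hu⟩ := h
  obtain ⟨w, hw, huw⟩ := MvPolynomial.isUnit_iff_eq_C_of_isReduced.1 u.isUnit
  obtain ⟨r, -, rfl⟩ := Polynomial.isUnit_iff.1 hw
  have hmonom : ∀ μ ∈ π.support, monom γ μ ^ j = r := by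
    intro μ hμ
    have hlc : (π.coeff μ).leadingCoeff ≠ 0 :=
      leadingCoeff_ne_zero.2 (MvPolynomial.mem_support_iff.1 hμ)
    have hcoeff := congrArg (fun f ↦ (f.coeff μ).leadingCoeff) hu
    simp only [huw, mul_comm π, MvPolynomial.coeff_C_mul, coeff_translate, leadingCoeff_mul,
      leadingCoeff_C, leadingCoeff_taylor] at hcoeff
    exact (mul_right_cancel₀ hlc hcoeff).symm
  obtain ⟨μ, hμ⟩ := MvPolynomial.support_nonempty.2 hπ.ne_zero
  have hsupp : π.support ⊆ {μ} := fun ν hν ↦ Finset.mem_singleton.2 <|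
    hγ.monom_zpow_injective hj ((hmonom ν hν).trans (hmonom μ hμ).symm)
  exact hel (isElementary_of_dvd_monomial hπ (MvPolynomial.mem_support_iff.1 hμ)
    (dvd_of_eq (eq_monomial_of_support_subset_singleton hsupp)))

lemma finite_setOf_translate_dvd (hγ : MulIndep γ) {π : MvPolynomial ι F[X]} (hπ : Prime π)
    (hel : ¬ IsElementary π) {B : MvPolynomial ι F[X]} (hB : B ≠ 0) :
    {j : ℤ | translate γ j π ∣ B}.Finite := by
  classical
  have hex : ∀ j ∈ {j : ℤ | translate γ j π ∣ B}, ∃ q ∈ UniqueFactorizationMonoid.factors B,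
      Associated (translate γ j π) q := fun j hj ↦
    UniqueFactorizationMonoid.exists_mem_factors_of_dvd hB
      (translate_prime hγ.ne_zero j hπ).irreducible hj
  choose! q hq hass using hex
  refine Set.Finite.of_finite_image (f := q)
    ((UniqueFactorizationMonoid.factors B).toFinset.finite_toSet.subset ?_) fun j hj k hk hjk ↦ ?_
  · rintro _ ⟨j, hj, rfl⟩
    simpa using hq j hj
  · have hassoc : Associated (translate γ j π) (translate γ k π) :=
      (hjk ▸ hass j hj).trans (hass k hk).symm
    have hmap := hassoc.map (translateEquiv hγ.ne_zero (-j))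
    rw [translateEquiv_apply, translateEquiv_apply, translate_translate hγ.ne_zero,
      translate_translate hγ.ne_zero, neg_add_cancel, translate_zero] at hmap
    linarith [eq_zero_of_associated_translate hγ hπ hel hmap]

/-- Let `j₁` be the largest index occurring in the relation and `k₁` the largest shift with
`translate γ k₁ π ∣ B`. The prime `translate γ (j₁ + k₁) π` divides the `j₁`-th denominator and no
other one, which is impossible in a reduced fraction. -/
lemma isElementary_of_relation (hγ : MulIndep γ) {A B : MvPolynomial ι F[X]} (hAB : IsRelPrime A B)
    (hB : B ≠ 0) {t : Finset ℕ} {q : ℕ → F[X]} (hq : ∃ j ∈ t, q j ≠ 0)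
    (h : ∑ j ∈ t, MvPolynomial.C (q j) * translate γ j A * ∏ k ∈ t.erase j, translate γ k B = 0)
    {π : MvPolynomial ι F[X]} (hπ : Prime π) (hπB : π ∣ B) : IsElementary π := by
  classical
  by_contra hel
  have hγ0 := hγ.ne_zero
  set s := {j ∈ t | q j ≠ 0}
  have hrel := sum_mul_prod_erase_eq_zero_of_subset (Finset.filter_subset _ t : s ⊆ t)
    (fun j hj hjs ↦ by
      rw [Classical.not_not.1 fun h0 ↦ hjs (Finset.mem_filter.2 ⟨hj, h0⟩)]
      simp)
    (fun k _ ↦ translate_ne_zero hγ0 k hB) h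
  obtain ⟨j₁, hj₁, hjmax⟩ := s.exists_max_image id (Finset.filter_nonempty_iff.2 hq)
  obtain ⟨k₁, hk₁, hkmax⟩ := Set.exists_max_image _ id (finite_setOf_translate_dvd hγ hπ hel hB)
    ⟨0, by simpa only [Set.mem_ofPred_eq, translate_zero] using hπB⟩
  set ϖ := translate γ (j₁ + k₁) π with hϖ
  have hϖ_prime : Prime ϖ := translate_prime hγ0 _ hπ
  have hϖ_dvd (f : MvPolynomial ι F[X]) : ϖ ∣ translate γ j₁ f ↔ translate γ k₁ π ∣ f := by
    rw [hϖ, translate_dvd_translate_iff hγ0, add_sub_cancel_left]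
  have hϖ_terms : ∀ j ∈ s.erase j₁, ϖ ∣ MvPolynomial.C (q j) * translate γ j A *
      ∏ k ∈ s.erase j, translate γ k B := fun j hj ↦
    Dvd.dvd.mul_left (((hϖ_dvd B).2 hk₁).trans (Finset.dvd_prod_of_mem (fun k : ℕ ↦ translate γ k B)
      (Finset.mem_erase.2 ⟨(Finset.ne_of_mem_erase hj).symm, hj₁⟩))) _
  have hϖ_term : ϖ ∣ MvPolynomial.C (q j₁) * translate γ j₁ A *
      ∏ k ∈ s.erase j₁, translate γ k B := by
    rw [← dvd_add_left (Finset.dvd_sum hϖ_terms),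
      Finset.add_sum_erase s (fun j ↦ MvPolynomial.C (q j) * translate γ j A *
        ∏ k ∈ s.erase j, translate γ k B) hj₁, hrel]
    exact dvd_zero _
  rcases hϖ_prime.dvd_or_dvd hϖ_term with h1 | h1
  · rcases hϖ_prime.dvd_or_dvd h1 with hC | hA
    · obtain ⟨Q, hQ⟩ := exists_eq_C_of_dvd_C (Finset.mem_filter.1 hj₁).2 hC
      refine hel (Or.inl ⟨taylor ((-(j₁ + k₁) : ℤ) : F) Q, ?_⟩)
      rw [← translate_C γ, ← hQ, hϖ, translate_translate hγ0, neg_add_cancel, translate_zero]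
    · exact (translate_prime hγ0 k₁ hπ).not_isUnit (hAB ((hϖ_dvd A).1 hA) hk₁)
  · obtain ⟨k, hk, hkB⟩ := hϖ_prime.exists_mem_finset_dvd h1
    rw [hϖ, translate_dvd_translate_iff hγ0] at hkB
    have hk_le : k ≤ j₁ := hjmax k (Finset.mem_of_mem_erase hk)
    have hk_le' : (j₁ + k₁ - k : ℤ) ≤ k₁ := hkmax _ hkB
    have hk_ne := Finset.ne_of_mem_erase hk
    omega

end Translates

/-! ### Extrapolation by the pigeonhole principle -/

section Extrapolation

open fwdDiff

/-- The `p`-adic interpolation property of an integer sequence `c` driving the extrapolation: for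
all `q` in a lattice of index at most `p ^ (T * d)` of integer-valued polynomials of degree `< s`,
the iterated differences with step `p - 1` of `binomEval q * c` are highly divisible by `p`, up to
a loss `p ^ (s + e)`. -/
def HasDivisibleDifferences (p e d : ℕ) (c : ℕ → ℤ) : Prop :=
  ∀ s T : ℕ, ∃ Λ : AddSubgroup (Fin s → ℤ), Λ.index ≠ 0 ∧ Λ.index ≤ p ^ (T * d) ∧
    ∀ q ∈ Λ, ∀ n K : ℕ,
      (p : ℤ) ^ min (K / 2) T ∣ p ^ (s + e) * (Δ_[p - 1])^[K] (fun n ↦ binomEval q n * c n) n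

/-- The value at `i` of the difference operator `∑ j, q_j(n) E^j` applied to `c`, where `E` is the
shift and the coefficients `q_j` are given in the binomial basis, at the point `n = i + j`. -/
def diffOp {N s : ℕ} (c : ℕ → ℤ) (i : ℕ) : (Fin N → Fin s → ℤ) →+ ℤ where
  toFun q := ∑ j : Fin N, binomEval (q j) (i + j) * c (i + j)
  map_zero' := by simp [binomEval]
  map_add' q q' := by simp [binomEval, add_mul, Finset.sum_add_distrib]

lemma diffOp_apply {N s : ℕ} (c : ℕ → ℤ) (i : ℕ) (q : Fin N → Fin s → ℤ) :
    diffOp c i q = ∑ j : Fin N, binomEval (q j) (i + j) * c (i + j) := rfl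

lemma abs_diffOp_le {N s : ℕ} {c : ℕ → ℤ} {C : ℕ} (hc : ∀ n, |c n| ≤ (C : ℤ) ^ (n + 1))
    (hC : 1 ≤ C) {q : Fin N → Fin s → ℤ} {H : ℤ} (hq : ∀ j l, |q j l| ≤ H) (i : ℕ) :
    |diffOp c i q| ≤ N * (s * (H * (2 * C) ^ (i + N + 1))) := by
  have hC' : (1 : ℤ) ≤ C := by exact_mod_cast hC
  have hterm (j : Fin N) (l : Fin s) :
      |q j l * ((i + j).choose l : ℤ) * c (i + j)| ≤ H * (2 * C) ^ (i + N + 1) := by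
    have hchoose : ((i + j).choose l : ℤ) ≤ 2 ^ (i + N + 1) := by
      exact_mod_cast (Nat.choose_le_two_pow _ _).trans (Nat.pow_le_pow_right two_pos (by omega))
    have hcij : |c (i + j)| ≤ (C : ℤ) ^ (i + N + 1) :=
      (hc _).trans (pow_le_pow_right₀ hC' (by omega))
    have hH : 0 ≤ H := (abs_nonneg _).trans (hq j l)
    rw [abs_mul, abs_mul, Nat.abs_cast, mul_pow, mul_assoc]
    gcongr
    exact hq j l
  simp only [diffOp_apply, binomEval, Finset.sum_mul]
  calc |∑ j : Fin N, ∑ l : Fin s, q j l * ((i + j : ℕ).choose l : ℤ) * c (i + j)|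
      ≤ ∑ j : Fin N, ∑ l : Fin s, |q j l * ((i + j : ℕ).choose l : ℤ) * c (i + j)| :=
        (Finset.abs_sum_le_sum_abs _ _).trans
          (Finset.sum_le_sum fun j _ ↦ Finset.abs_sum_le_sum_abs _ _)
    _ ≤ ∑ _j : Fin N, ∑ _l : Fin s, H * (2 * C : ℤ) ^ (i + N + 1) := by
        gcongr with j _ l _
        exact hterm j l
    _ = N * (s * (H * (2 * C) ^ (i + N + 1))) := by simp

lemma fwdDiff_iter_diffOp {N s : ℕ} (c : ℕ → ℤ) (q : Fin N → Fin s → ℤ) (h K n : ℕ) :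
    (Δ_[h])^[K] (fun i ↦ diffOp c i q) n
      = ∑ j : Fin N, (Δ_[h])^[K] (fun n ↦ binomEval (q j) n * c n) (n + j) := by
  simp only [fwdDiff_iter_eq_sum_shift, diffOp_apply, Finset.smul_sum]
  rw [Finset.sum_comm]
  refine Finset.sum_congr rfl fun j _ ↦ Finset.sum_congr rfl fun k _ ↦ ?_
  rw [add_right_comm]

lemma fwdDiff_iter_eq_last {f : ℕ → ℤ} {h K n : ℕ} (hh : 0 < h)
    (hf : ∀ i < n + K * h, f i = 0) : (Δ_[h])^[K] f n = f (n + K * h) := by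
  rw [fwdDiff_iter_eq_sum_shift, Finset.sum_range_succ, Finset.sum_eq_zero]
  · simp
  · intro k hk
    have hlt := (Nat.mul_lt_mul_right hh).2 (Finset.mem_range.1 hk)
    rw [hf, smul_zero]
    simpa using hlt

lemma index_ker_intCast_comp_le {G : Type*} [AddCommGroup G] (f : G →+ ℤ) (m : ℕ) [NeZero m] :
    ((Int.castAddHom (ZMod m)).comp f).ker.index ≤ m := by
  rw [AddSubgroup.index_ker]
  exact (Finite.card_subtype_le _).trans_eq (Nat.card_zmod m)

lemma index_comap_eval {κ G : Type*} [AddCommGroup G] (Λ : AddSubgroup G) (j : κ) :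
    (Λ.comap (Pi.evalAddMonoidHom (fun _ : κ ↦ G) j)).index = Λ.index := by
  classical exact Λ.index_comap_of_surjective (Function.surjective_eval j)

lemma exists_ne_zero_mem_abs_le {N s H : ℕ} (Λ : AddSubgroup (Fin N → Fin s → ℤ))
    (hΛ : Λ.index ≠ 0) (hcard : Λ.index < (H + 1) ^ (s * N)) :
    ∃ q ∈ Λ, q ≠ 0 ∧ ∀ j l, |q j l| ≤ (H : ℤ) := by
  have : Λ.FiniteIndex := ⟨hΛ⟩
  have : Fintype ((Fin N → Fin s → ℤ) ⧸ Λ) := Fintype.ofFinite _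
  let ψ (v : Fin N → Fin s → Fin (H + 1)) : (Fin N → Fin s → ℤ) ⧸ Λ :=
    QuotientAddGroup.mk fun j l ↦ ((v j l : ℕ) : ℤ)
  obtain ⟨v, w, hvw, hψ⟩ := Fintype.exists_ne_map_eq_of_card_lt ψ <| by
    rw [← Nat.card_eq_fintype_card, ← AddSubgroup.index_eq_card]
    simpa [pow_mul] using hcard
  refine ⟨_, QuotientAddGroup.eq.1 hψ, fun h0 ↦ hvw ?_, fun j l ↦ ?_⟩
  · ext j l
    have hjl := congrFun (congrFun h0 j) l
    simp only [Pi.add_apply, Pi.neg_apply, Pi.zero_apply] at hjl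
    omega
  · have hv := (v j l).2
    have hw := (w j l).2
    simp only [Pi.add_apply, Pi.neg_apply]
    rw [abs_le]
    omega

lemma exists_addSubgroup_of_hasDivisibleDifferences {c : ℕ → ℤ} {P : Finset ℕ} {e d : ℕ → ℕ}
    (hP : ∀ p ∈ P, HasDivisibleDifferences p (e p) (d p) c) (N s T : ℕ) :
    ∃ Λ : AddSubgroup (Fin N → Fin s → ℤ), Λ.index ≠ 0 ∧
      Λ.index ≤ (∏ p ∈ P, p ^ d p) ^ (T * N) ∧
      ∀ q ∈ Λ, ∀ p ∈ P, ∀ n K : ℕ, (p : ℤ) ^ min (K / 2) T ∣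
        p ^ (s + e p) * (Δ_[p - 1])^[K] (fun i ↦ diffOp c i q) n := by
  choose Λ hne hle hdvd using fun p : P ↦ hP p p.2 s T
  let Γ (p : P) (j : Fin N) := (Λ p).comap (Pi.evalAddMonoidHom (fun _ : Fin N ↦ Fin s → ℤ) j)
  have hΓ (p : P) (j : Fin N) : (Γ p j).index = (Λ p).index := index_comap_eval (Λ p) j
  refine ⟨⨅ p, ⨅ j, Γ p j, ?_, ?_, fun q hq p hp n K ↦ ?_⟩
  · exact AddSubgroup.index_iInf_ne_zero fun p ↦ AddSubgroup.index_iInf_ne_zero fun j ↦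
      (hΓ p j).trans_ne (hne p)
  · calc (⨅ p, ⨅ j, Γ p j).index ≤ ∏ p, (⨅ j, Γ p j).index := AddSubgroup.index_iInf_le _
      _ ≤ ∏ p : P, ∏ _j : Fin N, (p : ℕ) ^ (T * d p) := by
          gcongr with p
          refine (AddSubgroup.index_iInf_le _).trans (Finset.prod_le_prod' fun j _ ↦ ?_)
          exact (hΓ p j).trans_le (hle p)
      _ = (∏ p ∈ P, p ^ d p) ^ (T * N) := by
          rw [← Finset.prod_pow, ← Finset.prod_coe_sort P]
          refine Finset.prod_congr rfl fun p _ ↦ ?_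
          rw [Finset.prod_const, Finset.card_univ, Fintype.card_fin, ← pow_mul, ← pow_mul]
          ring_nf
  · rw [fwdDiff_iter_diffOp, Finset.mul_sum]
    refine Finset.dvd_sum fun j _ ↦ hdvd ⟨p, hp⟩ (q j) ?_ _ K
    simp only [AddSubgroup.mem_iInf] at hq
    exact hq ⟨p, hp⟩ j

lemma exists_ne_zero_mem_diffOp_eq_zero {c : ℕ → ℤ} {C : ℕ}
    (hc : ∀ n, |c n| ≤ (C : ℤ) ^ (n + 1)) (hC : 1 ≤ C) {N s m H : ℕ}
    {Λ : AddSubgroup (Fin N → Fin s → ℤ)} (hΛ0 : Λ.index ≠ 0)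
    (hΛ : (H * (N * (s * (2 * C) ^ (m + N + 1))) + 1) ^ m * Λ.index < (H + 1) ^ (s * N)) :
    ∃ q ∈ Λ, q ≠ 0 ∧ (∀ j l, |q j l| ≤ H) ∧ ∀ i < m, diffOp c i q = 0 := by
  set V := N * (s * (2 * C) ^ (m + N + 1)) with hV
  let Γ (i : Fin m) := ((Int.castAddHom (ZMod (H * V + 1))).comp (diffOp (N := N) (s := s) c i)).ker
  have hΓ (i : Fin m) : (Γ i).index ≤ H * V + 1 := index_ker_intCast_comp_le _ _
  have hcard : ((⨅ i, Γ i) ⊓ Λ).index < (H + 1) ^ (s * N) := by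
    calc ((⨅ i, Γ i) ⊓ Λ).index ≤ (∏ i, (Γ i).index) * Λ.index :=
          AddSubgroup.index_inf_le.trans (Nat.mul_le_mul_right _ (AddSubgroup.index_iInf_le _))
      _ ≤ (∏ _i : Fin m, (H * V + 1)) * Λ.index := by
          gcongr with i
          exact hΓ i
      _ = (H * V + 1) ^ m * Λ.index := by rw [Finset.prod_const, Finset.card_univ, Fintype.card_fin]
      _ < (H + 1) ^ (s * N) := hΛ
  have hindex : ((⨅ i, Γ i) ⊓ Λ).index ≠ 0 := by
    refine AddSubgroup.index_inf_ne_zero (AddSubgroup.index_iInf_ne_zero fun i ↦ ?_) hΛ0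
    exact AddSubgroup.FiniteIndex.index_ne_zero
  obtain ⟨q, hq, hq0, hqH⟩ := exists_ne_zero_mem_abs_le _ hindex hcard
  refine ⟨q, hq.2, hq0, hqH, fun i hi ↦ ?_⟩
  have hmod : ((H * V + 1 : ℕ) : ℤ) ∣ diffOp c i q := by
    have hmem := AddSubgroup.mem_iInf.1 hq.1 ⟨i, hi⟩
    exact (ZMod.intCast_zmod_eq_zero_iff_dvd _ _).1 hmem
  refine Int.eq_zero_of_abs_lt_dvd hmod ?_
  have hC1 : (1 : ℤ) ≤ 2 * C := by exact_mod_cast (by omega : 1 ≤ 2 * C)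
  calc |diffOp c i q| ≤ N * (s * (H * (2 * C) ^ (i + N + 1))) := abs_diffOp_le hc hC hqH i
    _ ≤ N * (s * (H * (2 * C) ^ (m + N + 1))) := by gcongr
    _ = H * V := by rw [hV]; push_cast; ring
    _ < (H * V + 1 : ℕ) := by push_cast; exact lt_add_one _

lemma exists_small_diffOp {c : ℕ → ℤ} {C : ℕ} (hc : ∀ n, |c n| ≤ (C : ℤ) ^ (n + 1))
    (hC : 1 ≤ C) {P : Finset ℕ} {e d : ℕ → ℕ}
    (hP : ∀ p ∈ P, HasDivisibleDifferences p (e p) (d p) c) {N s : ℕ} (hN : 0 < N) (hs : 0 < s)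
    (A : ℕ) :
    ∃ q : Fin (2 * N) → Fin s → ℤ, q ≠ 0 ∧
      (∀ j l, |q j l| ≤ 2 * N * (s * (2 * C) ^ (N * s + 2 * N + 1)) *
        (∏ p ∈ P, p ^ d p : ℕ) ^ (2 * A)) ∧
      (∀ i < N * s, diffOp c i q = 0) ∧
      ∀ p ∈ P, ∀ n K : ℕ, (p : ℤ) ^ min (K / 2) (A * s) ∣
        p ^ (s + e p) * (Δ_[p - 1])^[K] (fun i ↦ diffOp c i q) n := by
  set E := ∏ p ∈ P, p ^ d p
  set V := 2 * N * (s * (2 * C) ^ (N * s + 2 * N + 1))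
  set H := V * E ^ (2 * A) with hH
  obtain ⟨Λ, hΛ0, hΛ, hdvd⟩ := exists_addSubgroup_of_hasDivisibleDifferences hP (2 * N) s (A * s)
  have hVE : (H * V + 1) * E ^ (2 * A) < (H + 1) ^ 2 := by
    have hV0 : 0 < V := by positivity
    have hEH : E ^ (2 * A) ≤ H := Nat.le_mul_of_pos_left _ hV0
    calc (H * V + 1) * E ^ (2 * A) = H * H + E ^ (2 * A) := by rw [hH]; ring
      _ < (H + 1) ^ 2 := by nlinarith
  obtain ⟨q, hqΛ, hq0, hqH, hqN⟩ := exists_ne_zero_mem_diffOp_eq_zero hc hC (m := N * s) (H := H)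
    hΛ0 <|
    calc (H * V + 1) ^ (N * s) * Λ.index ≤ (H * V + 1) ^ (N * s) * E ^ (A * s * (2 * N)) := by
          gcongr
      _ = ((H * V + 1) * E ^ (2 * A)) ^ (N * s) := by rw [mul_pow, ← pow_mul]; ring_nf
      _ < ((H + 1) ^ 2) ^ (N * s) := Nat.pow_lt_pow_left hVE (by positivity)
      _ = (H + 1) ^ (s * (2 * N)) := by rw [← pow_mul]; ring_nf
  exact ⟨q, hq0, by exact_mod_cast hqH, hqN, hdvd q hqΛ⟩

lemma mul_le_sum_div {P : Finset ℕ} (hP : ∀ p ∈ P, 0 < p) {L M : ℕ} (hPM : P.card ≤ M)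
    (hsum : 4 * (L : ℝ) + 4 ≤ ∑ p ∈ P, 1 / (p : ℝ)) : L * M ≤ ∑ p ∈ P, M / (4 * p) := by
  have hfloor : (M : ℝ) / 4 * ∑ p ∈ P, 1 / (p : ℝ) ≤ ∑ p ∈ P, (((M / (4 * p) : ℕ) : ℝ) + 1) := by
    rw [Finset.mul_sum]
    refine Finset.sum_le_sum fun p hp ↦ ?_
    have hp0 := hP p hp
    have hlt : M < 4 * p * (M / (4 * p) + 1) := Nat.lt_mul_div_succ _ (by omega)
    have hle : (M : ℝ) ≤ 4 * p * (((M / (4 * p) : ℕ) : ℝ) + 1) := by exact_mod_cast hlt.le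
    rw [div_mul_div_comm, mul_one, div_le_iff₀ (by positivity)]
    linarith
  rw [Finset.sum_add_distrib, Finset.sum_const, nsmul_one] at hfloor
  have hcard : (P.card : ℝ) ≤ M := by exact_mod_cast hPM
  have hscaled := mul_le_mul_of_nonneg_left hsum (by positivity : (0 : ℝ) ≤ (M : ℝ) / 4)
  have hreal : (L * M : ℝ) ≤ ((∑ p ∈ P, M / (4 * p) : ℕ) : ℝ) := by push_cast; linarith
  exact_mod_cast hreal

lemma eq_zero_of_forall_prime_pow_dvd {P : Finset ℕ} (hP : ∀ p ∈ P, p.Prime) {L M : ℕ}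
    (hPM : P.card ≤ M) (hsum : 4 * (L : ℝ) + 4 ≤ ∑ p ∈ P, 1 / (p : ℝ)) {R : ℤ}
    (hdvd : ∀ p ∈ P, (p : ℤ) ^ (M / (4 * p)) ∣ R) (hR : |R| < 2 ^ (L * M)) : R = 0 := by
  have hprod : ∏ p ∈ P, (p : ℤ) ^ (M / (4 * p)) ∣ R := by
    refine Finset.prod_dvd_of_coprime (fun p hp q hq hpq ↦ ?_) hdvd
    exact (Nat.isCoprime_iff_coprime.2 ((Nat.coprime_primes (hP p hp) (hP q hq)).2 hpq)).pow
  refine Int.eq_zero_of_abs_lt_dvd hprod (hR.trans_le ?_)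
  calc (2 : ℤ) ^ (L * M) ≤ 2 ^ ∑ p ∈ P, M / (4 * p) :=
        pow_le_pow_right₀ one_le_two (mul_le_sum_div (fun p hp ↦ (hP p hp).pos) hPM hsum)
    _ = ∏ p ∈ P, (2 : ℤ) ^ (M / (4 * p)) := (Finset.prod_pow_eq_pow_sum _ _ _).symm
    _ ≤ ∏ p ∈ P, (p : ℤ) ^ (M / (4 * p)) := by
        refine Finset.prod_le_prod (fun _ _ ↦ by positivity) fun p hp ↦ ?_
        have htwo : (2 : ℤ) ≤ p := by exact_mod_cast (hP p hp).two_le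
        gcongr

lemma pow_dvd_of_forall_lt_eq_zero {p m T M : ℕ} (hp : 2 ≤ p) {f : ℕ → ℤ}
    (hdvd : ∀ n K : ℕ, (p : ℤ) ^ min (K / 2) T ∣ p ^ m * (Δ_[p - 1])^[K] f n)
    (hmM : 4 * p * m ≤ M) (hMT : M ≤ T) (hf : ∀ i < M, f i = 0) :
    (p : ℤ) ^ (M / (4 * p)) ∣ f M := by
  have hlen : M / p * (p - 1) ≤ M :=
    (Nat.mul_le_mul_left _ (Nat.sub_le p 1)).trans (Nat.div_mul_le_self M p)
  have hlast : (Δ_[p - 1])^[M / p] f (M - M / p * (p - 1)) = f M := by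
    rw [fwdDiff_iter_eq_last (by omega), Nat.sub_add_cancel hlen]
    rwa [Nat.sub_add_cancel hlen]
  have hK : M / p / 2 ≤ T := ((Nat.div_le_self _ _).trans (Nat.div_le_self _ _)).trans hMT
  have hm : m ≤ M / (4 * p) := (Nat.le_div_iff_mul_le (by omega)).2 (by linarith)
  have hexp : m + M / (4 * p) ≤ M / p / 2 := by
    have htwice : 2 * (M / (4 * p)) ≤ M / p / 2 := by
      rw [Nat.div_div_eq_div_mul, Nat.le_div_iff_mul_le (by omega)]
      linarith [Nat.div_mul_le_self M (4 * p)]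
    omega
  have hdvdM := hdvd (M - M / p * (p - 1)) (M / p)
  rw [hlast, min_eq_left hK] at hdvdM
  have hsplit := (pow_dvd_pow (p : ℤ) hexp).trans hdvdM
  rw [pow_add] at hsplit
  exact Int.dvd_of_mul_dvd_mul_left (by positivity) hsplit

lemma abs_diffOp_lt {c : ℕ → ℤ} {C : ℕ} (hc : ∀ n, |c n| ≤ (C : ℤ) ^ (n + 1)) (hC : 1 ≤ C)
    {N s M : ℕ} (hM : N * s ≤ M) (hM0 : 0 < M) {Y : ℤ} (hY : (2 * C) ^ (4 * N + 2) * Y < 2 ^ M)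
    {q : Fin (2 * N) → Fin s → ℤ}
    (hq : ∀ j l, |q j l| ≤ 2 * N * (s * (2 * C) ^ (N * s + 2 * N + 1)) * Y) :
    |diffOp c M q| < (128 * C ^ 2) ^ M := by
  have hC1 : (1 : ℤ) ≤ 2 * C := by exact_mod_cast (by omega : 1 ≤ 2 * C)
  have hNs : (N * s : ℤ) ≤ M := by exact_mod_cast hM
  have hM2 : (M : ℤ) ≤ 2 ^ M := by exact_mod_cast Nat.lt_two_pow_self.le
  have h4 : (4 : ℤ) ≤ 4 ^ M := le_self_pow₀ (by norm_num) hM0.ne'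
  calc |diffOp c M q|
      ≤ (2 * N : ℕ) * (s * (2 * N * (s * (2 * C) ^ (N * s + 2 * N + 1)) * Y *
          (2 * C) ^ (M + 2 * N + 1))) := abs_diffOp_le hc hC hq M
    _ = 4 * (N * s) ^ 2 * ((2 * C) ^ (N * s) * (2 * C) ^ M) * ((2 * C) ^ (4 * N + 2) * Y) := by
        push_cast; ring
    _ ≤ 4 * (N * s) ^ 2 * ((2 * C) ^ (N * s) * (2 * C) ^ M) * (2 ^ M - 1) := by
        gcongr; exact Int.le_sub_one_of_lt hY
    _ ≤ 4 * M ^ 2 * ((2 * C) ^ M * (2 * C) ^ M) * (2 ^ M - 1) := by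
        have hpos : (0 : ℤ) ≤ 2 ^ M - 1 := by linarith
        gcongr
    _ < 4 * M ^ 2 * ((2 * C) ^ M * (2 * C) ^ M) * 2 ^ M := by gcongr; exact sub_one_lt _
    _ ≤ 4 ^ M * (2 ^ M) ^ 2 * ((2 * C) ^ M * (2 * C) ^ M) * 2 ^ M := by gcongr
    _ = (128 * C ^ 2) ^ M := by
        simp only [← pow_mul, mul_comm M 2]
        simp only [pow_mul, ← mul_pow]
        ring_nf

/-- The values of a small operator vanish one after the other: if all values before the `M`-th are
zero, then the `M`-th is divisible by high powers of the primes in `P`, and too small not to be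
zero. -/
theorem exists_diffOp_eq_zero {c : ℕ → ℤ} {C : ℕ} (hc : ∀ n, |c n| ≤ (C : ℤ) ^ (n + 1))
    (hC : 1 ≤ C) (hP : ∀ x : ℝ, ∃ P : Finset ℕ,
      (∀ p ∈ P, p.Prime ∧ ∃ e d, HasDivisibleDifferences p e d c) ∧ x ≤ ∑ p ∈ P, 1 / (p : ℝ)) :
    ∃ N, ∀ A s₀ : ℕ, ∃ s ≥ s₀, ∃ q : Fin N → Fin s → ℤ, q ≠ 0 ∧
      ∀ i < A * s, diffOp c i q = 0 := by
  set L := 128 * C ^ 2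
  have hLpow : (128 * C ^ 2 : ℤ) ≤ 2 ^ L := by
    exact_mod_cast (Nat.lt_two_pow_self : L < 2 ^ L).le
  obtain ⟨P, hPc, hPsum⟩ := hP (4 * (L : ℝ) + 4)
  choose! e d hed using fun p hp ↦ (hPc p hp).2
  have hprime (p : ℕ) (hp : p ∈ P) : p.Prime := (hPc p hp).1
  set N := 8 * (P.sup id + 1) with hN
  refine ⟨2 * N, fun A s₀ ↦ ?_⟩
  set E := ∏ p ∈ P, p ^ d p
  set Z := (2 * C) ^ (4 * N + 2) * E ^ (2 * A) with hZ
  set s := s₀ + P.sup e + 1 + Z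
  obtain ⟨q, hq0, hqH, hqN, hqdvd⟩ :=
    exists_small_diffOp hc hC hed (by omega : 0 < N) (by omega : 0 < s) A
  refine ⟨s, by omega, q, hq0, fun M ↦ ?_⟩
  induction M using Nat.strong_induction_on with
  | _ M ih =>
  intro hMA
  rcases lt_or_ge M (N * s) with hM | hM
  · exact hqN M hM
  have hsM : s ≤ M := (Nat.le_mul_of_pos_left s (by omega)).trans hM
  refine eq_zero_of_forall_prime_pow_dvd hprime (L := L) (M := M) ?_ hPsum (fun p hp ↦ ?_) ?_
  · have hcard : P.card ≤ P.sup id + 1 := by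
      refine (Finset.card_le_card fun p hp ↦ ?_).trans_eq (Finset.card_range _)
      exact Finset.mem_range.2 (Nat.lt_succ_iff.2 (Finset.le_sup (f := id) hp))
    have hNs : N * 1 ≤ N * s := Nat.mul_le_mul_left _ (by omega)
    omega
  · refine pow_dvd_of_forall_lt_eq_zero (hprime p hp).two_le (hqdvd p hp) ?_ hMA.le
      fun i hi ↦ ih i hi (hi.trans hMA)
    have hpN : p ≤ P.sup id := Finset.le_sup (f := id) hp
    have hep : s + e p ≤ 2 * s := by have := Finset.le_sup (f := e) hp; omega
    calc 4 * p * (s + e p) ≤ 4 * P.sup id * (2 * s) := by gcongr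
      _ ≤ N * s := by rw [hN]; nlinarith
      _ ≤ M := hM
  · have hZM : Z < 2 ^ M := (show Z < s by omega).trans_le (hsM.trans Nat.lt_two_pow_self.le)
    calc |diffOp c M q| < (128 * C ^ 2) ^ M :=
          abs_diffOp_lt hc hC hM (by omega) (by exact_mod_cast hZ ▸ hZM) hqH
      _ ≤ (2 ^ L) ^ M := by gcongr
      _ = 2 ^ (L * M) := (pow_mul _ _ _).symm

end Extrapolation

section Relation

variable {F ι : Type*} [Field F] [CharZero F] [Fintype ι] {γ : ι → F}

lemma exists_forall_sum_C_mul_eq_zero (hγ : MulIndep γ) {κ : Type*} (t : Finset κ)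
    (G : κ → MvPolynomial ι F[X]) :
    ∃ A, ∀ s ≥ 1, ∀ q : κ → F[X], (∀ j ∈ t, (q j).degree < (s : ℕ)) →
      (∀ n < A * s, evalAt γ n (∑ j ∈ t, MvPolynomial.C (q j) * G j) = 0) →
      ∑ j ∈ t, MvPolynomial.C (q j) * G j = 0 := by
  classical
  let S := t.biUnion fun j ↦ (G j).support
  let D := t.sup fun j ↦ S.sup fun μ ↦ ((G j).coeff μ).natDegree
  have hD {j : κ} (hj : j ∈ t) (μ : ι →₀ ℕ) : ((G j).coeff μ).natDegree ≤ D := by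
    by_cases h0 : (G j).coeff μ = 0
    · simp [h0]
    have hμ : μ ∈ S := Finset.mem_biUnion.2 ⟨j, hj, MvPolynomial.mem_support_iff.2 h0⟩
    exact (Finset.le_sup (f := fun μ ↦ ((G j).coeff μ).natDegree) hμ).trans
      (Finset.le_sup (f := fun j ↦ S.sup fun μ ↦ ((G j).coeff μ).natDegree) hj)
  refine ⟨S.card * (1 + D), fun s hs q hq h ↦ ?_⟩
  have hcoeff (μ : ι →₀ ℕ) : (∑ j ∈ t, MvPolynomial.C (q j) * G j).coeff μ
      = ∑ j ∈ t, q j * (G j).coeff μ := by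
    simp only [MvPolynomial.coeff_sum, MvPolynomial.coeff_C_mul]
  refine eq_zero_of_evalAt_eq_zero hγ (s := S) (m := s + D) (fun μ hμ ↦ ?_) (fun μ ↦ ?_) 0
    one_ne_zero fun z hz ↦ ?_
  · rw [MvPolynomial.mem_support_iff, hcoeff] at hμ
    obtain ⟨j, hj, hne⟩ := Finset.exists_ne_zero_of_sum_ne_zero hμ
    exact Finset.mem_biUnion.2 ⟨j, hj, MvPolynomial.mem_support_iff.2 (right_ne_zero_of_mul hne)⟩
  · rw [hcoeff]
    refine (degree_sum_le _ _).trans_lt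
      ((Finset.sup_lt_iff (WithBot.bot_lt_coe _)).2 fun j hj ↦ ?_)
    have hG : ((G j).coeff μ).degree ≤ D := natDegree_le_iff_degree_le.1 (hD hj μ)
    rw [degree_mul, Nat.cast_add]
    exact (add_le_add_right hG _).trans_lt
      (WithBot.add_lt_add_right (WithBot.natCast_ne_bot D) (hq j hj))
  · rw [zero_add, one_mul]
    refine h z (hz.trans_le ?_)
    rw [mul_assoc]
    exact Nat.mul_le_mul_left _ (by nlinarith)

lemma evalAt_sum_translate_mul_prod (hγ : MulIndep γ) {A B : MvPolynomial ι F[X]} {c : ℕ → ℤ}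
    (hc : ∀ n, evalAt γ n A = c n * evalAt γ n B) {N s : ℕ} (q : Fin N → Fin s → ℤ)
    {Q : ℕ → F[X]} (hQ : ∀ j : Fin N, Q j = taylor (j : F) (binomPoly fun l ↦ (q j l : F)))
    (n : ℕ) :
    evalAt γ n (∑ j ∈ Finset.range N, MvPolynomial.C (Q j) *
      (translate γ j A * ∏ k ∈ (Finset.range N).erase j, translate γ k B))
      = (diffOp c n q : F) * ∏ k ∈ Finset.range N, evalAt γ (n + k) B := by
  have htranslate (k : ℕ) (g : MvPolynomial ι F[X]) :
      evalAt γ n (translate γ k g) = evalAt γ (n + k) g :=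
    evalAt_translate hγ.ne_zero (by push_cast; rfl) g
  simp only [map_sum, map_mul, map_prod, htranslate, evalAt_C, diffOp_apply, Int.cast_sum,
    Finset.sum_mul, Finset.sum_range]
  refine Finset.sum_congr rfl fun j _ ↦ ?_
  have hcast : ((binomEval (q j) (n + j) : ℤ) : F) = binomEval (fun l ↦ (q j l : F)) (n + j) := by
    simp [binomEval]
  rw [← Finset.mul_prod_erase _ _ (Finset.mem_range.2 j.2), hQ, taylor_eval, ← Nat.cast_add,
    eval_binomPoly, hc, Int.cast_mul, hcast]
  ring

theorem exists_eq_monomial_of_diffOp_eq_zero (hγ : MulIndep γ) {A B : MvPolynomial ι F[X]}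
    (hAB : IsRelPrime A B) (hB : B ≠ 0) {c : ℕ → ℤ}
    (hc : ∀ n, evalAt γ n A = c n * evalAt γ n B)
    {N : ℕ} (hN : ∀ A s₀ : ℕ, ∃ s ≥ s₀, ∃ q : Fin N → Fin s → ℤ, q ≠ 0 ∧
      ∀ i < A * s, diffOp c i q = 0) :
    ∃ (μ : ι →₀ ℕ) (H : F[X]), B = MvPolynomial.monomial μ H := by
  obtain ⟨K, hK⟩ := exists_forall_sum_C_mul_eq_zero hγ (Finset.range N) fun j ↦
    translate γ j A * ∏ k ∈ (Finset.range N).erase j, translate γ k B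
  obtain ⟨s, hs, q, hq0, hq⟩ := hN K 1
  let Q (j : ℕ) : F[X] :=
    if h : j < N then taylor (j : F) (binomPoly fun l ↦ (q ⟨j, h⟩ l : F)) else 0
  have hQ (j : Fin N) : Q j = taylor (j : F) (binomPoly fun l ↦ (q j l : F)) := by simp [Q]
  have hdeg : ∀ j ∈ Finset.range N, (Q j).degree < (s : ℕ) := fun j hj ↦ by
    rw [hQ ⟨j, Finset.mem_range.1 hj⟩, degree_taylor]
    exact degree_binomPoly_lt _
  have hrel := hK s hs Q hdeg fun n hn ↦ by
    rw [evalAt_sum_translate_mul_prod hγ hc q hQ, hq n hn, Int.cast_zero, zero_mul]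
  obtain ⟨j, hj⟩ := Function.ne_iff.1 hq0
  have hQj : Q j ≠ 0 := by
    rw [hQ, Ne, taylor_eq_zero]
    refine binomPoly_ne_zero fun h0 ↦ hj (funext fun l ↦ ?_)
    exact Int.cast_injective ((congrFun h0 l).trans Int.cast_zero.symm)
  simp only [← mul_assoc] at hrel
  exact exists_eq_monomial_of_isElementary hB fun π hπ hπB ↦
    isElementary_of_relation hγ hAB hB ⟨j, Finset.mem_range.2 j.2, hQj⟩ hrel hπ hπB

end Relation

/-! ### Analytic functions on `ℤ_[p]` -/

section PadicEvaluation

open scoped PowerSeries.WithPiTopology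

variable {p : ℕ} [Fact p.Prime]

instance isLinearTopology_padicInt : IsLinearTopology ℤ_[p] ℤ_[p] := by
  refine IsLinearTopology.mk_of_hasBasis ℤ_[p] (p := fun _ : ℕ ↦ True)
    (s := fun n : ℕ ↦ (Ideal.span {(p : ℤ_[p]) ^ n} : Ideal ℤ_[p])) ?_
  have hp : (1 : ℝ) < p := by exact_mod_cast (Fact.out : p.Prime).one_lt
  have hbasis := Metric.nhds_basis_closedBall_pow (x := (0 : ℤ_[p])) (r := (p : ℝ)⁻¹)
    (by positivity) (inv_lt_one_of_one_lt₀ hp)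
  refine hbasis.congr (fun _ ↦ Iff.rfl) fun n _ ↦ ?_
  ext x
  rw [mem_closedBall_zero_iff, SetLike.mem_coe, ← PadicInt.norm_le_pow_iff_mem_span_pow, zpow_neg,
    zpow_natCast, inv_pow]

lemma hasEval_p_mul (y : ℤ_[p]) : PowerSeries.HasEval ((p : ℤ_[p]) * y) :=
  PowerSeries.HasEval.mul_right y
    (tendsto_pow_atTop_nhds_zero_of_norm_lt_one ((PadicInt.norm_lt_one_iff_dvd _).2 dvd_rfl))

/-- Evaluation of power series over `ℤ_[p]` at `p * y`. -/
noncomputable def evalP (y : ℤ_[p]) : PowerSeries ℤ_[p] →+* ℤ_[p] :=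
  (PowerSeries.aeval (R := ℤ_[p]) (hasEval_p_mul y)).toRingHom

lemma evalP_coe (y : ℤ_[p]) (P : ℤ_[p][X]) : evalP y P = P.eval (p * y) := by
  rw [evalP, AlgHom.toRingHom_eq_coe, RingHom.coe_coe, PowerSeries.aeval_coe,
    Polynomial.coe_aeval_eq_eval]

lemma evalP_X (y : ℤ_[p]) : evalP y PowerSeries.X = p * y := by
  rw [← Polynomial.coe_X, evalP_coe, eval_X]

lemma evalP_C (y a : ℤ_[p]) : evalP y (PowerSeries.C a) = a := by
  rw [← Polynomial.coe_C, evalP_coe, eval_C]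

lemma hasSum_evalP {α : Type*} (y : ℤ_[p]) {f : α → PowerSeries ℤ_[p]} {g : PowerSeries ℤ_[p]}
    (h : HasSum f g) : HasSum (fun i ↦ evalP y (f i)) (evalP y g) :=
  h.map (evalP y) (PowerSeries.continuous_aeval (hasEval_p_mul y))

lemma dvd_evalP_sub_eval_trunc (y : ℤ_[p]) (k : ℕ) (V : PowerSeries ℤ_[p]) :
    (p : ℤ_[p]) ^ k ∣ evalP y V - (PowerSeries.trunc k V).eval (p * y) := by
  conv_rhs => enter [1]; rw [PowerSeries.eq_X_pow_mul_shift_add_trunc k V]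
  rw [map_add, map_mul, map_pow, evalP_X, evalP_coe, add_sub_cancel_right, mul_pow, mul_assoc]
  exact dvd_mul_right _ _

lemma summable_C_mul {α : Type*} {a : α → ℤ_[p]} (ha : Tendsto a cofinite (nhds 0))
    (u : α → PowerSeries ℤ_[p]) : Summable fun m ↦ PowerSeries.C (a m) * u m := by
  rw [PowerSeries.WithPiTopology.summable_iff_summable_coeff]
  intro d
  simp only [PowerSeries.coeff_C_mul]
  refine NonarchimedeanAddGroup.summable_of_tendsto_cofinite_zero
    (squeeze_zero_norm (fun m ↦ ?_) (tendsto_zero_iff_norm_tendsto_zero.1 ha))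
  rw [norm_mul]
  exact mul_le_of_le_one_right (norm_nonneg _) (PadicInt.norm_le_one _)

variable (p) in
/-- The ring of functions of the form `V₀(p z²) + p z V₁(p z²)` with `V₀`, `V₁` power series over
`ℤ_[p]`. Every gain of a power of `p` costs two powers of `z`, which makes room for the
denominators in the binomial expansion of `(1 + p τ) ^ z`. -/
noncomputable def analyticSubring : Subring (ℕ → ℤ_[p]) where
  carrier := {f | ∃ V₀ V₁ : PowerSeries ℤ_[p], ∀ z : ℕ,
    f z = evalP ((z : ℤ_[p]) ^ 2) V₀ + p * z * evalP ((z : ℤ_[p]) ^ 2) V₁}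
  mul_mem' := by
    rintro f g ⟨V₀, V₁, hf⟩ ⟨U₀, U₁, hg⟩
    refine ⟨V₀ * U₀ + PowerSeries.C (p : ℤ_[p]) * PowerSeries.X * (V₁ * U₁),
      V₀ * U₁ + V₁ * U₀, fun z ↦ ?_⟩
    simp only [Pi.mul_apply, hf, hg, map_add, map_mul, evalP_X, evalP_C]
    ring
  one_mem' := ⟨1, 0, fun z ↦ by simp⟩
  add_mem' := by
    rintro f g ⟨V₀, V₁, hf⟩ ⟨U₀, U₁, hg⟩
    refine ⟨V₀ + U₀, V₁ + U₁, fun z ↦ ?_⟩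
    simp only [Pi.add_apply, hf, hg, map_add]
    ring
  zero_mem' := ⟨0, 0, fun z ↦ by simp⟩
  neg_mem' := by
    rintro f ⟨V₀, V₁, hf⟩
    refine ⟨-V₀, -V₁, fun z ↦ ?_⟩
    simp only [Pi.neg_apply, hf, map_neg]
    ring

lemma exists_even_odd_decomposition (F : ℤ_[p][X]) {e : ℕ} (he : F.natDegree ≤ 2 * e) :
    ∃ u₀ u₁ : ℤ_[p][X], ∀ z : ℕ, (p : ℤ_[p]) ^ e * F.eval (z : ℤ_[p])
      = u₀.eval (p * (z : ℤ_[p]) ^ 2) + p * z * u₁.eval (p * (z : ℤ_[p]) ^ 2) := by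
  have hmonomial (i : ℕ) : ∃ u₀ u₁ : ℤ_[p][X], i ≤ 2 * e → ∀ z : ℕ,
      (p : ℤ_[p]) ^ e * (F.coeff i * (z : ℤ_[p]) ^ i)
        = u₀.eval (p * (z : ℤ_[p]) ^ 2) + p * z * u₁.eval (p * (z : ℤ_[p]) ^ 2) := by
    rcases Nat.even_or_odd' i with ⟨k, rfl | rfl⟩
    · refine ⟨C (p ^ (e - k) * F.coeff (2 * k)) * X ^ k, 0, fun hi z ↦ ?_⟩
      obtain ⟨m, rfl⟩ := Nat.exists_eq_add_of_le (show k ≤ e by omega)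
      simp only [eval_mul, eval_C, eval_pow, eval_X, eval_zero, mul_zero, add_zero,
        Nat.add_sub_cancel_left]
      ring
    · refine ⟨0, C (p ^ (e - (k + 1)) * F.coeff (2 * k + 1)) * X ^ k, fun hi z ↦ ?_⟩
      obtain ⟨m, rfl⟩ := Nat.exists_eq_add_of_le (show k + 1 ≤ e by omega)
      simp only [eval_mul, eval_C, eval_pow, eval_X, eval_zero, zero_add, Nat.add_sub_cancel_left]
      ring
  choose u₀ u₁ hu using hmonomial
  refine ⟨∑ i ∈ Finset.range (2 * e + 1), u₀ i, ∑ i ∈ Finset.range (2 * e + 1), u₁ i,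
    fun z ↦ ?_⟩
  rw [eval_eq_sum_range' (Nat.lt_succ_of_le he), Finset.mul_sum, eval_finsetSum, eval_finsetSum,
    Finset.mul_sum, ← Finset.sum_add_distrib]
  exact Finset.sum_congr rfl fun i hi ↦ hu i (Nat.lt_succ_iff.1 (Finset.mem_range.1 hi)) z

lemma factorial_dvd_pow (hp : 5 ≤ p) (m : ℕ) : (m.factorial : ℤ_[p]) ∣ (p : ℤ_[p]) ^ (m / 4) := by
  have hv : padicValNat p m.factorial ≤ m / 4 := by
    rw [Nat.le_div_iff_mul_le (by norm_num)]
    calc padicValNat p m.factorial * 4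
        ≤ padicValNat p m.factorial * (p - 1) := Nat.mul_le_mul_left _ (by omega)
      _ = m - (p.digits m).sum := by rw [mul_comm, sub_one_mul_padicValNat_factorial]
      _ ≤ m := Nat.sub_le _ _
  have hne : (m.factorial : ℤ_[p]) ≠ 0 := by exact_mod_cast m.factorial_ne_zero
  rw [PadicInt.unitCoeff_spec hne, Units.mul_left_dvd]
  refine pow_dvd_pow _ (le_trans (le_of_eq ?_) hv)
  rw [← Nat.cast_inj (R := ℤ), ← PadicInt.valuation_coe, PadicInt.coe_natCast,
    Padic.valuation_natCast]

lemma cast_choose_mul_factorial {R : Type*} [CommRing R] (n m : ℕ) :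
    (n.choose m : R) * (m.factorial : R) = (descPochhammer R m).eval (n : R) := by
  rw [descPochhammer_eval_eq_descFactorial, Nat.descFactorial_eq_factorial_mul_choose, mul_comm,
    Nat.cast_mul]

lemma exists_choose_decomposition (hp : 5 ≤ p) (r k m : ℕ) :
    ∃ u₀ u₁ : ℤ_[p][X], ∀ z : ℕ,
      (p : ℤ_[p]) ^ (m / 4 + (m + 1) / 2) * ((r + k * z).choose m : ℤ_[p])
      = u₀.eval (p * (z : ℤ_[p]) ^ 2) + p * z * u₁.eval (p * (z : ℤ_[p]) ^ 2) := by
  obtain ⟨κ, hκ⟩ := factorial_dvd_pow hp m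
  let F : ℤ_[p][X] := C κ * (descPochhammer ℤ_[p] m).comp (C (r : ℤ_[p]) + C (k : ℤ_[p]) * X)
  have hF : F.natDegree ≤ 2 * ((m + 1) / 2) := by
    refine (natDegree_C_mul_le _ _).trans (natDegree_comp_le.trans ?_)
    have hlinear : (C (r : ℤ_[p]) + C (k : ℤ_[p]) * X).natDegree ≤ 1 := by compute_degree
    rw [descPochhammer_natDegree]
    calc m * (C (r : ℤ_[p]) + C (k : ℤ_[p]) * X).natDegree
        ≤ m * 1 := Nat.mul_le_mul_left _ hlinear
      _ ≤ 2 * ((m + 1) / 2) := by omega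
  obtain ⟨u₀, u₁, hu⟩ := exists_even_odd_decomposition F hF
  refine ⟨u₀, u₁, fun z ↦ ?_⟩
  have hchoose : (descPochhammer ℤ_[p] m).eval ((r : ℤ_[p]) + k * z)
      = ((r + k * z).choose m : ℤ_[p]) * m.factorial := by
    rw [cast_choose_mul_factorial, Nat.cast_add, Nat.cast_mul]
  rw [← hu, eval_mul, eval_C, eval_comp, eval_add, eval_mul, eval_X, eval_C, eval_C, hchoose,
    pow_add, hκ]
  ring

lemma hasSum_pow_mul_choose (x : ℤ_[p]) (z : ℕ) :
    HasSum (fun m ↦ x ^ m * (z.choose m : ℤ_[p])) ((1 + x) ^ z) := by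
  rw [add_comm, add_pow]
  simp only [one_pow, mul_one]
  refine hasSum_sum_of_ne_finset_zero fun m hm ↦ ?_
  rw [Nat.choose_eq_zero_of_lt (by simpa using hm), Nat.cast_zero, mul_zero]

lemma one_add_p_mul_pow_mem_analyticSubring (hp : 5 ≤ p) (τ : ℤ_[p]) :
    (fun z : ℕ ↦ (1 + p * τ) ^ z) ∈ analyticSubring p := by
  choose u₀ u₁ hu using exists_choose_decomposition hp 0 1
  simp only [zero_add, one_mul] at hu
  let δ (m : ℕ) : ℕ := m - (m / 4 + (m + 1) / 2)
  have hδ : Tendsto δ atTop atTop :=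
    tendsto_atTop_atTop.2 fun b ↦ ⟨4 * b + 4, fun a ha ↦ by simp only [δ]; omega⟩
  have hδm (m : ℕ) : (p : ℤ_[p]) ^ m = p ^ δ m * p ^ (m / 4 + (m + 1) / 2) := by
    rw [← pow_add, Nat.sub_add_cancel (by omega)]
  have hcoeff : Tendsto (fun m ↦ τ ^ m * (p : ℤ_[p]) ^ δ m) cofinite (nhds 0) := by
    rw [Nat.cofinite_eq_atTop]
    have hp_pow : Tendsto (fun n ↦ (p : ℤ_[p]) ^ n) atTop (nhds 0) :=
      tendsto_pow_atTop_nhds_zero_of_norm_lt_one ((PadicInt.norm_lt_one_iff_dvd _).2 dvd_rfl)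
    refine squeeze_zero_norm (fun m ↦ ?_) (tendsto_zero_iff_norm_tendsto_zero.1 (hp_pow.comp hδ))
    rw [norm_mul]
    exact mul_le_of_le_one_left (norm_nonneg _) (PadicInt.norm_le_one _)
  obtain ⟨V₀, hV₀⟩ := summable_C_mul hcoeff fun m ↦ (u₀ m : PowerSeries ℤ_[p])
  obtain ⟨V₁, hV₁⟩ := summable_C_mul hcoeff fun m ↦ (u₁ m : PowerSeries ℤ_[p])
  refine ⟨V₀, V₁, fun z ↦ (hasSum_pow_mul_choose ((p : ℤ_[p]) * τ) z).unique ?_⟩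
  convert (hasSum_evalP ((z : ℤ_[p]) ^ 2) hV₀).add
    ((hasSum_evalP ((z : ℤ_[p]) ^ 2) hV₁).mul_left ((p : ℤ_[p]) * z)) using 2 with m
  rw [map_mul (evalP _), map_mul (evalP _), evalP_C, evalP_coe, evalP_coe, mul_left_comm,
    ← mul_add, ← hu, mul_pow, hδm]
  ring

open fwdDiff

lemma dvd_fwdDiff_iter_of_dvd_sub_eval {R : Type*} [CommRing R] {a : R} {f : ℕ → R} {P : R[X]}
    (h : ∀ z : ℕ, a ∣ f z - P.eval (z : R)) {K : ℕ} (hP : P.natDegree < K) (n : ℕ) :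
    a ∣ (Δ_[1])^[K] f n := by
  have hzero := congrFun (Polynomial.fwdDiff_iter_eq_zero_of_degree_lt hP) (n : R)
  rw [fwdDiff_iter_eq_sum_shift, Pi.zero_apply] at hzero
  rw [fwdDiff_iter_eq_sum_shift, ← sub_zero (Finset.sum _ _), ← hzero, ← Finset.sum_sub_distrib]
  refine Finset.dvd_sum fun i _ ↦ ?_
  rw [← smul_sub, zsmul_eq_mul]
  exact Dvd.dvd.mul_left (by simpa using h (n + i • 1)) _

/-- Modulo `p ^ (K / 2)` only the first `K / 2` coefficients of the power series matter, so that
the function agrees with a polynomial of degree `< K`. -/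
lemma pow_dvd_fwdDiff_iter {f : ℕ → ℤ_[p]} (hf : f ∈ analyticSubring p) (K n : ℕ) :
    (p : ℤ_[p]) ^ (K / 2) ∣ (Δ_[1])^[K] f n := by
  obtain ⟨V₀, V₁, hf⟩ := hf
  rcases Nat.eq_zero_or_pos (K / 2) with hK | hK
  · rw [hK, pow_zero]; exact one_dvd _
  let t (V : PowerSeries ℤ_[p]) : ℤ_[p][X] :=
    (PowerSeries.trunc (K / 2) V).comp (C (p : ℤ_[p]) * X ^ 2)
  have hteval (V : PowerSeries ℤ_[p]) (z : ℤ_[p]) :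
      (t V).eval z = (PowerSeries.trunc (K / 2) V).eval (p * z ^ 2) := by
    simp only [t, eval_comp, eval_mul, eval_C, eval_pow, eval_X]
  have hdeg (V : PowerSeries ℤ_[p]) : (t V).natDegree ≤ (K / 2 - 1) * 2 := by
    refine natDegree_comp_le.trans (Nat.mul_le_mul ?_ (natDegree_C_mul_X_pow_le _ _))
    obtain ⟨k, hk⟩ := Nat.exists_eq_add_of_le' hK
    rw [hk]
    exact Nat.lt_succ_iff.1 (PowerSeries.natDegree_trunc_lt V k)
  refine dvd_fwdDiff_iter_of_dvd_sub_eval (P := t V₀ + C (p : ℤ_[p]) * X * t V₁) (fun z ↦ ?_) ?_ n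
  · have hsub : f z - (t V₀ + C (p : ℤ_[p]) * X * t V₁).eval (z : ℤ_[p])
        = (evalP ((z : ℤ_[p]) ^ 2) V₀ - (t V₀).eval (z : ℤ_[p]))
          + p * z * (evalP ((z : ℤ_[p]) ^ 2) V₁ - (t V₁).eval (z : ℤ_[p])) := by
      simp only [hf, eval_add, eval_mul, eval_C, eval_X]
      ring
    rw [hsub, hteval, hteval]
    exact dvd_add (dvd_evalP_sub_eval_trunc _ _ _) ((dvd_evalP_sub_eval_trunc _ _ _).mul_left _)
  · have hX : (C (p : ℤ_[p]) * X).natDegree ≤ 1 := by compute_degree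
    have h₀ := hdeg V₀
    have h₁ : (C (p : ℤ_[p]) * X * t V₁).natDegree ≤ 1 + (K / 2 - 1) * 2 :=
      natDegree_mul_le.trans (Nat.add_le_add hX (hdeg V₁))
    exact (natDegree_add_le _ _).trans_lt (by omega)

end PadicEvaluation

/-! ### Weierstrass preparation -/

section Weierstrass

lemma sq_sub_C_mul_X_mul_sq_ne_zero {R : Type*} [CommRing R] [IsDomain R] {c : R} (hc : c ≠ 0)
    {V₀ V₁ : PowerSeries R} (h : V₀ ≠ 0 ∨ V₁ ≠ 0) :
    V₀ ^ 2 - PowerSeries.C c * PowerSeries.X * V₁ ^ 2 ≠ 0 := by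
  intro h0
  rw [sub_eq_zero] at h0
  have hcX : PowerSeries.C c * PowerSeries.X ≠ 0 :=
    mul_ne_zero ((map_ne_zero_iff _ PowerSeries.C_injective).2 hc) PowerSeries.X_ne_zero
  have hV₁ : V₁ ≠ 0 := by
    rintro rfl
    rw [zero_pow two_ne_zero, mul_zero, sq_eq_zero_iff] at h0
    exact h.elim (fun h ↦ h h0) fun h ↦ h rfl
  have hV₀ : V₀ ≠ 0 := by
    rintro rfl
    exact mul_ne_zero hcX (pow_ne_zero 2 hV₁) (by rw [← h0, zero_pow two_ne_zero])
  have hC : (PowerSeries.C c).order = 0 := PowerSeries.order_eq_nat.2 ⟨by simpa using hc, by simp⟩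
  have horder := congrArg PowerSeries.order h0
  rw [PowerSeries.order_pow, PowerSeries.order_mul, PowerSeries.order_mul, hC,
    PowerSeries.order_X, PowerSeries.order_pow, zero_add, nsmul_eq_mul, nsmul_eq_mul] at horder
  obtain ⟨a, ha⟩ := ENat.ne_top_iff_exists.1 (PowerSeries.order_eq_top.not.2 hV₀)
  obtain ⟨b, hb⟩ := ENat.ne_top_iff_exists.1 (PowerSeries.order_eq_top.not.2 hV₁)
  rw [← ha, ← hb] at horder
  have hparity : 2 * a = 1 + 2 * b := by exact_mod_cast horder
  omega

lemma exists_eq_C_pow_mul {R : Type*} [CommRing R] [IsDomain R] [IsNoetherianRing R] [IsLocalRing R]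
    {ϖ : R} (hϖ : IsLocalRing.maximalIdeal R = Ideal.span {ϖ}) {V : PowerSeries R} (hV : V ≠ 0) :
    ∃ (e : ℕ) (G : PowerSeries R), V = PowerSeries.C (ϖ ^ e) * G ∧
      G.map (IsLocalRing.residue R) ≠ 0 := by
  have hunit : ¬ IsUnit (PowerSeries.C ϖ) := by
    rw [PowerSeries.isUnit_iff_constantCoeff, PowerSeries.constantCoeff_C, ← mem_nonunits_iff,
      ← IsLocalRing.mem_maximalIdeal, hϖ]
    exact Ideal.mem_span_singleton_self ϖ
  obtain ⟨G, hG, hdvd⟩ := (FiniteMultiplicity.of_not_isUnit hunit hV).exists_eq_pow_mul_and_not_dvd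
  refine ⟨_, G, by rw [map_pow]; exact hG, fun h0 ↦ hdvd ?_⟩
  have hcoeff (i : ℕ) : ϖ ∣ G.coeff i := by
    rw [← Ideal.mem_span_singleton, ← hϖ, ← IsLocalRing.residue_eq_zero_iff,
      ← PowerSeries.coeff_map, h0, map_zero]
  choose g hg using hcoeff
  exact ⟨PowerSeries.mk g, by ext i; rw [PowerSeries.coeff_C_mul, PowerSeries.coeff_mk, hg]⟩

variable {p : ℕ} [Fact p.Prime]

lemma evalP_mem_analyticSubring (V : PowerSeries ℤ_[p]) :
    (fun z : ℕ ↦ evalP ((z : ℤ_[p]) ^ 2) V) ∈ analyticSubring p :=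
  ⟨V, 0, fun z ↦ by simp⟩

lemma p_mul_mem_analyticSubring : (fun z : ℕ ↦ (p : ℤ_[p]) * z) ∈ analyticSubring p :=
  ⟨0, 1, fun z ↦ by simp⟩

lemma const_mem_analyticSubring (a : ℤ_[p]) : (fun _ : ℕ ↦ a) ∈ analyticSubring p :=
  ⟨PowerSeries.C a, 0, fun z ↦ by simp [evalP_C]⟩

/-- Multiplying `V₀ + p z V₁` by its conjugate `V₀ - p z V₁` gives a power series in `p z²`, which
is a unit times a power of `p` times a monic polynomial by Weierstrass preparation. -/
lemma exists_monic_eval_eq_mul {f : ℕ → ℤ_[p]} (hf : f ∈ analyticSubring p)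
    (hf0 : ∃ z, f z ≠ 0) : ∃ (e : ℕ) (W : ℤ_[p][X]), W.Monic ∧ ∃ k ∈ analyticSubring p,
      ∀ z : ℕ, (p : ℤ_[p]) ^ e * W.eval (p * (z : ℤ_[p]) ^ 2) = k z * f z := by
  obtain ⟨V₀, V₁, hf⟩ := hf
  have hV : V₀ ≠ 0 ∨ V₁ ≠ 0 := by
    by_contra! h
    obtain ⟨z, hz⟩ := hf0
    exact hz (by simp [hf, h.1, h.2])
  have hp0 : (p : ℤ_[p]) ≠ 0 := by exact_mod_cast (Fact.out : p.Prime).ne_zero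
  obtain ⟨e, G, hG, hres⟩ :=
    exists_eq_C_pow_mul PadicInt.maximalIdeal_eq_span_p (sq_sub_C_mul_X_mul_sq_ne_zero hp0 hV)
  obtain ⟨W, U, hfac⟩ := PowerSeries.exists_isWeierstrassFactorization hres
  obtain ⟨U', hU'⟩ := hfac.isUnit.exists_right_inv
  refine ⟨e, W, hfac.isDistinguishedAt.monic, (fun z : ℕ ↦ evalP ((z : ℤ_[p]) ^ 2) (U' * V₀))
    - (fun z : ℕ ↦ (p : ℤ_[p]) * z) * fun z : ℕ ↦ evalP ((z : ℤ_[p]) ^ 2) (U' * V₁),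
    sub_mem (evalP_mem_analyticSubring _)
      (mul_mem p_mul_mem_analyticSubring (evalP_mem_analyticSubring _)), fun z ↦ ?_⟩
  have hW : PowerSeries.C ((p : ℤ_[p]) ^ e) * (W : PowerSeries ℤ_[p])
      = U' * (V₀ ^ 2 - PowerSeries.C (p : ℤ_[p]) * PowerSeries.X * V₁ ^ 2) := by
    rw [hG, hfac.eq_mul]
    linear_combination (-PowerSeries.C ((p : ℤ_[p]) ^ e) * (W : PowerSeries ℤ_[p])) * hU'
  have heval := congrArg (evalP ((z : ℤ_[p]) ^ 2)) hW
  simp only [map_mul, map_sub, map_pow (evalP _), evalP_C, evalP_X, evalP_coe] at heval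
  rw [heval]
  simp only [Pi.sub_apply, Pi.mul_apply, map_mul (evalP _), hf]
  ring

variable (p) in
/-- The ring of functions with values in `ℚ_[p]` a multiple of which by a power of `p` belongs to
`analyticSubring p`. -/
noncomputable def analyticSubringPadic : Subring (ℕ → ℚ_[p]) where
  carrier := {f | ∃ e : ℕ, ∃ g ∈ analyticSubring p, ∀ z, (p : ℚ_[p]) ^ e * f z = (g z : ℚ_[p])}
  mul_mem' := by
    rintro f f' ⟨e, g, hg, h⟩ ⟨e', g', hg', h'⟩
    refine ⟨e + e', g * g', mul_mem hg hg', fun z ↦ ?_⟩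
    simp only [Pi.mul_apply, PadicInt.coe_mul, ← h, ← h']
    ring
  one_mem' := ⟨0, 1, one_mem _, fun z ↦ by simp⟩
  add_mem' := by
    rintro f f' ⟨e, g, hg, h⟩ ⟨e', g', hg', h'⟩
    refine ⟨e + e', (fun _ ↦ (p : ℤ_[p]) ^ e') * g + (fun _ ↦ (p : ℤ_[p]) ^ e) * g',
      add_mem (mul_mem (const_mem_analyticSubring _) hg)
        (mul_mem (const_mem_analyticSubring _) hg'), fun z ↦ ?_⟩
    simp only [Pi.mul_apply, Pi.add_apply, PadicInt.coe_mul, PadicInt.coe_add, PadicInt.coe_pow,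
      PadicInt.coe_natCast, ← h, ← h']
    ring
  zero_mem' := ⟨0, 0, zero_mem _, fun z ↦ by simp⟩
  neg_mem' := by
    rintro f ⟨e, g, hg, h⟩
    exact ⟨e, -g, neg_mem hg, fun z ↦ by simp [← h]⟩

lemma const_mem_analyticSubringPadic (a : ℚ_[p]) :
    (fun _ : ℕ ↦ a) ∈ analyticSubringPadic p := by
  rcases eq_or_ne a 0 with rfl | ha
  · exact zero_mem _
  have hnorm : ‖(p : ℚ_[p]) ^ (-a.valuation).toNat * a‖ ≤ 1 := by
    have hp1 : (1 : ℝ) < p := by exact_mod_cast (Fact.out : p.Prime).one_lt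
    rw [norm_mul, norm_pow, Padic.norm_p, Padic.norm_eq_zpow_neg_valuation ha, inv_pow,
      ← zpow_natCast, ← zpow_neg, ← zpow_add₀ (by positivity)]
    exact zpow_le_one_of_nonpos₀ hp1.le (by omega)
  exact ⟨_, _, const_mem_analyticSubring ⟨_, hnorm⟩, fun z ↦ rfl⟩

lemma natCast_mem_analyticSubringPadic : (fun z : ℕ ↦ (z : ℚ_[p])) ∈ analyticSubringPadic p :=
  ⟨1, _, p_mul_mem_analyticSubring, fun z ↦ by simp⟩

/-- By Fermat's little theorem `x ^ (p - 1)` has the form `1 + p τ`. -/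
lemma pow_mem_analyticSubringPadic (hp : 5 ≤ p) {x : ℚ_[p]} (hx : ‖x‖ = 1) (r : ℕ) :
    (fun z : ℕ ↦ x ^ (r + (p - 1) * z)) ∈ analyticSubringPadic p := by
  obtain ⟨x, rfl⟩ : ∃ y : ℤ_[p], (y : ℚ_[p]) = x := ⟨⟨x, hx.le⟩, rfl⟩
  have hunit : IsUnit x := PadicInt.isUnit_iff.2 hx
  have hfermat : (p : ℤ_[p]) ∣ x ^ (p - 1) - 1 := by
    rw [← Ideal.mem_span_singleton, ← PadicInt.maximalIdeal_eq_span_p, ← PadicInt.ker_toZMod,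
      RingHom.mem_ker, map_sub, map_pow, map_one, sub_eq_zero]
    exact ZMod.pow_card_sub_one_eq_one (hunit.map _).ne_zero
  obtain ⟨τ, hτ⟩ := hfermat
  refine ⟨0, _, mul_mem (const_mem_analyticSubring (x ^ r))
    (one_add_p_mul_pow_mem_analyticSubring hp τ), fun z ↦ ?_⟩
  rw [← hτ, add_sub_cancel]
  simp [pow_add, pow_mul]

lemma eval_mem_analyticSubringPadic (r q : ℕ) (P : ℚ_[p][X]) :
    (fun z : ℕ ↦ P.eval ((r + q * z : ℕ) : ℚ_[p])) ∈ analyticSubringPadic p := by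
  have hlinear : (fun z : ℕ ↦ ((r + q * z : ℕ) : ℚ_[p])) ∈ analyticSubringPadic p := by
    simp only [Nat.cast_add, Nat.cast_mul]
    exact add_mem (const_mem_analyticSubringPadic (r : ℚ_[p]))
      (mul_mem (const_mem_analyticSubringPadic (q : ℚ_[p])) natCast_mem_analyticSubringPadic)
  induction P using Polynomial.induction_on' with
  | add P Q hP hQ =>
    simp only [eval_add]
    exact add_mem hP hQ
  | monomial n a =>
    simp only [eval_monomial]
    exact mul_mem (const_mem_analyticSubringPadic a) (pow_mem hlinear n)

lemma evalAt_mem_analyticSubringPadic (hp : 5 ≤ p) {F ι : Type*} [Field F] (φ : F →+* ℚ_[p])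
    {γ : ι → F} (hγ : ∀ i, ‖φ (γ i)‖ = 1) (r : ℕ) (f : MvPolynomial ι F[X]) :
    (fun z : ℕ ↦ φ (evalAt γ (r + (p - 1) * z) f)) ∈ analyticSubringPadic p := by
  induction f using MvPolynomial.induction_on with
  | C P =>
    simp only [evalAt_C, ← eval_map_apply, map_natCast]
    exact eval_mem_analyticSubringPadic r (p - 1) (P.map φ)
  | add f g hf hg =>
    simp only [map_add]
    exact add_mem hf hg
  | mul_X f i hf =>
    simp only [map_mul, evalAt_X, map_pow]
    exact mul_mem hf (pow_mem_analyticSubringPadic hp (hγ i) r)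

end Weierstrass

section DivisibleDifferences

open fwdDiff

lemma cast_fwdDiff_iter_progression {R : Type*} [Ring R] (F : ℕ → ℤ) (h r K z : ℕ) :
    (((Δ_[h])^[K] F (r + h * z) : ℤ) : R) = (Δ_[1])^[K] (fun z ↦ (F (r + h * z) : R)) z := by
  induction K generalizing z with
  | zero => rfl
  | succ K ih =>
    rw [Function.iterate_succ_apply', Function.iterate_succ_apply', fwdDiff, fwdDiff, ← ih, ← ih,
      Int.cast_sub, mul_add, mul_one, add_assoc]

variable {p : ℕ} [Fact p.Prime]

lemma pow_dvd_fwdDiff_iter_add {f g R : ℕ → ℤ_[p]} (hg : g ∈ analyticSubring p) (T : ℕ)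
    (hf : ∀ z, f z = g z + p ^ T * R z) (K n : ℕ) :
    (p : ℤ_[p]) ^ min (K / 2) T ∣ (Δ_[1])^[K] f n := by
  rw [show f = g + (p ^ T : ℤ_[p]) • R from funext hf, fwdDiff_iter_add, fwdDiff_iter_const_smul]
  exact dvd_add ((pow_dvd_pow _ (min_le_left _ _)).trans (pow_dvd_fwdDiff_iter hg K n))
    ((pow_dvd_pow _ (min_le_right _ _)).trans (Dvd.intro _ rfl))

lemma eval_p_mul_sq_mem_analyticSubring (U : ℤ_[p][X]) :
    (fun z : ℕ ↦ U.eval (p * (z : ℤ_[p]) ^ 2)) ∈ analyticSubring p := by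
  simpa only [evalP_coe] using evalP_mem_analyticSubring (U : PowerSeries ℤ_[p])

lemma C_pow_dvd_modByMonic {W U : ℤ_[p][X]} (hW : W.Monic) {D T : ℕ} (hD : W.natDegree ≤ D)
    (h : ∀ k < D, PadicInt.toZModPow T ((U %ₘ W).coeff k) = 0) :
    C ((p : ℤ_[p]) ^ T) ∣ U %ₘ W := by
  rw [C_dvd_iff_dvd_coeff]
  intro k
  rcases lt_or_ge k D with hk | hk
  · rw [← Ideal.mem_span_singleton, ← PadicInt.ker_toZModPow]
    exact h k hk
  · rw [coeff_eq_zero_of_degree_lt ((degree_modByMonic_lt _ hW).trans_le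
      (degree_le_natDegree.trans (by exact_mod_cast hD.trans hk)))]
    exact dvd_zero _

lemma exists_binomEval_decomposition (hp : 5 ≤ p) (r k s : ℕ) :
    ∃ U₀ U₁ : (Fin s → ℤ) →+ ℤ_[p][X], ∀ (q : Fin s → ℤ) (z : ℕ),
      (p : ℤ_[p]) ^ s * ((binomEval q (r + k * z) : ℤ) : ℤ_[p])
        = (U₀ q).eval (p * (z : ℤ_[p]) ^ 2) + p * z * (U₁ q).eval (p * (z : ℤ_[p]) ^ 2) := by
  choose u₀ u₁ hu using exists_choose_decomposition hp r k
  let ε (l : ℕ) : ℕ := s - (l / 4 + (l + 1) / 2)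
  let U (u : ℕ → ℤ_[p][X]) : (Fin s → ℤ) →+ ℤ_[p][X] :=
    AddMonoidHom.mk' (fun q ↦ ∑ l : Fin s, C ((q l : ℤ_[p]) * (p : ℤ_[p]) ^ ε l) * u l)
      fun q q' ↦ by
        simp only [Pi.add_apply, Int.cast_add, add_mul, map_add, Finset.sum_add_distrib]
  refine ⟨U u₀, U u₁, fun q z ↦ ?_⟩
  simp only [U, AddMonoidHom.mk'_apply, binomEval, eval_finsetSum, Int.cast_sum, Finset.mul_sum,
    ← Finset.sum_add_distrib]
  refine Finset.sum_congr rfl fun l _ ↦ ?_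
  have hpow : (p : ℤ_[p]) ^ s = p ^ ε l * p ^ ((l : ℕ) / 4 + ((l : ℕ) + 1) / 2) := by
    rw [← pow_add, Nat.sub_add_cancel (by have := l.2; omega)]
  rw [hpow, eval_mul, eval_mul, eval_C]
  push_cast
  linear_combination ((q l : ℤ_[p]) * p ^ ε l) * hu l z

/-- Division of `U₀` and `U₁` by `W` replaces `b * c` by an element of `analyticSubring p`, up to a
multiple of `p ^ T`. -/
lemma pow_dvd_fwdDiff_iter_of_dvd_modByMonic {b c h : ℕ → ℤ_[p]} {W U₀ U₁ : ℤ_[p][X]} {e T : ℕ}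
    (hh : h ∈ analyticSubring p)
    (hc : ∀ z : ℕ, (p : ℤ_[p]) ^ e * W.eval (p * (z : ℤ_[p]) ^ 2) * c z = h z)
    (hb : ∀ z : ℕ, b z
      = U₀.eval (p * (z : ℤ_[p]) ^ 2) + p * z * U₁.eval (p * (z : ℤ_[p]) ^ 2))
    (h₀ : C ((p : ℤ_[p]) ^ T) ∣ U₀ %ₘ W) (h₁ : C ((p : ℤ_[p]) ^ T) ∣ U₁ %ₘ W) (K n : ℕ) :
    (p : ℤ_[p]) ^ min (K / 2) T ∣ (Δ_[1])^[K] (fun z ↦ p ^ e * (b z * c z)) n := by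
  obtain ⟨R₀, hR₀⟩ := h₀
  obtain ⟨R₁, hR₁⟩ := h₁
  refine pow_dvd_fwdDiff_iter_add (g := ((fun z : ℕ ↦ (U₀ /ₘ W).eval (p * (z : ℤ_[p]) ^ 2))
      + (fun z : ℕ ↦ (p : ℤ_[p]) * z) * fun z : ℕ ↦ (U₁ /ₘ W).eval (p * (z : ℤ_[p]) ^ 2)) * h)
    (R := fun z : ℕ ↦ (R₀.eval (p * (z : ℤ_[p]) ^ 2)
      + p * z * R₁.eval (p * (z : ℤ_[p]) ^ 2)) * (p ^ e * c z))
    (mul_mem (add_mem (eval_p_mul_sq_mem_analyticSubring _) (mul_mem p_mul_mem_analyticSubring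
      (eval_p_mul_sq_mem_analyticSubring _))) hh) T (fun z ↦ ?_) K n
  have hdiv₀ := congrArg (eval ((p : ℤ_[p]) * (z : ℤ_[p]) ^ 2)) (modByMonic_add_div U₀ W)
  have hdiv₁ := congrArg (eval ((p : ℤ_[p]) * (z : ℤ_[p]) ^ 2)) (modByMonic_add_div U₁ W)
  rw [hR₀, eval_add, eval_mul, eval_mul, eval_C] at hdiv₀
  rw [hR₁, eval_add, eval_mul, eval_mul, eval_C] at hdiv₁
  simp only [Pi.add_apply, Pi.mul_apply, ← hc]
  rw [hb, ← hdiv₀, ← hdiv₁]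
  ring

lemma index_ker_le_card {G H : Type*} [AddGroup G] [AddGroup H] [Finite H] (f : G →+ H) :
    f.ker.index ≠ 0 ∧ f.ker.index ≤ Nat.card H := by
  rw [AddSubgroup.index_ker]
  exact ⟨Nat.card_pos.ne', Finite.card_subtype_le _⟩

lemma exists_addSubgroup_C_pow_dvd_modByMonic {G ι : Type*} [AddGroup G] [Fintype ι]
    (U : ι → G →+ ℤ_[p][X]) {W : ι → ℤ_[p][X]} (hW : ∀ i, (W i).Monic) {D : ℕ}
    (hD : ∀ i, (W i).natDegree ≤ D) (T : ℕ) :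
    ∃ Λ : AddSubgroup G, Λ.index ≠ 0 ∧ Λ.index ≤ p ^ (T * (D * Fintype.card ι)) ∧
      ∀ q ∈ Λ, ∀ i, C ((p : ℤ_[p]) ^ T) ∣ U i q %ₘ W i := by
  have : NeZero (p ^ T) := ⟨pow_ne_zero _ (Fact.out : p.Prime).ne_zero⟩
  let Ψ : G →+ (ι → Fin D → ZMod (p ^ T)) :=
    AddMonoidHom.mk' (fun q i k ↦ PadicInt.toZModPow T ((U i q %ₘ W i).coeff k)) fun q q' ↦ by
      ext i k
      simp only [map_add, add_modByMonic, coeff_add, Pi.add_apply]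
  have hcard : Nat.card (ι → Fin D → ZMod (p ^ T)) = p ^ (T * (D * Fintype.card ι)) := by
    simp only [Nat.card_pi, Nat.card_zmod, Finset.prod_const, Finset.card_univ, Fintype.card_fin,
      pow_mul]
  exact ⟨Ψ.ker, (index_ker_le_card Ψ).1, hcard ▸ (index_ker_le_card Ψ).2, fun q hq i ↦
    C_pow_dvd_modByMonic (hW i) (hD i) fun k hk ↦ congrFun (congrFun hq i) ⟨k, hk⟩⟩

/-- The hypothesis says that, on each residue class modulo `p - 1`, the sequence `c` is the quotient
of an element of `analyticSubring p` by a monic polynomial in `p z ^ 2`. -/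
lemma exists_hasDivisibleDifferences (hp : 5 ≤ p) {c : ℕ → ℤ}
    (H : ∀ r : ℕ, ∃ (e : ℕ) (W : ℤ_[p][X]), W.Monic ∧ ∃ h ∈ analyticSubring p,
      ∀ z : ℕ, (p : ℤ_[p]) ^ e * W.eval (p * (z : ℤ_[p]) ^ 2) * (c (r + (p - 1) * z) : ℤ_[p])
        = h z) :
    ∃ e d, HasDivisibleDifferences p e d c := by
  choose e W hW h hh hc using H
  let R := Fin (p - 1)
  let E := Finset.univ.sup fun r : R ↦ e r
  let D := Finset.univ.sup fun r : R ↦ (W r).natDegree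
  have hD (r : R) : (W r).natDegree ≤ D :=
    Finset.le_sup (f := fun r : R ↦ (W r).natDegree) (Finset.mem_univ r)
  refine ⟨E, D * Fintype.card (R ⊕ R), fun s T ↦ ?_⟩
  choose U₀ U₁ hU using fun r : ℕ ↦ exists_binomEval_decomposition hp r (p - 1) s
  obtain ⟨Λ, hne, hle, hdvd⟩ := exists_addSubgroup_C_pow_dvd_modByMonic
    (Sum.elim (fun r : R ↦ U₀ r) fun r : R ↦ U₁ r) (W := Sum.elim (fun r ↦ W r) fun r ↦ W r)
    (Sum.rec (fun r ↦ hW r) fun r ↦ hW r) (Sum.rec hD hD) T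
  refine ⟨Λ, hne, hle, fun q hq n K ↦ ?_⟩
  obtain ⟨r, z, rfl⟩ : ∃ (r : R) (z : ℕ), n = r + (p - 1) * z :=
    ⟨⟨n % (p - 1), Nat.mod_lt _ (by omega)⟩, n / (p - 1), (Nat.mod_add_div _ _).symm⟩
  have hE : (p : ℤ_[p]) ^ E = p ^ (E - e r) * p ^ e r := by
    rw [← pow_add, Nat.sub_add_cancel
      (Finset.le_sup (f := fun r : R ↦ e r) (Finset.mem_univ r))]
  have hclass := pow_dvd_fwdDiff_iter_of_dvd_modByMonic (e := E)
    (c := fun z ↦ (c (r + (p - 1) * z) : ℤ_[p]))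
    (mul_mem (const_mem_analyticSubring ((p : ℤ_[p]) ^ (E - e r))) (hh r))
    (fun z ↦ by simp only [Pi.mul_apply, ← hc, hE, Sum.elim_inl]; ring) (hU r q)
    (hdvd q hq (Sum.inl r)) (hdvd q hq (Sum.inr r)) K z
  rw [← PadicInt.pow_p_dvd_int_iff]
  push_cast
  rw [cast_fwdDiff_iter_progression, ← smul_eq_mul, ← Pi.smul_apply, ← fwdDiff_iter_const_smul]
  convert hclass using 3 with z
  simp only [Pi.smul_apply, smul_eq_mul, Int.cast_mul]
  ring

variable {F ι : Type*} [Field F] [CharZero F] [Fintype ι] {γ : ι → F} {A B : MvPolynomial ι F[X]}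
  {c : ℕ → ℤ}

lemma exists_monic_mul_eq_of_evalAt (hp : 5 ≤ p) (φ : F →+* ℚ_[p]) (hφ : ∀ i, ‖φ (γ i)‖ = 1)
    (hγ : MulIndep γ) (hB : B ≠ 0) (hc : ∀ n, evalAt γ n A = c n * evalAt γ n B) (r : ℕ) :
    ∃ (e : ℕ) (W : ℤ_[p][X]), W.Monic ∧
      (∀ z : ℕ, evalAt γ (r + (p - 1) * z) B = 0 → W.eval (p * (z : ℤ_[p]) ^ 2) = 0) ∧
      ∃ h ∈ analyticSubring p, ∀ z : ℕ, (p : ℤ_[p]) ^ e * W.eval (p * (z : ℤ_[p]) ^ 2) *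
        (c (r + (p - 1) * z) : ℤ_[p]) = h z := by
  have hp0 : (p : ℤ_[p]) ≠ 0 := by exact_mod_cast (Fact.out : p.Prime).ne_zero
  have hp0' : (p : ℚ_[p]) ≠ 0 := by exact_mod_cast (Fact.out : p.Prime).ne_zero
  obtain ⟨eA, f, hf, hA⟩ := evalAt_mem_analyticSubringPadic hp φ hφ r A
  obtain ⟨eB, g, hg, hgB⟩ := evalAt_mem_analyticSubringPadic hp φ hφ r B
  have hg0 (z : ℕ) : g z = 0 ↔ evalAt γ (r + (p - 1) * z) B = 0 := by
    rw [← PadicInt.coe_eq_zero, ← hgB, mul_eq_zero_iff_left (pow_ne_zero _ hp0'), map_eq_zero]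
  obtain ⟨z₀, hz₀⟩ := exists_evalAt_ne_zero hγ hB r (show p - 1 ≠ 0 by omega)
  obtain ⟨e, W, hW, k, hk, hWk⟩ := exists_monic_eval_eq_mul hg ⟨z₀, (hg0 z₀).not.2 hz₀⟩
  refine ⟨e + eA, W, hW, fun z hz ↦ ?_, (fun _ ↦ (p : ℤ_[p]) ^ eB) * (k * f),
    mul_mem (const_mem_analyticSubring _) (mul_mem hk hf), fun z ↦ ?_⟩
  · have hWz := hWk z
    rw [(hg0 z).2 hz, mul_zero, mul_eq_zero] at hWz
    exact hWz.resolve_left (pow_ne_zero _ hp0)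
  · have hgf : g z * c (r + (p - 1) * z) * p ^ eA = p ^ eB * f z := by
      apply Subtype.coe_injective
      push_cast
      rw [← hgB, ← hA]
      simp only [hc, map_mul, map_intCast]
      ring
    simp only [Pi.mul_apply]
    rw [pow_add]
    linear_combination (p ^ eA * (c (r + (p - 1) * z) : ℤ_[p])) * hWk z + k z * hgf

lemma exists_hasDivisibleDifferences_of_evalAt (hp : 5 ≤ p) (φ : F →+* ℚ_[p])
    (hφ : ∀ i, ‖φ (γ i)‖ = 1) (hγ : MulIndep γ) (hB : B ≠ 0)
    (hc : ∀ n, evalAt γ n A = c n * evalAt γ n B) : ∃ e d, HasDivisibleDifferences p e d c :=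
  exists_hasDivisibleDifferences hp fun r ↦
    let ⟨e, W, hW, _, h⟩ := exists_monic_mul_eq_of_evalAt hp φ hφ hγ hB hc r
    ⟨e, W, hW, h⟩

lemma finite_setOf_eval_p_mul_sq_eq_zero {W : ℤ_[p][X]} (hW : W ≠ 0) :
    {z : ℕ | W.eval (p * (z : ℤ_[p]) ^ 2) = 0}.Finite := by
  have hp0 : (p : ℤ_[p]) ≠ 0 := by exact_mod_cast (Fact.out : p.Prime).ne_zero
  have hinj : Function.Injective fun z : ℕ ↦ (p : ℤ_[p]) * (z : ℤ_[p]) ^ 2 := fun x y hxy ↦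
    Nat.pow_left_injective two_ne_zero (by exact_mod_cast mul_left_cancel₀ hp0 hxy)
  exact (finite_setOfPred_isRoot hW).preimage hinj.injOn

/-- The Skolem–Mahler–Lech theorem for multiplicatively independent `γ`. -/
lemma eventually_evalAt_ne_zero (hp : 5 ≤ p) (φ : F →+* ℚ_[p])
    (hφ : ∀ i, ‖φ (γ i)‖ = 1) (hγ : MulIndep γ) (hB : B ≠ 0) :
    ∀ᶠ n in atTop, evalAt γ n B ≠ 0 := by
  have hfin (r : ℕ) : {z : ℕ | evalAt γ (r + (p - 1) * z) B = 0}.Finite := by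
    obtain ⟨-, W, hW, h, -⟩ := exists_monic_mul_eq_of_evalAt (A := 0) (c := 0) hp φ hφ hγ hB
      (by simp) r
    exact (finite_setOf_eval_p_mul_sq_eq_zero hW.ne_zero).subset h
  rw [← Nat.cofinite_eq_atTop, eventually_cofinite]
  refine ((Finset.range (p - 1)).finite_toSet.biUnion fun r _ ↦
    (hfin r).image fun z ↦ r + (p - 1) * z).subset fun n hn ↦ ?_
  simp only [not_not, Set.mem_ofPred_eq] at hn
  simp only [Set.mem_iUnion]
  refine ⟨n % (p - 1), by simpa using Nat.mod_lt _ (by omega), n / (p - 1), ?_,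
    Nat.mod_add_div _ _⟩
  simpa only [Set.mem_ofPred_eq, Nat.mod_add_div] using hn

end DivisibleDifferences

/-! ### Divergence of the sum of reciprocal norms of prime ideals -/

section PrimeIdeals

open NumberField IsDedekindDomain UniqueFactorizationMonoid Ideal

variable (K : Type*) [Field K] [NumberField K]

open scoped Classical in
/-- The nonzero ideals of norm at most `m`. -/
noncomputable def idealsUpTo (m : ℕ) : Finset (Ideal (𝓞 K)) :=
  (finite_setOfPred_absNorm_le m).toFinset.erase 0

variable {K} in
lemma mem_idealsUpTo {m : ℕ} {I : Ideal (𝓞 K)} :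
    I ∈ idealsUpTo K m ↔ I ≠ 0 ∧ absNorm I ≤ m := by
  simp [idealsUpTo]

variable {K} in
lemma absNorm_pos {I : Ideal (𝓞 K)} (hI : I ≠ 0) : 0 < absNorm I :=
  Nat.pos_of_ne_zero (absNorm_eq_zero_iff.not.2 hI)

lemma tendsto_card_idealsUpTo_div :
    Tendsto (fun m : ℕ ↦ ((idealsUpTo K m).card : ℝ) / m) atTop
      (nhds (dedekindZeta_residue K)) := by
  refine ((NumberField.Ideal.tendsto_norm_le_div_atTop₀ K).comp
    tendsto_natCast_atTop_atTop).congr fun m ↦ ?_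
  simp only [Function.comp_apply, Nat.cast_le]
  rw [← Nat.subtype_card (idealsUpTo K m) fun I ↦ by
      rw [mem_idealsUpTo, ← mem_nonZeroDivisors_iff_ne_zero],
    Nat.card_congr (Equiv.subtypeSubtypeEquivSubtypeInter
      (fun I ↦ I ∈ nonZeroDivisors (Ideal (𝓞 K))) (fun I ↦ absNorm I ≤ m))]

lemma exists_card_idealsUpTo_le :
    ∃ C : ℝ, 0 < C ∧ ∀ m : ℕ, ((idealsUpTo K m).card : ℝ) ≤ C * m := by
  obtain ⟨C, hC⟩ := (tendsto_card_idealsUpTo_div K).bddAbove_range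
  refine ⟨max C 1, by positivity, fun m ↦ ?_⟩
  rcases Nat.eq_zero_or_pos m with rfl | hm
  · have : idealsUpTo K 0 = ∅ := Finset.eq_empty_of_forall_notMem fun I hI ↦
      (absNorm_pos (mem_idealsUpTo.1 hI).1).ne' (Nat.le_zero.1 (mem_idealsUpTo.1 hI).2)
    simp [this]
  · rw [← div_le_iff₀ (by positivity)]
    exact (hC ⟨m, rfl⟩).trans (le_max_left _ _)

open scoped Classical in
lemma card_filter_dvd_idealsUpTo_le {J : Ideal (𝓞 K)} (hJ : J ≠ 0) (m : ℕ) :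
    ((idealsUpTo K m).filter (J ∣ ·)).card ≤ (idealsUpTo K (m / absNorm J)).card := by
  refine (Finset.card_le_card fun I hI ↦ ?_).trans
    (Finset.card_image_le (f := fun I ↦ J * I) (s := idealsUpTo K (m / absNorm J)))
  obtain ⟨hI, I', rfl⟩ := Finset.mem_filter.1 hI
  rw [mem_idealsUpTo, map_mul] at hI
  refine Finset.mem_image.2 ⟨I', mem_idealsUpTo.2 ⟨right_ne_zero_of_mul hI.1, ?_⟩, rfl⟩
  rw [Nat.le_div_iff_mul_le (absNorm_pos hJ), mul_comm]
  exact hI.2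

variable {K} in
lemma two_le_absNorm (v : HeightOneSpectrum (𝓞 K)) : 2 ≤ absNorm v.asIdeal := by
  have h0 := absNorm_pos v.ne_bot
  have h1 := absNorm_eq_one_iff.not.2 v.isPrime.ne_top
  omega

open scoped Classical in
/-- An ideal is determined by its exponents at the primes dividing it, and these are at most
`Nat.log 2 m` when its norm is at most `m`. -/
lemma card_filter_smooth_idealsUpTo_le (T : Finset (HeightOneSpectrum (𝓞 K))) (m : ℕ) :
    {I ∈ idealsUpTo K m | ∀ v : HeightOneSpectrum (𝓞 K), v.asIdeal ∣ I → v ∈ T}.card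
      ≤ (Nat.log 2 m + 1) ^ T.card := by
  have hcard : (Fintype.piFinset fun _ : T ↦ Finset.range (Nat.log 2 m + 1)).card
      = (Nat.log 2 m + 1) ^ T.card := by simp
  rw [← hcard]
  refine Finset.card_le_card_of_injOn
    (fun I v ↦ (normalizedFactors I).count v.1.asIdeal) (fun I hI ↦ ?_) fun I hI J hJ hIJ ↦ ?_
  · obtain ⟨hI0, hIm⟩ := mem_idealsUpTo.1 (Finset.mem_filter.1 hI).1
    refine Fintype.mem_piFinset.2 fun v ↦ Finset.mem_range_succ_iff.2 ?_
    refine Nat.le_log_of_pow_le one_lt_two (le_trans ?_ hIm)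
    have hdvd : v.1.asIdeal ^ (normalizedFactors I).count v.1.asIdeal ∣ I := by
      refine pow_dvd_of_le_emultiplicity ?_
      rw [emultiplicity_eq_count_normalizedFactors v.1.irreducible hI0, normalize_eq]
    calc 2 ^ (normalizedFactors I).count v.1.asIdeal
        ≤ absNorm v.1.asIdeal ^ (normalizedFactors I).count v.1.asIdeal :=
          Nat.pow_le_pow_left (two_le_absNorm _) _
      _ ≤ absNorm I := by
          rw [← map_pow]
          exact Nat.le_of_dvd (absNorm_pos hI0) (map_dvd absNorm hdvd)
  · obtain ⟨hI, hIT⟩ := Finset.mem_filter.1 hI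
    obtain ⟨hJ, hJT⟩ := Finset.mem_filter.1 hJ
    have hmemT {I P : Ideal (𝓞 K)} (hI : ∀ v : HeightOneSpectrum (𝓞 K), v.asIdeal ∣ I → v ∈ T)
        (hP : P ∈ normalizedFactors I) : ∃ v ∈ T, v.asIdeal = P :=
      have hprime := prime_of_normalized_factor P hP
      ⟨⟨P, isPrime_of_prime hprime, hprime.ne_zero⟩, hI _ (dvd_of_mem_normalizedFactors hP), rfl⟩
    rw [← Ideal.prod_normalizedFactors_eq_self (mem_idealsUpTo.1 hI).1,
      ← Ideal.prod_normalizedFactors_eq_self (mem_idealsUpTo.1 hJ).1]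
    congr 1
    ext P
    by_cases hP : ∃ v ∈ T, v.asIdeal = P
    · obtain ⟨v, hv, rfl⟩ := hP
      exact congrFun hIJ ⟨v, hv⟩
    · rw [Multiset.count_eq_zero.2 fun h ↦ hP (hmemT hIT h),
        Multiset.count_eq_zero.2 fun h ↦ hP (hmemT hJT h)]

lemma exists_card_idealsUpTo_le_add_sum (T : Finset (HeightOneSpectrum (𝓞 K))) (m : ℕ) :
    ∃ Q : Finset (HeightOneSpectrum (𝓞 K)), Disjoint Q T ∧ (idealsUpTo K m).card
      ≤ (Nat.log 2 m + 1) ^ T.card + ∑ v ∈ Q, (idealsUpTo K (m / absNorm v.asIdeal)).card := by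
  classical
  have hfin : {v : HeightOneSpectrum (𝓞 K) | absNorm v.asIdeal ≤ m}.Finite :=
    (finite_setOfPred_absNorm_le (S := 𝓞 K) m).preimage fun _ _ _ _ h ↦ HeightOneSpectrum.ext h
  let Q := hfin.toFinset \ T
  have hsub : idealsUpTo K m ⊆
      {I ∈ idealsUpTo K m | ∀ v : HeightOneSpectrum (𝓞 K), v.asIdeal ∣ I → v ∈ T} ∪
      Q.biUnion fun v ↦ {I ∈ idealsUpTo K m | v.asIdeal ∣ I} := by
    intro I hI
    rw [Finset.mem_union, Finset.mem_filter, Finset.mem_biUnion]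
    by_cases h : ∀ v : HeightOneSpectrum (𝓞 K), v.asIdeal ∣ I → v ∈ T
    · exact Or.inl ⟨hI, h⟩
    · push Not at h
      obtain ⟨v, hv, hvT⟩ := h
      obtain ⟨hI0, hIm⟩ := mem_idealsUpTo.1 hI
      refine Or.inr ⟨v, Finset.mem_sdiff.2 ⟨hfin.mem_toFinset.2 ?_, hvT⟩,
        Finset.mem_filter.2 ⟨hI, hv⟩⟩
      exact (Nat.le_of_dvd (absNorm_pos hI0) (map_dvd absNorm hv)).trans hIm
  refine ⟨Q, Finset.sdiff_disjoint, (Finset.card_le_card hsub).trans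
    ((Finset.card_union_le _ _).trans (add_le_add (card_filter_smooth_idealsUpTo_le K T m) ?_))⟩
  exact Finset.card_biUnion_le.trans
    (Finset.sum_le_sum fun v _ ↦ card_filter_dvd_idealsUpTo_le K v.ne_bot m)

/-- If the sum converged, the ideals with a prime factor outside a large finite set `T` would make
up only a small proportion of all ideals, but the remaining ideals have density zero. -/
theorem not_summable_one_div_absNorm :
    ¬ Summable fun v : HeightOneSpectrum (𝓞 K) ↦ 1 / (absNorm v.asIdeal : ℝ) := by
  intro hsum
  obtain ⟨C, hC0, hC⟩ := exists_card_idealsUpTo_le K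
  have hκ := dedekindZeta_residue_pos K
  set κ := dedekindZeta_residue K
  obtain ⟨T, hT⟩ := summable_iff_vanishing_norm.1 hsum (κ / (4 * C)) (by positivity)
  have hlarge : ∀ᶠ ℓ : ℕ in atTop, κ / 2 < ((idealsUpTo K (2 ^ ℓ)).card : ℝ) / (2 ^ ℓ : ℕ) :=
    ((tendsto_card_idealsUpTo_div K).comp (tendsto_pow_atTop_atTop_of_one_lt one_lt_two))
      |>.eventually_const_lt (half_lt_self hκ)
  have hlog : ∀ᶠ ℓ : ℕ in atTop, ((ℓ + 1 : ℕ) : ℝ) ^ T.card / 2 ^ (ℓ + 1) < κ / 8 :=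
    ((tendsto_pow_const_div_const_pow_of_one_lt T.card one_lt_two).comp
      (tendsto_add_atTop_nat 1)).eventually_lt_const (by positivity)
  obtain ⟨ℓ, hlarge, hlog⟩ := (hlarge.and hlog).exists
  obtain ⟨Q, hQT, hcard⟩ := exists_card_idealsUpTo_le_add_sum K T (2 ^ ℓ)
  rw [Nat.log_pow one_lt_two] at hcard
  set m := 2 ^ ℓ with hm
  have hsumQ : ∑ v ∈ Q, ((idealsUpTo K (m / absNorm v.asIdeal)).card : ℝ) ≤ κ / 4 * m := by
    calc ∑ v ∈ Q, ((idealsUpTo K (m / absNorm v.asIdeal)).card : ℝ)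
        ≤ ∑ v ∈ Q, C * m * (1 / (absNorm v.asIdeal : ℝ)) := by
          refine Finset.sum_le_sum fun v _ ↦ (hC _).trans ?_
          rw [mul_assoc, mul_one_div]
          gcongr
          exact Nat.cast_div_le
      _ = C * m * ∑ v ∈ Q, 1 / (absNorm v.asIdeal : ℝ) := by rw [Finset.mul_sum]
      _ ≤ C * m * (κ / (4 * C)) := by
          gcongr
          exact (le_abs_self _).trans (hT Q hQT).le
      _ = κ / 4 * m := by field_simp
  have hcard' : ((idealsUpTo K m).card : ℝ) ≤ ((ℓ + 1 : ℕ) : ℝ) ^ T.card + κ / 4 * m := by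
    refine le_trans ?_ (add_le_add_right hsumQ _)
    exact_mod_cast hcard
  have hm2 : (2 : ℝ) ^ (ℓ + 1) = 2 * m := by rw [hm]; push_cast; ring
  rw [lt_div_iff₀ (by positivity)] at hlarge
  rw [div_lt_iff₀ (by positivity), hm2] at hlog
  linarith

end PrimeIdeals

/-! ### Prime ideals of degree one -/

section DegreeOnePrimes

open NumberField IsDedekindDomain Ideal

variable {K : Type*} [Field K] [NumberField K]

/-- The characteristic of the residue field of a prime ideal, encoded as the least prime factor of
its norm, which is a prime power. -/
noncomputable def residueChar (v : HeightOneSpectrum (𝓞 K)) : ℕ := (absNorm v.asIdeal).minFac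

lemma residueChar_prime (v : HeightOneSpectrum (𝓞 K)) : (residueChar v).Prime :=
  Nat.minFac_prime (by have := two_le_absNorm v; omega)

lemma exists_absNorm_eq_residueChar_pow (v : HeightOneSpectrum (𝓞 K)) :
    ∃ n, 0 < n ∧ absNorm v.asIdeal = residueChar v ^ n := by
  have := v.isMaximal
  obtain ⟨p, n, hn, -, hp, hnorm⟩ := exists_prime_and_absNorm_eq_pow v.asIdeal
  exact ⟨n, hn, by rw [residueChar, hnorm, hp.pow_minFac hn.ne']⟩

lemma residueChar_mem (v : HeightOneSpectrum (𝓞 K)) : (residueChar v : 𝓞 K) ∈ v.asIdeal := by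
  obtain ⟨n, -, hnorm⟩ := exists_absNorm_eq_residueChar_pow v
  refine v.isPrime.mem_of_pow_mem n ?_
  rw [← Nat.cast_pow, ← hnorm]
  exact absNorm_mem _

lemma absNorm_eq_residueChar_or_sq_le (v : HeightOneSpectrum (𝓞 K)) :
    absNorm v.asIdeal = residueChar v ∨ residueChar v ^ 2 ≤ absNorm v.asIdeal := by
  obtain ⟨n, hn, hnorm⟩ := exists_absNorm_eq_residueChar_pow v
  rw [hnorm]
  rcases (show 1 ≤ n from hn).eq_or_lt with rfl | hn
  · exact Or.inl (pow_one _)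
  · exact Or.inr (Nat.pow_le_pow_right (residueChar_prime v).pos hn)

lemma card_filter_residueChar_le (u : Finset (HeightOneSpectrum (𝓞 K))) (p : ℕ) :
    {v ∈ u | residueChar v = p}.card ≤ Module.finrank ℤ (𝓞 K) := by
  classical
  set w := {v ∈ u | residueChar v = p}
  have hw {v : HeightOneSpectrum (𝓞 K)} (hv : v ∈ w) : residueChar v = p :=
    (Finset.mem_filter.1 hv).2
  rcases w.eq_empty_or_nonempty with h | ⟨v₀, hv₀⟩
  · simp [h]
  have hp : p.Prime := hw hv₀ ▸ residueChar_prime v₀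
  have hinj : Function.Injective fun v : HeightOneSpectrum (𝓞 K) ↦ v.asIdeal :=
    fun _ _ h ↦ HeightOneSpectrum.ext h
  have hdvd : ∏ I ∈ w.image fun v ↦ v.asIdeal, I ∣ span {(p : 𝓞 K)} := by
    refine Finset.prod_primes_dvd _ (Finset.forall_mem_image.2 fun v _ ↦ v.prime)
      (Finset.forall_mem_image.2 fun v hv ↦ ?_)
    rw [dvd_span_singleton, ← hw hv]
    exact residueChar_mem v
  have hnorm := map_dvd absNorm hdvd
  rw [absNorm_span_natCast, map_prod, Finset.prod_image hinj.injOn] at hnorm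
  have hle : p ^ w.card ≤ ∏ v ∈ w, absNorm v.asIdeal := by
    rw [← Finset.prod_const]
    refine Finset.prod_le_prod' fun v hv ↦ ?_
    obtain ⟨n, hn, hnorm⟩ := exists_absNorm_eq_residueChar_pow v
    rw [hnorm, hw hv]
    exact Nat.le_self_pow hn.ne' p
  exact (Nat.pow_le_pow_iff_right hp.one_lt).1
    (hle.trans (Nat.le_of_dvd (pow_pos hp.pos _) hnorm))

lemma summable_comp_residueChar {w : ℕ → ℝ} (hw0 : ∀ p, 0 ≤ w p) (hw : Summable w) :
    Summable fun v : HeightOneSpectrum (𝓞 K) ↦ w (residueChar v) := by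
  refine summable_of_sum_le (fun v ↦ hw0 _) (c := Module.finrank ℤ (𝓞 K) * ∑' p, w p) fun u ↦ ?_
  calc ∑ v ∈ u, w (residueChar v)
    _ = ∑ p ∈ u.image residueChar, {v ∈ u | residueChar v = p}.card • w p :=
        Finset.sum_comp w residueChar
    _ ≤ ∑ p ∈ u.image residueChar, Module.finrank ℤ (𝓞 K) * w p := by
        refine Finset.sum_le_sum fun p _ ↦ ?_
        rw [nsmul_eq_mul]
        exact mul_le_mul_of_nonneg_right (by exact_mod_cast card_filter_residueChar_le u p) (hw0 p)
    _ ≤ Module.finrank ℤ (𝓞 K) * ∑' p, w p := by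
        rw [← Finset.mul_sum]
        exact mul_le_mul_of_nonneg_left (hw.sum_le_tsum _ fun p _ ↦ hw0 p) (by positivity)

variable (K) in
/-- Only primes of degree one contribute to the divergence of `∑ 1 / absNorm v`. -/
theorem exists_primes_eq_absNorm (N : ℕ) (x : ℝ) : ∃ P : Finset ℕ,
    (∀ p ∈ P, p.Prime ∧ N < p ∧ ∃ I : Ideal (𝓞 K), absNorm I = p) ∧ x ≤ ∑ p ∈ P, 1 / (p : ℝ) := by
  classical
  by_contra! hcon
  let S : Set ℕ := {p | p.Prime ∧ N < p ∧ ∃ I : Ideal (𝓞 K), absNorm I = p}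
  let w₁ : ℕ → ℝ := S.indicator fun p ↦ 1 / (p : ℝ)
  let w₂ : ℕ → ℝ := fun p ↦ 1 / (p : ℝ) ^ 2
  let w₃ : ℕ → ℝ := (Set.Iic N).indicator 1
  have hw₁ (p : ℕ) : 0 ≤ w₁ p := Set.indicator_nonneg (fun _ _ ↦ by positivity) p
  have hw₂ (p : ℕ) : 0 ≤ w₂ p := by positivity
  have hw₃ (p : ℕ) : 0 ≤ w₃ p := Set.indicator_nonneg (fun _ _ ↦ zero_le_one) p
  have hsum₁ : Summable w₁ := by
    refine summable_of_sum_le hw₁ (c := x) fun P ↦ ?_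
    rw [Finset.sum_indicator_eq_sum_filter]
    exact (hcon _ fun p hp ↦ (Finset.mem_filter.1 hp).2).le
  have hsum₂ : Summable w₂ := Real.summable_one_div_nat_pow.2 one_lt_two
  have hsum₃ : Summable w₃ :=
    summable_of_hasFiniteSupport ((Set.finite_Iic N).subset Set.support_indicator_subset)
  refine not_summable_one_div_absNorm K ((summable_comp_residueChar
    (fun p ↦ add_nonneg (add_nonneg (hw₁ p) (hw₂ p)) (hw₃ p))
    ((hsum₁.add hsum₂).add hsum₃)).of_nonneg_of_le (fun v ↦ by positivity) fun v ↦ ?_)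
  have hpos : (0 : ℝ) < residueChar v := by exact_mod_cast (residueChar_prime v).pos
  have h₁ := hw₁ (residueChar v)
  have h₂ := hw₂ (residueChar v)
  have h₃ := hw₃ (residueChar v)
  rcases absNorm_eq_residueChar_or_sq_le v with h | h
  · rw [h]
    by_cases hN : residueChar v ≤ N
    · have hw : w₃ (residueChar v) = 1 := Set.indicator_of_mem (Set.mem_Iic.2 hN) _
      have hle : 1 / (residueChar v : ℝ) ≤ 1 :=
        (div_le_one hpos).2 (by exact_mod_cast (residueChar_prime v).one_le)
      linarith
    · have hw : w₁ (residueChar v) = 1 / (residueChar v : ℝ) :=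
        Set.indicator_of_mem (s := S) ⟨residueChar_prime v, not_le.1 hN, _, h⟩ _
      linarith
  · have hw : 1 / (absNorm v.asIdeal : ℝ) ≤ w₂ (residueChar v) :=
      one_div_le_one_div_of_le (by positivity) (by exact_mod_cast h)
    linarith

end DegreeOnePrimes

/-! ### Embeddings of number fields into the `p`-adic numbers -/

section PadicEmbeddings

open NumberField IntermediateField

variable {K : Type*} [Field K]

lemma exists_isIntegral_intCast_mul [NumberField K] (x : K) :
    ∃ d : ℤ, d ≠ 0 ∧ IsIntegral ℤ ((d : K) * x) := by
  obtain ⟨d, hd⟩ := IsIntegral.exists_multiple_integral_of_isLocalization (nonZeroDivisors ℤ)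
    (Rₘ := ℚ) x (Algebra.IsIntegral.isIntegral x)
  rw [Submonoid.smul_def, zsmul_eq_mul] at hd
  exact ⟨d, nonZeroDivisors.coe_ne_zero d, hd⟩

lemma norm_le_one_of_isIntegral {p : ℕ} [Fact p.Prime] {x : ℚ_[p]} (hx : IsIntegral ℤ x) :
    ‖x‖ ≤ 1 := by
  obtain ⟨y, rfl⟩ := IsIntegrallyClosed.isIntegral_iff.1 (hx.tower_top (A := ℤ_[p]))
  exact y.2

lemma norm_intCast_eq_one_of_natAbs_lt {p : ℕ} [Fact p.Prime] {d : ℤ} (hd : d ≠ 0)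
    (hdp : d.natAbs < p) : ‖(d : ℚ_[p])‖ = 1 := by
  rw [Padic.norm_intCast_eq_one_iff, isCoprime_comm,
    (Nat.prime_iff_prime_int.1 Fact.out).coprime_iff_not_dvd, Int.natCast_dvd]
  exact Nat.not_dvd_of_pos_of_lt (Int.natAbs_pos.2 hd) hdp

lemma eventually_forall_norm_le_one [NumberField K] (x : K) :
    ∀ᶠ p : ℕ in atTop, ∀ [Fact p.Prime] (φ : K →+* ℚ_[p]), ‖φ x‖ ≤ 1 := by
  obtain ⟨d, hd, hx⟩ := exists_isIntegral_intCast_mul x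
  filter_upwards [eventually_gt_atTop d.natAbs] with p hp _ φ
  have hdx := norm_le_one_of_isIntegral (hx.map φ.toIntAlgHom)
  simpa [norm_intCast_eq_one_of_natAbs_lt hd hp] using hdx

lemma eventually_forall_norm_eq_one [NumberField K] {x : K} (hx : x ≠ 0) :
    ∀ᶠ p : ℕ in atTop, ∀ [Fact p.Prime] (φ : K →+* ℚ_[p]), ‖φ x‖ = 1 := by
  filter_upwards [eventually_forall_norm_le_one x, eventually_forall_norm_le_one x⁻¹]
    with p hle hinv _ φ
  specialize hinv φ
  rw [map_inv₀, norm_inv, inv_le_one₀ (norm_pos_iff.2 ((map_ne_zero φ).2 hx))] at hinv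
  exact (hle φ).antisymm hinv

lemma exists_mul_add_mul_derivative_eq_C {f : ℤ[X]}
    (hf : (f.map (algebraMap ℤ ℚ)).Separable) :
    ∃ (N : ℤ) (u v : ℤ[X]), N ≠ 0 ∧ u * f + v * derivative f = C N := by
  obtain ⟨a, b, hab⟩ := hf
  obtain ⟨m, hm, hma⟩ := IsLocalization.integerNormalization_spec (nonZeroDivisors ℤ) a
  obtain ⟨n, hn, hnb⟩ := IsLocalization.integerNormalization_spec (nonZeroDivisors ℤ) b
  refine ⟨m * n, C n * IsLocalization.integerNormalization (nonZeroDivisors ℤ) a,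
    C m * IsLocalization.integerNormalization (nonZeroDivisors ℤ) b,
    mul_ne_zero (nonZeroDivisors.ne_zero hm) (nonZeroDivisors.ne_zero hn),
    Polynomial.map_injective (algebraMap ℤ ℚ) (algebraMap ℤ ℚ).injective_int ?_⟩
  rw [derivative_map] at hab
  simp only [Polynomial.map_add, Polynomial.map_mul, hma, hnb, zsmul_eq_mul, eq_intCast, map_mul,
    Polynomial.map_intCast]
  linear_combination (m : ℚ[X]) * n * hab

lemma exists_aeval_padicInt_eq_zero {p : ℕ} [Fact p.Prime] {f : ℤ[X]} {x : ZMod p}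
    (hf : aeval x f = 0) (hf' : aeval x (derivative f) ≠ 0) : ∃ y : ℤ_[p], aeval y f = 0 := by
  obtain ⟨y, rfl⟩ := ZMod.ringHom_surjective (PadicInt.toZMod (p := p)) x
  have haeval (g : ℤ[X]) :
      aeval (PadicInt.toZMod y) g = 0 ↔ ‖aeval y g‖ < 1 := by
    rw [← PadicInt.mem_nonunits, ← IsLocalRing.mem_maximalIdeal, ← PadicInt.ker_toZMod,
      RingHom.mem_ker, ← RingHom.toIntAlgHom_apply, aeval_algHom_apply, RingHom.toIntAlgHom_apply]
  have hnorm : ‖aeval y (derivative f)‖ = 1 :=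
    (PadicInt.norm_le_one _).eq_of_not_lt (mt (haeval _).2 hf')
  obtain ⟨z, hz, -⟩ := hensels_lemma (F := f) (a := y) (by
    rw [hnorm, one_pow]
    exact (haeval f).1 hf)
  exact ⟨z, hz⟩

lemma nonempty_ringHom_zmod [NumberField K] {p : ℕ} (hp : p.Prime) {I : Ideal (𝓞 K)}
    (hI : Ideal.absNorm I = p) : Nonempty (𝓞 K →+* ZMod p) := by
  rw [Ideal.absNorm_apply, Submodule.cardQuot_apply] at hI
  have : Finite (𝓞 K ⧸ I) := Nat.finite_of_card_ne_zero (hI.trans_ne hp.ne_zero)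
  have := Fintype.ofFinite (𝓞 K ⧸ I)
  rw [Nat.card_eq_fintype_card] at hI
  exact ⟨(ZMod.ringEquivOfPrime _ hp hI).symm.toRingHom.comp (Ideal.Quotient.mk I)⟩

variable (K) in
lemma exists_ringOfIntegers_adjoin_eq_top [NumberField K] :
    ∃ θ : 𝓞 K, ℚ⟮(θ : K)⟯ = ⊤ := by
  obtain ⟨α, hα⟩ := Field.exists_primitive_element ℚ K
  obtain ⟨d, hd, hint⟩ := exists_isIntegral_intCast_mul α
  obtain ⟨θ, hθ : (θ : K) = d * α⟩ := (IsIntegralClosure.isIntegral_iff (A := 𝓞 K)).1 hint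
  refine ⟨θ, top_le_iff.1 (hα ▸ adjoin_simple_le_iff.2 ?_)⟩
  rw [hθ]
  have hmem := mul_mem (inv_mem (intCast_mem ℚ⟮(d : K) * α⟯ d)) (mem_adjoin_simple_self ℚ (d * α))
  rwa [inv_mul_cancel_left₀ (Int.cast_ne_zero.2 hd)] at hmem

lemma nonempty_ringHom_of_aeval_minpoly_eq_zero {F L : Type*} [Field F] [Algebra F K] [Field L]
    [Algebra F L] {θ : K} (hint : IsIntegral F θ) (hθ : F⟮θ⟯ = ⊤) {y : L}
    (hy : aeval y (minpoly F θ) = 0) : Nonempty (K →+* L) := by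
  have hroot : y ∈ (minpoly F θ).aroots L := mem_aroots.2 ⟨minpoly.ne_zero hint, hy⟩
  exact ⟨((algHomAdjoinIntegralEquiv F hint).symm ⟨y, hroot⟩).toRingHom.comp
    ((equivOfEq hθ).trans topEquiv).symm.toAlgHom.toRingHom⟩

variable (K) in
/-- Reduction modulo an ideal of norm `p` maps an integral primitive element to a root modulo `p` of
its minimal polynomial, which is simple when `p` is large and so lifts to `ℤ_[p]`. -/
theorem eventually_nonempty_ringHom_padic [NumberField K] :
    ∀ᶠ p : ℕ in atTop, ∀ [Fact p.Prime], (∃ I : Ideal (𝓞 K), Ideal.absNorm I = p) →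
      Nonempty (K →+* ℚ_[p]) := by
  obtain ⟨θ, hθ⟩ := exists_ringOfIntegers_adjoin_eq_top K
  let f := minpoly ℤ θ
  have hminpoly : minpoly ℚ (θ : K) = f.map (algebraMap ℤ ℚ) := by
    rw [minpoly.isIntegrallyClosed_eq_field_fractions' ℚ θ.isIntegral_coe,
      RingOfIntegers.minpoly_coe]
  have hint : IsIntegral ℚ (θ : K) := θ.isIntegral_coe.tower_top
  obtain ⟨N, u, v, hN, huv⟩ := exists_mul_add_mul_derivative_eq_C (f := f)
    (hminpoly ▸ (minpoly.irreducible hint).separable)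
  filter_upwards [eventually_gt_atTop N.natAbs] with p hp hprime ⟨I, hI⟩
  obtain ⟨ψ⟩ := nonempty_ringHom_zmod hprime.out hI
  have hroot : aeval (ψ θ) f = 0 := by
    rw [← ψ.toIntAlgHom_apply, aeval_algHom_apply, minpoly.aeval, map_zero]
  have hsimple : aeval (ψ θ) (derivative f) ≠ 0 := fun h ↦ by
    have hNp := congrArg (aeval (ψ θ)) huv
    rw [map_add, map_mul, map_mul, hroot, h, mul_zero, mul_zero, add_zero, aeval_C, eq_intCast,
      eq_comm, ZMod.intCast_zmod_eq_zero_iff_dvd, Int.natCast_dvd] at hNp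
    exact Nat.not_dvd_of_pos_of_lt (Int.natAbs_pos.2 hN) hp hNp
  obtain ⟨y, hy⟩ := exists_aeval_padicInt_eq_zero hroot hsimple
  refine nonempty_ringHom_of_aeval_minpoly_eq_zero hint hθ (y := algebraMap ℤ_[p] ℚ_[p] y) ?_
  rw [hminpoly, aeval_map_algebraMap, aeval_algebraMap_apply, hy, map_zero]

variable (K) in
theorem exists_primes_ringHom_padic [NumberField K] (N : ℕ) (x : ℝ) :
    ∃ P : Finset ℕ, (∀ p ∈ P, N < p ∧ ∃ _ : Fact p.Prime, Nonempty (K →+* ℚ_[p])) ∧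
      x ≤ ∑ p ∈ P, 1 / (p : ℝ) := by
  obtain ⟨N', hN'⟩ := eventually_atTop.1 (eventually_nonempty_ringHom_padic K)
  obtain ⟨P, hP, hx⟩ := exists_primes_eq_absNorm K (max N N') x
  refine ⟨P, fun p hp ↦ ?_, hx⟩
  obtain ⟨hprime, hlt, hnorm⟩ := hP p hp
  have : Fact p.Prime := ⟨hprime⟩
  exact ⟨by omega, this, hN' p (by omega) hnorm⟩

variable (K) in
lemma frequently_nonempty_ringHom_padic [NumberField K] :
    ∃ᶠ p : ℕ in atTop, ∃ _ : Fact p.Prime, Nonempty (K →+* ℚ_[p]) := by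
  refine frequently_atTop'.2 fun N ↦ ?_
  obtain ⟨P, hP, hx⟩ := exists_primes_ringHom_padic K N 1
  obtain ⟨p, hp⟩ : P.Nonempty := Finset.nonempty_of_sum_ne_zero (zero_lt_one.trans_le hx).ne'
  exact ⟨p, hP p hp⟩

end PadicEmbeddings

/-! ### Cancelling polynomial factors -/

section AlmostIntegral

variable {K : Type*} [Field K]

variable (K) in
/-- The subring of sequences all of whose terms are, for every sufficiently large prime `p`,
`p`-integral under all embeddings of `K` into `ℚ_[p]`. -/
def almostIntegral : Subring (ℕ → K) where
  carrier := {y | ∀ᶠ p : ℕ in atTop, ∀ [Fact p.Prime] (φ : K →+* ℚ_[p]) (n : ℕ), ‖φ (y n)‖ ≤ 1}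
  zero_mem' := .of_forall fun p _ φ n ↦ by simp
  one_mem' := .of_forall fun p _ φ n ↦ by simp
  neg_mem' hy := hy.mono fun p hy _ φ n ↦ by simpa using hy φ n
  add_mem' hy hz := by
    filter_upwards [hy, hz] with p hy hz _ φ n
    rw [Pi.add_apply, map_add]
    exact (Padic.nonarchimedean _ _).trans (max_le (hy φ n) (hz φ n))
  mul_mem' hy hz := by
    filter_upwards [hy, hz] with p hy hz _ φ n
    rw [Pi.mul_apply, map_mul, norm_mul]
    exact mul_le_one₀ (hy φ n) (norm_nonneg _) (hz φ n)

lemma mem_almostIntegral {y : ℕ → K} : y ∈ almostIntegral K ↔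
    ∀ᶠ p : ℕ in atTop, ∀ [Fact p.Prime] (φ : K →+* ℚ_[p]) (n : ℕ), ‖φ (y n)‖ ≤ 1 :=
  Iff.rfl

lemma intCast_mem_almostIntegral (c : ℕ → ℤ) : (fun n ↦ (c n : K)) ∈ almostIntegral K :=
  mem_almostIntegral.2 <| .of_forall fun p _ φ n ↦ by simpa using Padic.norm_int_le_one (c n)

lemma algebraMap_mem_almostIntegral {L : Type*} [Field L] [Algebra K L] {y : ℕ → K}
    (hy : y ∈ almostIntegral K) : (fun n ↦ algebraMap K L (y n)) ∈ almostIntegral L := by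
  filter_upwards [hy] with p hy _ φ n
  exact hy (φ.comp (algebraMap K L)) n

variable [NumberField K]

lemma const_mem_almostIntegral (x : K) : Function.const ℕ x ∈ almostIntegral K :=
  (eventually_forall_norm_le_one x).mono fun _ hx _ φ _ ↦ hx φ

lemma pow_mem_almostIntegral (x : K) : (fun n : ℕ ↦ x ^ n) ∈ almostIntegral K := by
  filter_upwards [eventually_forall_norm_le_one x] with p hx _ φ n
  rw [map_pow, norm_pow]
  exact pow_le_one₀ (norm_nonneg _) (hx φ)

lemma eval_mem_almostIntegral (P : K[X]) : (fun n : ℕ ↦ P.eval (n : K)) ∈ almostIntegral K := by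
  have hsum : (fun n : ℕ ↦ P.eval (n : K)) =
      ∑ i ∈ Finset.range (P.natDegree + 1),
        Function.const ℕ (P.coeff i) * (fun n : ℕ ↦ (n : K)) ^ i := by
    funext n
    simp [eval_eq_sum_range]
  rw [hsum]
  exact sum_mem fun i _ ↦ mul_mem (const_mem_almostIntegral _) <|
    pow_mem (by simpa using intCast_mem_almostIntegral (K := K) fun n : ℕ ↦ n) i

end AlmostIntegral

section LinearFactors

variable {ι : Type*} {s : Finset ι}

lemma exists_ge_natCast_eq_and_pow_eq {p : ℕ} [Fact p.Prime] (r m : ℕ) (z : ZMod p) :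
    ∃ n ≥ m, (n : ZMod p) = z ∧ ∀ x : ZMod p, x ≠ 0 → x ^ n = x ^ r := by
  have hp : 1 < p := (Fact.out : p.Prime).one_lt
  refine ⟨r * p + (p - 1) * ((-z).val + p * m), ?_, ?_, fun x hx ↦ ?_⟩
  · have hm : m ≤ (p - 1) * (p * m) := by
      rw [← mul_assoc]
      exact Nat.le_mul_of_pos_left m (Nat.mul_pos (by omega) (by omega))
    rw [mul_add]
    omega
  · simp [Nat.cast_sub hp.le]
  · rw [pow_add, mul_comm r, pow_mul, pow_mul, ZMod.pow_card, ZMod.pow_card_sub_one_eq_one hx,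
      one_pow, mul_one]

lemma norm_sum_mul_pow_lt_one {p : ℕ} [Fact p.Prime] {ξ : ℤ_[p]} {e β : ι → ℤ_[p]}
    (hβ : ∀ i ∈ s, ‖β i‖ = 1)
    (h : ∀ᶠ n : ℕ in atTop, (n : ℤ_[p]) - ξ ∣ ∑ i ∈ s, e i * β i ^ n) (r : ℕ) :
    ‖∑ i ∈ s, e i * β i ^ r‖ < 1 := by
  have htoZMod (x : ℤ_[p]) : PadicInt.toZMod x = 0 ↔ ‖x‖ < 1 := by
    rw [← RingHom.mem_ker, PadicInt.ker_toZMod, IsLocalRing.mem_maximalIdeal,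
      PadicInt.mem_nonunits]
  obtain ⟨m, hm⟩ := eventually_atTop.1 h
  obtain ⟨n, hmn, hn, hpow⟩ := exists_ge_natCast_eq_and_pow_eq r m (PadicInt.toZMod ξ)
  obtain ⟨y, hy⟩ := hm n hmn
  have hzero := congrArg PadicInt.toZMod hy
  simp only [map_sum, map_mul, map_pow, map_sub, map_natCast, hn, sub_self, zero_mul] at hzero
  rw [← htoZMod, map_sum, ← hzero]
  refine Finset.sum_congr rfl fun i hi ↦ ?_
  rw [map_mul, map_pow, hpow _ (mt (htoZMod _).1 (hβ i hi).not_lt)]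

variable {K : Type*} [Field K] [NumberField K] {β : ι → K}

/-- At a place of degree one over `p`, an index that is congruent to `ξ` modulo `p` and to `r`
modulo `p - 1` shows that the sum with exponent `r` vanishes modulo `p`. -/
lemma sum_mul_pow_eq_zero_of_sub_mul_eq (hβ : ∀ i ∈ s, β i ≠ 0) {e : ι → K} {ξ : K} {y : ℕ → K}
    (hy : y ∈ almostIntegral K)
    (h : ∀ᶠ n : ℕ in atTop, ((n : K) - ξ) * y n = ∑ i ∈ s, e i * β i ^ n) (r : ℕ) :
    ∑ i ∈ s, e i * β i ^ r = 0 := by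
  by_contra hr
  have hev : ∀ᶠ p : ℕ in atTop, ∀ [Fact p.Prime] (φ : K →+* ℚ_[p]),
      ‖φ (∑ i ∈ s, e i * β i ^ r)‖ = 1 ∧ ‖φ ξ‖ ≤ 1 ∧ (∀ i ∈ s, ‖φ (e i)‖ ≤ 1) ∧
        (∀ i ∈ s, ‖φ (β i)‖ = 1) ∧ ∀ n, ‖φ (y n)‖ ≤ 1 := by
    filter_upwards [eventually_forall_norm_eq_one hr, eventually_forall_norm_le_one ξ,
      (eventually_all_finset s).2 fun i _ ↦ eventually_forall_norm_le_one (e i),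
      (eventually_all_finset s).2 fun i hi ↦ eventually_forall_norm_eq_one (hβ i hi), hy]
      with p hr hξ he hβ hy _ φ
    exact ⟨hr φ, hξ φ, fun i hi ↦ he i hi φ, fun i hi ↦ hβ i hi φ, hy φ⟩
  obtain ⟨p, ⟨_, ⟨φ⟩⟩, hp⟩ := ((frequently_nonempty_ringHom_padic K).and_eventually hev).exists
  obtain ⟨hr, hξ, he, hβ, hy⟩ := hp φ
  let ξ' : ℤ_[p] := ⟨φ ξ, hξ⟩
  let e' (i : s) : ℤ_[p] := ⟨φ (e i), he i i.2⟩
  let β' (i : s) : ℤ_[p] := ⟨φ (β i), (hβ i i.2).le⟩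
  have hcoe (n : ℕ) : ((∑ i ∈ s.attach, e' i * β' i ^ n : ℤ_[p]) : ℚ_[p]) =
      φ (∑ i ∈ s, e i * β i ^ n) := by
    rw [PadicInt.coe_sum, map_sum, ← Finset.sum_attach s]
    exact Finset.sum_congr rfl fun i _ ↦ by rw [map_mul, map_pow]; push_cast; rfl
  refine (norm_sum_mul_pow_lt_one (s := s.attach) (ξ := ξ') (e := e') (β := β')
    (fun i _ ↦ hβ i i.2) ?_ r).ne ?_
  · filter_upwards [h] with n hn
    refine ⟨⟨φ (y n), hy n⟩, Subtype.coe_injective ?_⟩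
    beta_reduce
    rw [hcoe, ← hn, map_mul, map_sub, map_natCast]
    rfl
  · rw [PadicInt.norm_def, hcoe, hr]

lemma exists_eventually_eq_of_sub_mul_eq (hβ : ∀ i ∈ s, β i ≠ 0) {P : ι → K[X]} {ξ : K}
    {y : ℕ → K} (hy : y ∈ almostIntegral K)
    (h : ∀ᶠ n : ℕ in atTop, ((n : K) - ξ) * y n = ∑ i ∈ s, (P i).eval (n : K) * β i ^ n) :
    ∃ Q : ι → K[X], ∀ᶠ n : ℕ in atTop, y n = ∑ i ∈ s, (Q i).eval (n : K) * β i ^ n := by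
  let Q (i : ι) : K[X] := P i /ₘ (X - C ξ)
  let z : ℕ → K := y - ∑ i ∈ s, (fun n : ℕ ↦ (Q i).eval (n : K)) * fun n : ℕ ↦ β i ^ n
  have hz_apply (n : ℕ) : z n = y n - ∑ i ∈ s, (Q i).eval (n : K) * β i ^ n := by simp [z]
  have hz : z ∈ almostIntegral K := sub_mem hy <| sum_mem fun i _ ↦
    mul_mem (eval_mem_almostIntegral _) (pow_mem_almostIntegral _)
  have hzeq : ∀ᶠ n : ℕ in atTop, ((n : K) - ξ) * z n = ∑ i ∈ s, (P i).eval ξ * β i ^ n := by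
    filter_upwards [h] with n hn
    rw [hz_apply, mul_sub, hn, Finset.mul_sum, ← Finset.sum_sub_distrib]
    refine Finset.sum_congr rfl fun i _ ↦ ?_
    have hP := congrArg (eval (n : K)) (modByMonic_add_div (P i) (X - C ξ))
    simp only [modByMonic_X_sub_C_eq_C_eval, eval_add, eval_mul, eval_sub, eval_X, eval_C] at hP
    rw [← hP]
    ring
  have hne : ∀ᶠ n : ℕ in atTop, (n : K) ≠ ξ := by
    rw [← Nat.cofinite_eq_atTop]
    exact Nat.cast_injective.tendsto_cofinite.eventually
      (Set.finite_singleton ξ).eventually_cofinite_notMem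
  refine ⟨Q, ?_⟩
  filter_upwards [hzeq, hne] with n hn hne
  rw [sum_mul_pow_eq_zero_of_sub_mul_eq hβ hz hzeq, mul_eq_zero] at hn
  rw [← sub_eq_zero, ← hz_apply, hn.resolve_left (sub_ne_zero.2 hne)]

lemma exists_eventually_eq_of_prod_mul_eq (hβ : ∀ i ∈ s, β i ≠ 0) (S : Multiset K)
    {P : ι → K[X]} {y : ℕ → K} (hy : y ∈ almostIntegral K)
    (h : ∀ᶠ n : ℕ in atTop, (S.map fun ξ ↦ X - C ξ).prod.eval (n : K) * y n =
      ∑ i ∈ s, (P i).eval (n : K) * β i ^ n) :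
    ∃ Q : ι → K[X], ∀ᶠ n : ℕ in atTop, y n = ∑ i ∈ s, (Q i).eval (n : K) * β i ^ n := by
  induction S using Multiset.induction_on generalizing P with
  | empty => exact ⟨P, by simpa using h⟩
  | cons ξ S ih =>
    obtain ⟨Q, hQ⟩ := exists_eventually_eq_of_sub_mul_eq hβ (ξ := ξ)
      (mul_mem (eval_mem_almostIntegral (S.map fun ξ ↦ X - C ξ).prod) hy) <| h.mono fun n hn ↦ by
        rw [Multiset.map_cons, Multiset.prod_cons, eval_mul, eval_sub, eval_X, eval_C, mul_assoc]
          at hn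
        exact hn
    exact ih hQ

theorem isRecurrent_of_eval_mul_eq (hβ : ∀ i ∈ s, β i ≠ 0) {H : K[X]} (hH : H ≠ 0)
    {P : ι → K[X]} {y : ℕ → K} (hy : y ∈ almostIntegral K)
    (h : ∀ᶠ n : ℕ in atTop, H.eval (n : K) * y n = ∑ i ∈ s, (P i).eval (n : K) * β i ^ n) :
    IsRecurrent y := by
  let L := H.SplittingField
  have : NumberField L := NumberField.of_module_finite K L
  let j := algebraMap K L
  have hlead : j H.leadingCoeff ≠ 0 := by simpa [j] using hH
  have hL : ∀ᶠ n : ℕ in atTop, ((H.map j).roots.map fun ξ ↦ X - C ξ).prod.eval (n : L) * j (y n) =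
      ∑ i ∈ s, (C (j H.leadingCoeff)⁻¹ * (P i).map j).eval (n : L) * j (β i) ^ n := by
    filter_upwards [h] with n hn
    have hHn : j (H.eval (n : K)) = j H.leadingCoeff *
        ((H.map j).roots.map fun ξ ↦ X - C ξ).prod.eval (n : L) := by
      conv_lhs => rw [← eval_natCast_map, (SplittingField.splits H).eq_prod_roots]
      rw [eval_mul, eval_C, leadingCoeff_map]
    apply mul_left_cancel₀ hlead
    rw [← mul_assoc, ← hHn, ← map_mul, hn, map_sum, Finset.mul_sum]
    refine Finset.sum_congr rfl fun i _ ↦ ?_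
    rw [eval_mul, eval_C, eval_natCast_map, map_mul, map_pow, ← mul_assoc,
      mul_inv_cancel_left₀ hlead]
  obtain ⟨Q, hQ⟩ := exists_eventually_eq_of_prod_mul_eq (fun i hi ↦ (map_ne_zero j).2 (hβ i hi)) _
    (algebraMap_mem_almostIntegral hy) hL
  have hsum : IsRecurrent (∑ i ∈ s, fun n : ℕ ↦ (Q i).eval (n : L) * j (β i) ^ n) :=
    .sum fun i _ ↦ isRecurrent_eval_mul_pow (Q i) (j (β i))
  refine (hsum.congr ?_).of_algebraMap (E := L)
  filter_upwards [hQ] with n hn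
  rw [hn, Finset.sum_apply]

end LinearFactors

/-! ### Integer quotients of exponential polynomials -/

section IntegerQuotients

variable {K ι : Type*} [Field K] [NumberField K] [Fintype ι] {γ : ι → K}
  {A B : MvPolynomial ι K[X]}

lemma MulIndep.eventually_forall_norm_eq_one (hγ : MulIndep γ) :
    ∀ᶠ p : ℕ in atTop, ∀ [Fact p.Prime] (φ : K →+* ℚ_[p]) (i : ι), ‖φ (γ i)‖ = 1 := by
  filter_upwards [eventually_all.2 fun i ↦
    HadamardQuotient.eventually_forall_norm_eq_one (hγ.ne_zero i)] with p hp _ φ i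
  exact hp i φ

lemma isRecurrent_of_eval_monomial_eq (hγ : MulIndep γ) {μ : ι →₀ ℕ} {H : K[X]} (hH : H ≠ 0)
    {y : ℕ → K} (hy : y ∈ almostIntegral K)
    (h : ∀ n, evalAt γ n A = y n * evalAt γ n (MvPolynomial.monomial μ H)) : IsRecurrent y := by
  refine isRecurrent_of_eval_mul_eq (s := A.support) (β := fun ν ↦ monom γ ν / monom γ μ)
    (P := fun ν ↦ A.coeff ν)
    (fun ν _ ↦ div_ne_zero (monom_ne_zero hγ.ne_zero ν) (monom_ne_zero hγ.ne_zero μ)) hH hy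
    (.of_forall fun n ↦ ?_)
  have hμ : monom γ μ ^ n ≠ 0 := pow_ne_zero _ (monom_ne_zero hγ.ne_zero μ)
  have hn := h n
  rw [evalAt_monomial, evalAt_eq_sum, ← mul_assoc, mul_comm (y n)] at hn
  simp only [div_pow, ← mul_div_assoc]
  rw [← Finset.sum_div, hn, mul_div_cancel_right₀ _ hμ]

lemma isRecurrent_of_evalAt_eq_mul_of_isRelPrime (hγ : MulIndep γ) (hAB : IsRelPrime A B)
    (hB : B ≠ 0) {c : ℕ → ℤ} (hc : ∀ n, evalAt γ n A = c n * evalAt γ n B) {M : ℕ} (hM : 1 ≤ M)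
    (hcM : ∀ n, |c n| ≤ (M : ℤ) ^ (n + 1)) : IsRecurrent fun n ↦ (c n : K) := by
  obtain ⟨N, hN⟩ := eventually_atTop.1 hγ.eventually_forall_norm_eq_one
  obtain ⟨k, hk⟩ := exists_diffOp_eq_zero hcM hM fun x ↦ by
    obtain ⟨P, hP, hx⟩ := exists_primes_ringHom_padic K (N + 5) x
    refine ⟨P, fun p hp ↦ ?_, hx⟩
    obtain ⟨hlt, hprime, ⟨φ⟩⟩ := hP p hp
    exact ⟨hprime.out,
      exists_hasDivisibleDifferences_of_evalAt (by omega) φ (hN p (by omega) φ) hγ hB hc⟩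
  obtain ⟨μ, H, rfl⟩ := exists_eq_monomial_of_diffOp_eq_zero hγ hAB hB hc hk
  exact isRecurrent_of_eval_monomial_eq hγ (by rintro rfl; simp at hB)
    (intCast_mem_almostIntegral c) hc

lemma MulIndep.eventually_evalAt_ne_zero (hγ : MulIndep γ) (hB : B ≠ 0) :
    ∀ᶠ n in atTop, evalAt γ n B ≠ 0 := by
  obtain ⟨p, ⟨_, ⟨φ⟩⟩, hφ, hp⟩ := ((frequently_nonempty_ringHom_padic K).and_eventually
    (hγ.eventually_forall_norm_eq_one.and (eventually_ge_atTop 5))).exists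
  exact HadamardQuotient.eventually_evalAt_ne_zero hp φ (hφ φ) hγ hB

/-- Beyond the zeros of `B`, a common factor of translates of `A` and `B` can be cancelled. -/
theorem isRecurrent_of_evalAt_eq_mul (hγ : MulIndep γ) (hB : B ≠ 0) {c : ℕ → ℤ}
    (hc : ∀ n, evalAt γ n A = c n * evalAt γ n B) {M : ℕ}
    (hcM : ∀ n, evalAt γ n B ≠ 0 → |c n| ≤ (M : ℤ) ^ (n + 1)) :
    IsRecurrent fun n ↦ (c n : K) := by
  obtain ⟨m, hm⟩ := eventually_atTop.1 (hγ.eventually_evalAt_ne_zero hB)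
  have htr (n : ℕ) (f : MvPolynomial ι K[X]) :
      evalAt γ n (translate γ m f) = evalAt γ (n + m) f :=
    evalAt_translate hγ.ne_zero (by push_cast; rfl) f
  have hBm (n : ℕ) : evalAt γ n (translate γ m B) ≠ 0 := htr n B ▸ hm _ (by omega)
  obtain ⟨A', B', G, hrel, hA, hB'⟩ := UniqueFactorizationMonoid.exists_reduced_factors'
    (translate γ m A) _ (translate_ne_zero hγ.ne_zero m hB)
  simp only [← hB', map_mul] at hBm
  refine IsRecurrent.of_comp_add (m := m) (isRecurrent_of_evalAt_eq_mul_of_isRelPrime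
    (c := fun n ↦ c (n + m)) (M := (M + 1) ^ (m + 1)) hγ hrel ?_ (fun n ↦ ?_)
    (Nat.one_le_pow _ _ (by omega)) fun n ↦ ?_)
  · rintro rfl
    simpa using hBm 0
  · apply mul_left_cancel₀ (left_ne_zero_of_mul (hBm n))
    rw [mul_left_comm, ← map_mul, ← map_mul, hA, hB', htr, htr, hc]
  · calc |c (n + m)| ≤ (M : ℤ) ^ (n + m + 1) := hcM _ (hm _ (by omega))
      _ ≤ ((M : ℤ) + 1) ^ (n + m + 1) := by gcongr; omega
      _ ≤ ((M : ℤ) + 1) ^ ((m + 1) * (n + 1)) :=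
        pow_le_pow_right₀ (by omega) (by nlinarith [Nat.zero_le (m * n)])
      _ = (((M + 1) ^ (m + 1) : ℕ) : ℤ) ^ (n + 1) := by push_cast; rw [pow_mul]

end IntegerQuotients

/-! ### Generators and growth -/

section Generators

lemma exists_maximal_linearIndepOn_smul_mem_span {R M ι : Type*} [CommRing R] [IsDomain R]
    [AddCommGroup M] [Module R M] [Finite ι] (v : ι → M) :
    ∃ (t : Finset ι) (a : R), a ≠ 0 ∧ LinearIndepOn R v t ∧
      ∀ i, a • v i ∈ Submodule.span R (v '' t) := by
  classical
  obtain ⟨_⟩ := nonempty_fintype ι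
  obtain ⟨I, hI, hmax⟩ := exists_maximal_linearIndepOn R v
  have hexists (i : ι) : ∃ a : R, a ≠ 0 ∧ a • v i ∈ Submodule.span R (v '' I) := by
    by_cases hi : i ∈ I
    · exact ⟨1, one_ne_zero, by simpa using Submodule.subset_span (Set.mem_image_of_mem v hi)⟩
    · exact hmax i hi
  choose a ha hav using hexists
  refine ⟨I.toFinset, ∏ i, a i, Finset.prod_ne_zero_iff.2 fun i _ ↦ ha i, by simpa using hI,
    fun i ↦ ?_⟩
  obtain ⟨k, hk⟩ := Finset.dvd_prod_of_mem a (Finset.mem_univ i)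
  rw [hk, mul_comm, mul_smul, Set.coe_toFinset]
  exact Submodule.smul_mem _ k (hav i)

variable {K : Type*} [Field K]

lemma mulIndep_of_linearIndependent {κ : Type*} [Fintype κ] {u : κ → Kˣ}
    (hu : LinearIndependent ℤ fun i ↦ Additive.ofMul (u i)) : MulIndep fun i ↦ (u i : K) where
  ne_zero i := (u i).ne_zero
  eq_zero_of_prod_zpow_eq_one e he := by
    have hone : ∏ i, u i ^ e i = 1 := Units.ext (by simpa using he)
    exact funext (Fintype.linearIndependent_iff.1 hu e
      (by simpa using congrArg Additive.ofMul hone))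

lemma exists_mulIndep_generators {s : Finset K} (hs : 0 ∉ s) :
    ∃ (D : ℕ) (t : Finset s), 0 < D ∧ MulIndep (fun i : t ↦ (i : K)) ∧
      ∀ β ∈ s, ∃ e : t → ℤ, β ^ D = ∏ i : t, (i : K) ^ e i := by
  let u (β : s) : Kˣ := Units.mk0 β (ne_of_mem_of_not_mem β.2 hs)
  obtain ⟨t, a, ha, ht, hspan⟩ :=
    exists_maximal_linearIndepOn_smul_mem_span (R := ℤ) fun β ↦ Additive.ofMul (u β)
  refine ⟨a.natAbs, t, Int.natAbs_pos.2 ha, mulIndep_of_linearIndependent ht, fun β hβ ↦ ?_⟩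
  have hmem : a.natAbs • Additive.ofMul (u ⟨β, hβ⟩) ∈
      Submodule.span ℤ (Set.range fun i : t ↦ Additive.ofMul (u i)) := by
    rw [← natCast_zsmul, Int.natCast_natAbs]
    have h := hspan ⟨β, hβ⟩
    rw [Set.image_eq_range] at h
    obtain ha | ha := abs_choice a
    · rwa [ha]
    · rw [ha, neg_smul]
      exact neg_mem h
  obtain ⟨e, he⟩ := (Submodule.mem_span_range_iff_exists_fun ℤ).1 hmem
  exact ⟨e, by simpa [u] using congrArg (fun x : Additive Kˣ ↦ (x.toMul : K)) he.symm⟩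

/-- Multiplying by `w ^ v` turns the negative exponents of the generators into natural numbers. -/
lemma exists_evalAt_eq {s : Finset K} (hs : 0 ∉ s) :
    ∃ (D : ℕ) (t : Finset s) (w : K), 0 < D ∧ MulIndep (fun i : t ↦ (i : K)) ∧
      ∀ (P : K → K[X]) (u : ℕ), ∃ A : MvPolynomial t K[X], ∀ v : ℕ,
        evalAt (fun i : t ↦ (i : K)) v A
          = w ^ v * ∑ β ∈ s, (P β).eval ((u + D * v : ℕ) : K) * β ^ (u + D * v) := by
  obtain ⟨D, t, hD, hγ, h⟩ := exists_mulIndep_generators hs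
  set γ : t → K := fun i ↦ i
  choose! e he using h
  obtain ⟨M, hM⟩ : ∃ M : ℕ, ∀ β ∈ s, ∀ i, 0 ≤ e β i + M := by
    obtain ⟨m, hm⟩ := (s.finite_toSet.biUnion fun β _ ↦ Set.finite_range (e β)).bddBelow
    refine ⟨m.natAbs, fun β hβ i ↦ ?_⟩
    have := hm (Set.mem_biUnion hβ (Set.mem_range_self i))
    omega
  let μ (β : K) : t →₀ ℕ := Finsupp.equivFunOnFinite.symm fun i ↦ (e β i + M).toNat
  have hμ (β) (hβ : β ∈ s) : monom γ (μ β) = (∏ i, γ i ^ M) * β ^ D := by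
    rw [he β hβ, monom, ← Finset.prod_mul_distrib, Finsupp.prod_fintype _ _ fun _ ↦ pow_zero _]
    refine Finset.prod_congr rfl fun i _ ↦ ?_
    rw [← zpow_natCast, ← zpow_natCast, ← zpow_add₀ (hγ.ne_zero i),
      Finsupp.equivFunOnFinite_symm_apply_apply, Int.toNat_of_nonneg (hM β hβ i), add_comm]
  refine ⟨D, t, ∏ i, γ i ^ M, hD, hγ, fun P u ↦
    ⟨∑ β ∈ s, MvPolynomial.monomial (μ β) (C (β ^ u) * (P β).comp (C (u : K) + C (D : K) * X)),
    fun v ↦ ?_⟩⟩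
  rw [map_sum, Finset.mul_sum]
  refine Finset.sum_congr rfl fun β hβ ↦ ?_
  rw [evalAt_monomial, hμ β hβ, mul_pow, pow_add, pow_mul]
  simp only [eval_mul, eval_C, eval_comp, eval_add, eval_X, Nat.cast_add, Nat.cast_mul]
  ring

end Generators

section Growth

lemma exists_forall_abs_le_pow {F : Type*} [Field F] [LinearOrder F] [IsStrictOrderedRing F]
    [Archimedean F] {g : F[X]} (hg : g.Monic) {f : ℕ → F} (hf : aeval (shift F F) g f = 0) :
    ∃ Q : ℕ, ∀ n, |f n| ≤ (Q : F) ^ (n + 1) := by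
  set d := g.natDegree
  set R : F := ∑ i ∈ Finset.range d, |g.coeff i|
  set S : F := ∑ i ∈ Finset.range d, |f i|
  have hR : 0 ≤ R := Finset.sum_nonneg fun _ _ ↦ abs_nonneg _
  have hS : 0 ≤ S := Finset.sum_nonneg fun _ _ ↦ abs_nonneg _
  obtain ⟨Q, hQ⟩ := exists_nat_ge (1 + R + S)
  have hQ1 : (1 : F) ≤ Q := by linarith
  refine ⟨Q, fun n ↦ ?_⟩
  induction n using Nat.strong_induction_on with
  | _ n ih =>
    rcases lt_or_ge n d with hn | hn
    · calc |f n| ≤ S := Finset.single_le_sum (f := fun i ↦ |f i|) (fun _ _ ↦ abs_nonneg _)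
            (Finset.mem_range.2 hn)
        _ ≤ Q := by linarith
        _ ≤ (Q : F) ^ (n + 1) := le_self_pow₀ hQ1 n.succ_ne_zero
    obtain ⟨m, rfl⟩ := Nat.exists_eq_add_of_le' hn
    have hterm (i) (hi : i ∈ Finset.range d) : |g.coeff i • f (m + i)| ≤
        |g.coeff i| * (Q : F) ^ (m + d) := by
      have hi := Finset.mem_range.1 hi
      rw [smul_eq_mul, abs_mul]
      gcongr
      exact (ih (m + i) (by omega)).trans (pow_le_pow_right₀ hQ1 (by omega))
    calc |f (m + d)| = |∑ i ∈ Finset.range d, g.coeff i • f (m + i)| := by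
          rw [apply_add_natDegree_of_aeval_shift_eq_zero hg hf, abs_neg]
      _ ≤ R * (Q : F) ^ (m + d) := by
          rw [Finset.sum_mul]
          exact (Finset.abs_sum_le_sum_abs _ _).trans (Finset.sum_le_sum hterm)
      _ ≤ Q * (Q : F) ^ (m + d) := by gcongr; linarith
      _ = (Q : F) ^ (m + d + 1) := (pow_succ' _ _).symm

lemma exists_forall_isInteger_pow_smul {R F : Type*} [CommRing R] [CommRing F] [Algebra R F]
    (S : Submonoid R) [IsLocalization S F] {g : F[X]} (hg : g.Monic) {f : ℕ → F}
    (hf : aeval (shift F F) g f = 0) :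
    ∃ q ∈ S, ∀ n, IsLocalization.IsInteger R (q ^ (n + 1) • f n) := by
  classical
  set d := g.natDegree
  obtain ⟨⟨q, hqS⟩, hq⟩ := IsLocalization.exist_integer_multiples_of_finset S
    ((Finset.range d).image g.coeff ∪ (Finset.range d).image f)
  have hcoeff (i) (hi : i < d) : IsLocalization.IsInteger R (q • g.coeff i) :=
    hq _ (Finset.mem_union_left _ (Finset.mem_image_of_mem _ (Finset.mem_range.2 hi)))
  have hinit (i) (hi : i < d) : IsLocalization.IsInteger R (q • f i) :=
    hq _ (Finset.mem_union_right _ (Finset.mem_image_of_mem _ (Finset.mem_range.2 hi)))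
  refine ⟨q, hqS, fun n ↦ ?_⟩
  induction n using Nat.strong_induction_on with
  | _ n ih =>
    rcases lt_or_ge n d with hn | hn
    · rw [pow_succ, mul_smul]
      exact IsLocalization.isInteger_smul (hinit n hn)
    obtain ⟨m, rfl⟩ := Nat.exists_eq_add_of_le' hn
    rw [apply_add_natDegree_of_aeval_shift_eq_zero hg hf, ← Finset.sum_neg_distrib, Finset.smul_sum]
    refine sum_mem fun i hi ↦ ?_
    have hi := Finset.mem_range.1 hi
    have hsplit : q ^ (m + d + 1) • -(g.coeff i • f (m + i)) =
        (-q ^ (d - 1 - i)) • ((q • g.coeff i) * (q ^ (m + i + 1) • f (m + i))) := by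
      rw [show m + d + 1 = (d - 1 - i) + 1 + (m + i + 1) by omega, smul_eq_mul]
      simp only [Algebra.smul_def, map_pow, map_neg]
      ring
    rw [hsplit]
    exact IsLocalization.isInteger_smul
      (IsLocalization.isInteger_mul (hcoeff i hi) (ih (m + i) (by omega)))

/-- If `q ^ (n + 1) b_n` is an integer, then it is at least `1` in absolute value unless `b_n = 0`,
so that `|c_n| ≤ |q ^ (n + 1) a_n|`. -/
lemma exists_forall_abs_le_pow_of_eq_mul {g : ℚ[X]} (hg : g.Monic) {a b : ℕ → ℚ} {c : ℕ → ℤ}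
    (ha : aeval (shift ℚ ℚ) g a = 0) (hb : aeval (shift ℚ ℚ) g b = 0)
    (hab : ∀ n, a n = c n * b n) :
    ∃ M : ℕ, 1 ≤ M ∧ ∀ n, b n ≠ 0 → |c n| ≤ (M : ℤ) ^ (n + 1) := by
  obtain ⟨Q, hQ⟩ := exists_forall_abs_le_pow hg ha
  obtain ⟨q, hq, hqb⟩ := exists_forall_isInteger_pow_smul (nonZeroDivisors ℤ) hg hb
  obtain ⟨k, hk⟩ : ∃ k : ℕ, |(q : ℚ)| = k := ⟨q.natAbs, by rw [Nat.cast_natAbs, Int.cast_abs]⟩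
  refine ⟨k * Q + 1, Nat.le_add_left _ _, fun n hn ↦ ?_⟩
  obtain ⟨z, hz⟩ := hqb n
  simp only [eq_intCast, zsmul_eq_mul, Int.cast_pow] at hz
  have hz0 : (z : ℚ) ≠ 0 := by
    rw [hz]
    exact mul_ne_zero (pow_ne_zero _ (by exact_mod_cast nonZeroDivisors.ne_zero hq)) hn
  have hz1 : (1 : ℚ) ≤ |(z : ℚ)| := by
    exact_mod_cast Int.one_le_abs (Int.cast_ne_zero.1 hz0)
  have hle : |(c n : ℚ)| ≤ ((k * Q + 1 : ℕ) : ℚ) ^ (n + 1) := by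
    calc |(c n : ℚ)| ≤ |(c n : ℚ)| * |(z : ℚ)| := le_mul_of_one_le_right (abs_nonneg _) hz1
      _ = (k : ℚ) ^ (n + 1) * |a n| := by rw [hz, hab, abs_mul, abs_mul, abs_pow, hk]; ring
      _ ≤ (k : ℚ) ^ (n + 1) * (Q : ℚ) ^ (n + 1) := by gcongr; exact hQ n
      _ = ((k * Q : ℕ) : ℚ) ^ (n + 1) := by rw [← mul_pow, Nat.cast_mul]
      _ ≤ ((k * Q + 1 : ℕ) : ℚ) ^ (n + 1) := by gcongr; exact Nat.le_succ _
  exact_mod_cast hle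

end Growth

section Assembly

lemma dvd_C_leadingCoeff_mul_prod_X_sub_C_pow {K : Type*} [Field K] [DecidableEq K] {χ : K[X]}
    (hχ : χ.Splits) :
    χ ∣ C χ.leadingCoeff * ∏ β ∈ χ.roots.toFinset, (X - C β) ^ χ.natDegree := by
  conv_lhs => rw [hχ.eq_prod_roots, Finset.prod_multiset_map_count]
  exact mul_dvd_mul_left _ <| Finset.prod_dvd_prod_of_dvd _ _ fun β _ ↦
    pow_dvd_pow _ ((Multiset.count_le_card _ _).trans (card_roots' _))

lemma exists_numberField_sum_eval_mul_pow {χ : ℚ[X]} (hχ : χ.Monic) (hχ0 : χ.coeff 0 ≠ 0) :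
    ∃ (K : Type) (_ : Field K) (_ : NumberField K) (s : Finset K), 0 ∉ s ∧
      ∀ (t : ℕ) (f : ℕ → ℚ), aeval (shift ℚ ℚ) (χ ^ t) f = 0 →
        ∃ P : K → K[X], ∀ n : ℕ, (f n : K) = ∑ β ∈ s, (P β).eval (n : K) * β ^ n := by
  classical
  let K := χ.SplittingField
  have : NumberField K := NumberField.of_module_finite ℚ K
  let χK := χ.map (algebraMap ℚ K)
  have hχK : χK.Monic := hχ.map _
  have hs : (0 : K) ∉ χK.roots.toFinset := by
    rw [Multiset.mem_toFinset, mem_roots hχK.ne_zero, IsRoot.def, ← coeff_zero_eq_eval_zero]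
    simpa [χK] using hχ0
  refine ⟨K, inferInstance, this, χK.roots.toFinset, hs, fun t f hf ↦ ?_⟩
  have hdvd : χK ^ t ∣ ∏ β ∈ χK.roots.toFinset, (X - C β) ^ (χK.natDegree * t) := by
    have h := dvd_C_leadingCoeff_mul_prod_X_sub_C_pow (χ := χK) (SplittingField.splits χ)
    rw [hχK.leadingCoeff, C_1, one_mul] at h
    simpa only [← Finset.prod_pow, ← pow_mul] using pow_dvd_pow_of_dvd h t
  have hfK : aeval (shift K K) (χK ^ t) (fun n ↦ (f n : K)) = 0 := by
    ext n
    rw [← Polynomial.map_pow, aeval_shift_map]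
    have h := aeval_shift_comp (Algebra.linearMap ℚ K) (χ ^ t) f n
    rw [hf] at h
    simpa using h
  obtain ⟨k, hk⟩ := hdvd
  exact exists_sum_eval_mul_pow_of_aeval_shift hs (m := χK.natDegree * t) <| by
    rw [hk, mul_comm, map_mul, Module.End.mul_apply, hfK, map_zero]

/-- One specialization suffices for each residue class modulo `D`: the one whose denominator is
nonzero at the first index of the class. -/
lemma isRecurrent_of_rational_specializations {χ : ℚ[X]} (hχ : χ.Monic) (hχ0 : χ.coeff 0 ≠ 0)
    {c : ℕ → ℤ} (h : ∀ n, ∃ (t : ℕ) (a b : ℕ → ℚ), (∀ k, a k = c k * b k) ∧ b n ≠ 0 ∧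
      aeval (shift ℚ ℚ) (χ ^ t) a = 0 ∧ aeval (shift ℚ ℚ) (χ ^ t) b = 0) :
    IsRecurrent fun n ↦ (c n : ℚ) := by
  obtain ⟨K, _, _, s, hs, hK⟩ := exists_numberField_sum_eval_mul_pow hχ hχ0
  obtain ⟨D, T, w, hD, hγ, hA⟩ := exists_evalAt_eq hs
  refine IsRecurrent.of_residue_classes hD fun u _ ↦ IsRecurrent.intCast (E := K) ?_
  obtain ⟨t, a, b, hab, hbu, ha, hb⟩ := h u
  obtain ⟨Pa, hPa⟩ := hK t a ha
  obtain ⟨Pb, hPb⟩ := hK t b hb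
  obtain ⟨A, hA'⟩ := hA Pa u
  obtain ⟨B, hB'⟩ := hA Pb u
  simp only [← hPa, ← hPb] at hA' hB'
  obtain ⟨M, hM, hcM⟩ := exists_forall_abs_le_pow_of_eq_mul (hχ.pow t) ha hb hab
  refine isRecurrent_of_evalAt_eq_mul (A := A) (B := B) (M := M ^ (u + D + 1)) hγ ?_ (fun v ↦ ?_)
    fun v hv ↦ ?_
  · rintro rfl
    have hB0 := hB' 0
    simp only [map_zero, pow_zero, one_mul, mul_zero, add_zero] at hB0
    exact hbu (Rat.cast_eq_zero.1 hB0.symm)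
  · rw [hA', hB', hab]
    push_cast
    ring
  · have hbv : b (u + D * v) ≠ 0 := fun h0 ↦ hv (by rw [hB', h0, Rat.cast_zero, mul_zero])
    refine (hcM _ hbv).trans ?_
    rw [Nat.cast_pow, ← pow_mul]
    exact pow_le_pow_right₀ (by exact_mod_cast hM) (by nlinarith [Nat.zero_le (u * v)])

end Assembly

end HadamardQuotient

open HadamardQuotient Filter in
theorem hadamard_quotient_general {F : Type*} [Field F] [CharZero F] {a b : ℕ → F}
    (ha : IsRecurrent a) (hb : IsRecurrent b) (hb0 : ∀ᶠ n in atTop, b n ≠ 0)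
    (hint : ∀ᶠ n in atTop, ∃ z : ℤ, a n / b n = z) : IsRecurrent fun n ↦ a n / b n := by
  obtain ⟨χa, hχa, hχa0, ha⟩ := ha.exists_monic
  obtain ⟨χb, hχb, hχb0, hb⟩ := hb.exists_monic
  obtain ⟨m, hm⟩ := eventually_atTop.1 <|
    ((eventually_aeval_shift_eq_zero_of_dvd (dvd_mul_right χa χb) ha).and
      (eventually_aeval_shift_eq_zero_of_dvd (dvd_mul_left χb χa) hb)).and (hb0.and hint)
  replace hm n := hm (n + m) (Nat.le_add_left m n)
  choose c hc using fun n ↦ (hm n).2.2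
  obtain ⟨χ, hχ, hχ0, hspec⟩ := exists_rational_specialization (hχa.mul hχb)
    (a := fun n ↦ a (n + m)) (b := fun n ↦ b (n + m)) (c := c)
    (by rw [Polynomial.mul_coeff_zero]; exact mul_ne_zero hχa0 hχb0)
    (by ext n; rw [aeval_shift_comp_add, (hm n).1.1, Pi.zero_apply])
    (by ext n; rw [aeval_shift_comp_add, (hm n).1.2, Pi.zero_apply])
    (fun n ↦ by rw [← hc, div_mul_cancel₀ _ (hm n).2.1]) fun n ↦ (hm n).2.1
  refine IsRecurrent.of_comp_add (m := m) ?_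
  simpa only [hc] using (isRecurrent_of_rational_specializations hχ hχ0 hspec).intCast (F := F)

/-- Hadamard quotient theorem (van der Poorten): if `∑ aₙ xⁿ` and `∑ bₙ xⁿ` represent
rational functions, `bₙ ≠ 0` for all `n`, and every quotient `aₙ / bₙ` is a rational
integer, then `∑ (aₙ / bₙ) xⁿ` also represents a rational function. -/
theorem hadamard_quotient (a b : ℕ → ℂ) (hra : RepresentsRational a)
    (hrb : RepresentsRational b) (hb : ∀ n, b n ≠ 0)
    (hint : ∀ n, ∃ z : ℤ, a n / b n = (z : ℂ)) :
    RepresentsRational (fun n => a n / b n) :=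
  (hadamard_quotient_general hra.isRecurrent hrb.isRecurrent (.of_forall hb)
    (.of_forall hint)).representsRational
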